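/- Let L_A and L_C be lattices, and suppose L_C has more than one element. Then there exist a lattice L and injective lattice homomorphisms f : L_A → L and g : L_C → L such that: (1) g is congruence-preserving, i.e., for every lattice congruence θ of L_C there is exactly one lattice congruence Θ of L with Θ(g x, g y) if and only if θ(x, y) for all x, y ∈ L_C; and (2) f is automorphism-preserving, i.e., for every lattice automorphism α of L_A there is exactly one lattice automorphism β of L with β ∘ f = f ∘ α, and conversely every lattice automorphism β of L satisfies β ∘ f = f ∘ α for some lattice automorphism α of L_A. -/

import Mathlib

/-!
The lattice `L` is obtained from `Lc` by two applications of one construction.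

*The construction.* Given a lattice `B`, elements `r i` of `B` and bounded lattices `F i` (the
gadgets), the lattice `W r F` contains `B` (via `bs`) and, for every `i`, `c : F i` and `d : B`, an
element `gd i c d`, to be thought of as `c` placed over the interval `[r i, r i ⊔ d]`: for `c = ⊥`
it is `r i`, and for `c = ⊤` it is an element above `d` that is the join of `d` with any `gd i c d`,
`c ≠ ⊥`. Its elements are the finitely generated closed sets of such symbols. Every one of
them is also the intersection of a finite presentation by attributes (`exists_pres`,
`exists_gens`), so that they form a lattice; moreover generators and presentations are the same
modulo every congruence of `B`, so that a congruence of `B` extends to `W r F` (`latCon_ext`). If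
the gadgets are simple and have two disjoint nonzero elements, the extension is unique: a collapse
in `B` forces collapses between the corresponding tops of gadgets (`S_top`), and a collapse
inside a gadget forces one in `B` (`collapse`). Hence `bs` is congruence-preserving (`cpEmb_bs`).

*The gadgets.* The double comb `Comb col` is a simple lattice (`Comb.simple`). It consists of two
combs whose elements have lower sets of prescribed cardinalities; if these differ and the index
set is well-ordered, the double comb is rigid (`Comb.rigid`). A bounded lattice `K` is stored in
a simple lattice `SK K G` by inserting a copy of a simple rigid `G` below each nonzero element,
which keeps exactly the automorphisms of `K` (`SK.simple`, `SK.auto_eq`).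

*The two steps.* Fix `x₀ < y₀` in `Lc`. The first extension places a double comb over every
`m ≥ x₀`; in the result `B` all intervals of `Lc` above `x₀` are linked (`linked_W`). The second
extension places over every element of `B` a double comb, and over `x₀` in addition the gadget
`SK K G` for `K = WithBot (WithTop La)`. All combs of the second step are given distinct
cardinals, larger than that of `B`. An automorphism of the second extension therefore recognises
from the sizes of lower sets the elements of `B` and the gadget to which a given element belongs.
It follows that it fixes `B` pointwise, since every element of `B` carries its own gadget
(`fix_bs`); that it fixes the tops of the gadgets (`fix_top`); and that it fixes the double combs
elementwise (`fixd_comb`). On the remaining gadget it could a priori act differently over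
different intervals; the linking elements force it to act by one and the same automorphism of the
gadget (`exists_auto`), which comes from `K` and so from `La`. The element `a` of `La` is sent to
the copy of `a` over `[x₀, y₀]`.
-/

universe u

/-- A lattice congruence. -/
def LatCon (L : Type*) [Lattice L] (θ : L → L → Prop) : Prop :=
  Equivalence θ ∧
  ∀ a b c d : L, θ a b → θ c d → θ (a ⊔ c) (b ⊔ d) ∧ θ (a ⊓ c) (b ⊓ d)

/-- A lattice automorphism: a bijection preserving joins and meets. -/
def IsLatAuto (L : Type*) [Lattice L] (h : L → L) : Prop :=
  Function.Bijective h ∧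
  (∀ x y : L, h (x ⊔ y) = h x ⊔ h y) ∧ ∀ x y : L, h (x ⊓ y) = h x ⊓ h y

/-- A congruence-preserving lattice embedding: injective lattice homomorphism such
that every congruence of the source extends to exactly one congruence of the
target. -/
def CPEmb (Lc : Type*) [Lattice Lc] (L : Type*) [Lattice L] (g : Lc → L) : Prop :=
  Function.Injective g ∧
  (∀ x y : Lc, g (x ⊔ y) = g x ⊔ g y) ∧ (∀ x y : Lc, g (x ⊓ y) = g x ⊓ g y) ∧
  ∀ θ : Lc → Lc → Prop, LatCon Lc θ →
    ∃! Θ : L → L → Prop, LatCon L Θ ∧ ∀ x y : Lc, (Θ (g x) (g y) ↔ θ x y)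

/-- An automorphism-preserving lattice embedding: injective lattice homomorphism
such that every automorphism of the source extends to exactly one automorphism of
the target, and every automorphism of the target is such an extension. -/
def APEmb (La : Type*) [Lattice La] (L : Type*) [Lattice L] (f : La → L) : Prop :=
  Function.Injective f ∧
  (∀ x y : La, f (x ⊔ y) = f x ⊔ f y) ∧ (∀ x y : La, f (x ⊓ y) = f x ⊓ f y) ∧
  (∀ α : La → La, IsLatAuto La α →
    ∃! β : L → L, IsLatAuto L β ∧ ∀ x : La, β (f x) = f (α x)) ∧
  (∀ β : L → L, IsLatAuto L β →
    ∃ α : La → La, IsLatAuto La α ∧ ∀ x : La, β (f x) = f (α x))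

set_option linter.unusedSectionVars false

/-! ### The closure operator behind the extension -/

namespace SIT

section Construction

/-- A *congruence preorder* of a lattice: the relation `x ≤ y` modulo some congruence. -/
structure CPre {B : Type u} [Lattice B] (R : B → B → Prop) : Prop where
  of_le : ∀ {a b}, a ≤ b → R a b
  trans : ∀ {a b c}, R a b → R b c → R a c
  sup : ∀ {a b c}, R a c → R b c → R (a ⊔ b) c
  inf : ∀ {a b c}, R c a → R c b → R c (a ⊓ b)

/-- A (possibly empty) ideal of the preordered set `(B, R)`. -/
structure Idl {B : Type u} [Lattice B] (R : B → B → Prop) (N : Set B) : Prop where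
  down : ∀ {a b}, R a b → b ∈ N → a ∈ N
  sup : ∀ {a b}, a ∈ N → b ∈ N → a ⊔ b ∈ N

theorem cpre_le {B : Type u} [Lattice B] : CPre (fun a b : B => a ≤ b) :=
  ⟨id, le_trans, sup_le, le_inf⟩

theorem CPre.idl {B : Type u} [Lattice B] {R : B → B → Prop} (h : CPre R) (n : B) :
    Idl R {x | R x n} := ⟨fun h1 h2 => h.trans h1 h2, fun h1 h2 => h.sup h1 h2⟩

theorem Idl.le {B : Type u} [Lattice B] {R : B → B → Prop} (h : CPre R) {N : Set B}
    (hN : Idl R N) : Idl (fun a b : B => a ≤ b) N := ⟨fun h1 => hN.down (h.of_le h1), hN.sup⟩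

/-- The generating objects of the extension: `base d` stands for the element `d` of `B`, and
`gad i c d` for the element `c`, placed over the interval `[r i, r i ⊔ d]`, of the `i`-th gadget. -/
inductive Obj (B : Type u) {X : Type u} (F : X → Type u) : Type u
  | base (d : B) : Obj B F
  | gad (i : X) (c : F i) (d : B) : Obj B F

variable {B X : Type u} [Lattice B] (r : X → B) {F : X → Type u} [∀ i, Lattice (F i)]
  [∀ i, BoundedOrder (F i)] [∀ i, Nontrivial (F i)]

/-- Attributes of the first kind: they bound the `i`-th gadget by the ideal `N`. -/
def satU (i : X) (N : Set B) : Obj B F → Prop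
  | .base _ => True
  | .gad j c d => j = i → c = ⊥ ∨ d ∈ N

/-- Attributes of the second kind: they play the role of the box `a □ N`. -/
def satD (a : ∀ i, F i) (N : Set B) : Obj B F → Prop
  | .base d => d ∈ N
  | .gad j c d => r j ∈ N ∧ (c ≤ a j ∨ d ∈ N)

/-- The Galois closure of a set of objects with respect to those attributes whose ideals are
ideals for the preorder `R`. -/
def cl (R : B → B → Prop) (S : Set (Obj B F)) : Set (Obj B F) :=
  {o | (∀ i N, Idl R N → r i ∈ N → (∀ j ∈ S, satU i N j) → satU i N o) ∧
    (∀ a N, Idl R N → (∀ i, a i ≠ ⊤) → (∀ j ∈ S, satD r a N j) → satD r a N o)}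

theorem subset_cl (R : B → B → Prop) (S : Set (Obj B F)) : S ⊆ cl r R S :=
  fun _ ho => ⟨fun _ _ _ _ h => h _ ho, fun _ _ _ _ h => h _ ho⟩

theorem cl_subset {R : B → B → Prop} {S T : Set (Obj B F)} (h : S ⊆ cl r R T) :
    cl r R S ⊆ cl r R T :=
  fun _ ho => ⟨fun i N hN hr hT => ho.1 i N hN hr fun _ hj => (h hj).1 i N hN hr hT,
    fun a N hN hr hT => ho.2 a N hN hr fun _ hj => (h hj).2 a N hN hr hT⟩

theorem cl_mono {R : B → B → Prop} {S T : Set (Obj B F)} (h : S ⊆ T) :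
    cl r R S ⊆ cl r R T := cl_subset r (h.trans (subset_cl r R T))

theorem cl_le_subset {R : B → B → Prop} (hR : CPre R) (S : Set (Obj B F)) :
    cl r (fun a b => a ≤ b) S ⊆ cl r R S :=
  fun _ ho => ⟨fun i N hN => ho.1 i N (hN.le hR), fun a N hN => ho.2 a N (hN.le hR)⟩

theorem cl_cl_le {R : B → B → Prop} (hR : CPre R) (S : Set (Obj B F)) :
    cl r R (cl r (fun a b => a ≤ b) S) = cl r R S :=
  (cl_subset r (cl_le_subset r hR S)).antisymm (cl_mono r (subset_cl r _ S))

/-- A finite presentation of a closed set by attributes: the boxes in the list `l`, and for each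
`i` the bound `m i` on the `i`-th gadget. The last condition makes presentations compatible with
passing to a quotient of `B`. -/
structure Pres (l : List ((∀ i, F i) × B)) (m : X → B) : Prop where
  ne : l ≠ []
  proper : ∀ p ∈ l, ∀ i, p.1 i ≠ ⊤
  le_m : ∀ i, r i ≤ m i
  fin : {i | m i ≠ r i}.Finite
  tame : ∀ i, m i ≠ r i → ∀ p ∈ l, r i ≤ p.2

/-- The set presented by `l` and `m`, computed modulo the preorder `R`. -/
def hull (R : B → B → Prop) (l : List ((∀ i, F i) × B)) (m : X → B) : Set (Obj B F) :=
  {o | match o with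
    | .base d => ∀ p ∈ l, R d p.2
    | .gad i c d => (c = ⊥ ∨ R d (m i)) ∧ ∀ p ∈ l, R (r i) p.2 ∧ (c ≤ p.1 i ∨ R d p.2)}

@[simp] theorem mem_hull_base {R : B → B → Prop} {l : List ((∀ i, F i) × B)} {m : X → B} {d : B} :
    Obj.base d ∈ hull r R l m ↔ ∀ p ∈ l, R d p.2 := Iff.rfl

@[simp] theorem mem_hull_gad {R : B → B → Prop} {l : List ((∀ i, F i) × B)} {m : X → B}
    {i : X} {c : F i} {d : B} :
    Obj.gad i c d ∈ hull r R l m ↔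
      (c = ⊥ ∨ R d (m i)) ∧ ∀ p ∈ l, R (r i) p.2 ∧ (c ≤ p.1 i ∨ R d p.2) := Iff.rfl

open Classical in
/-- The minimal attributes of the second kind satisfied by a finite list of objects. -/
theorem exists_minatts (J : List (Obj B F)) : ∀ (a0 : ∀ i, F i) (n0 : B),
    ∃ l : List ((∀ i, F i) × B),
      (∀ p ∈ l, (∀ i, p.1 i ≠ ⊤) ∧ a0 ≤ p.1 ∧ n0 ≤ p.2 ∧
        ∀ j ∈ J, satD r p.1 {x | x ≤ p.2} j) ∧
      ∀ a N, (∀ i, a i ≠ ⊤) → Idl (fun a b : B => a ≤ b) N → a0 ≤ a → n0 ∈ N →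
        (∀ j ∈ J, satD r a N j) → ∃ p ∈ l, p.1 ≤ a ∧ p.2 ∈ N := by
  induction J with
  | nil =>
    intro a0 n0
    by_cases h : ∀ i, a0 i ≠ ⊤
    · exact ⟨[(a0, n0)], by simpa using h, fun a N _ _ h1 h2 _ => ⟨(a0, n0), by simp, h1, h2⟩⟩
    · refine ⟨[], by simp, fun a N ha _ h1 _ _ => ?_⟩
      push Not at h
      obtain ⟨i, hi⟩ := h
      exact absurd (top_le_iff.1 (hi ▸ h1 i)) (ha i)
  | cons o J ih =>
    intro a0 n0
    cases o with
    | base d =>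
      obtain ⟨l, h1, h2⟩ := ih a0 (n0 ⊔ d)
      refine ⟨l, fun p hp => ?_, fun a N ha hN h3 h4 h5 => ?_⟩
      · obtain ⟨q1, q2, q3, q4⟩ := h1 p hp
        refine ⟨q1, q2, le_sup_left.trans q3, fun j hj => ?_⟩
        rcases List.mem_cons.1 hj with rfl | hj
        · exact le_sup_right.trans q3
        · exact q4 j hj
      · exact h2 a N ha hN h3 (hN.sup h4 (h5 (.base d) List.mem_cons_self)) fun j hj => h5 j (by simp [hj])
    | gad i c d =>
      obtain ⟨l1, h1, h2⟩ := ih (Function.update a0 i (a0 i ⊔ c)) (n0 ⊔ r i)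
      obtain ⟨l2, h3, h4⟩ := ih a0 (n0 ⊔ r i ⊔ d)
      refine ⟨l1 ++ l2, fun p hp => ?_, fun a N ha hN h5 h6 h7 => ?_⟩
      · rcases List.mem_append.1 hp with hp | hp
        · obtain ⟨q1, q2, q3, q4⟩ := h1 p hp
          have hi := q2 i
          simp only [Function.update_self] at hi
          refine ⟨q1, fun k => ?_, le_sup_left.trans q3, fun j hj => ?_⟩
          · by_cases hk : k = i
            · subst hk; exact le_sup_left.trans hi
            · have := q2 k
              rwa [Function.update_of_ne hk] at this
          · rcases List.mem_cons.1 hj with rfl | hj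
            · exact ⟨le_sup_right.trans q3, Or.inl (le_sup_right.trans hi)⟩
            · exact q4 j hj
        · obtain ⟨q1, q2, q3, q4⟩ := h3 p hp
          refine ⟨q1, q2, (le_sup_left.trans le_sup_left).trans q3, fun j hj => ?_⟩
          rcases List.mem_cons.1 hj with rfl | hj
          · exact ⟨(le_sup_right.trans le_sup_left).trans q3, Or.inr (le_sup_right.trans q3)⟩
          · exact q4 j hj
      · obtain ⟨h8, h9⟩ := h7 _ (List.mem_cons_self)
        have h10 : ∀ j ∈ J, satD r a N j := fun j hj => h7 j (by simp [hj])
        rcases h9 with h9 | h9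
        · obtain ⟨p, hp, hp'⟩ := h2 a N ha hN (fun k => by
            by_cases hk : k = i
            · subst hk; simpa using ⟨h5 k, h9⟩
            · rw [Function.update_of_ne hk]; exact h5 k) (hN.sup h6 h8) h10
          exact ⟨p, by simp [hp], hp'⟩
        · obtain ⟨p, hp, hp'⟩ := h4 a N ha hN h5 (hN.sup (hN.sup h6 h8) h9) h10
          exact ⟨p, by simp [hp], hp'⟩

/-- The minimal attribute of the first kind for the gadget `i` satisfied by a finite list. -/
theorem exists_minbound (i : X) (J : List (Obj B F)) :
    ∃ m : B, r i ≤ m ∧ (∀ j ∈ J, satU i {x | x ≤ m} j) ∧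
      (∀ N, Idl (fun a b : B => a ≤ b) N → r i ∈ N → (∀ j ∈ J, satU i N j) → m ∈ N) ∧
      (m ≠ r i → ∃ c d, Obj.gad i c d ∈ J) := by
  induction J with
  | nil => exact ⟨r i, le_rfl, by simp, fun _ _ h _ => h, fun h => absurd rfl h⟩
  | cons o J ih =>
    obtain ⟨m, h1, h2, h3, h4⟩ := ih
    have keep : satU i {x | x ≤ m} o →
        ∃ m : B, r i ≤ m ∧ (∀ j ∈ o :: J, satU i {x | x ≤ m} j) ∧
        (∀ N, Idl (fun a b : B => a ≤ b) N → r i ∈ N → (∀ j ∈ o :: J, satU i N j) → m ∈ N) ∧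
        (m ≠ r i → ∃ c d, Obj.gad i c d ∈ o :: J) := fun ho =>
      ⟨m, h1, by simpa using ⟨ho, h2⟩, fun N hN hr h => h3 N hN hr fun j hj => h j (by simp [hj]),
        fun hm => by obtain ⟨c, d, hcd⟩ := h4 hm; exact ⟨c, d, by simp [hcd]⟩⟩
    by_cases ho : satU i {x | x ≤ m} o
    · exact keep ho
    cases o with
    | base d => exact (ho trivial).elim
    | gad j c d =>
      simp only [satU, not_forall, not_or] at ho
      obtain ⟨rfl, hc, hd⟩ := ho
      refine ⟨m ⊔ d, h1.trans le_sup_left, ?_, fun N hN hr h => hN.sup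
        (h3 N hN hr fun j hj => h j (by simp [hj])) ?_, fun _ => ⟨c, d, by simp⟩⟩
      · intro k hk
        rcases List.mem_cons.1 hk with rfl | hk
        · exact fun _ => Or.inr le_sup_right
        · have := h2 k hk
          cases k with
          | base d => trivial
          | gad k c' d' => exact fun hk => (this hk).imp id fun h => h.trans le_sup_left
      · exact (h (.gad _ c d) List.mem_cons_self rfl).resolve_left hc

/-- Every finitely generated closed set has a finite presentation, valid modulo every
congruence. -/
theorem exists_pres (J : List (Obj B F)) (hJ : J ≠ []) :
    ∃ l m, Pres r l m ∧ ∀ R, CPre R → cl r R {j | j ∈ J} = hull r R l m := by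
  choose m hm1 hm2 hm3 hm4 using fun i => exists_minbound r i J
  obtain ⟨n0, hn0⟩ : ∃ n0 : B, ∀ a N, (∀ j ∈ J, satD r (F := F) a N j) → n0 ∈ N := by
    cases J with
    | nil => exact absurd rfl hJ
    | cons o J =>
      cases o with
      | base d => exact ⟨d, fun a N h => h (.base d) List.mem_cons_self⟩
      | gad i c d => exact ⟨r i, fun a N h => (h _ List.mem_cons_self).1⟩
  obtain ⟨l, hl1, hl2⟩ := exists_minatts r J (fun _ => ⊥) n0
  have tame : ∀ i, m i ≠ r i → ∀ p ∈ l, r i ≤ p.2 := fun i hi p hp => by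
    obtain ⟨c, d, hcd⟩ := hm4 i hi
    exact ((hl1 p hp).2.2.2 _ hcd).1
  refine ⟨l, m, ⟨?_, fun p hp => (hl1 p hp).1, hm1, ?_, tame⟩, fun R hR => ?_⟩
  · rintro rfl
    obtain ⟨p, hp, -⟩ := hl2 (fun _ => ⊥) Set.univ (fun i => bot_ne_top)
      ⟨fun _ _ => trivial, fun _ _ => trivial⟩ le_rfl trivial (fun j _ => by
        cases j <;> simp [satD])
    simp at hp
  · refine Set.Finite.subset (List.finite_toSet (J.filterMap fun o => match o with
      | .base _ => none
      | .gad i _ _ => some i)) fun i hi => ?_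
    obtain ⟨c, d, hcd⟩ := hm4 i hi
    simp only [Set.mem_ofPred_eq, List.mem_filterMap]
    exact ⟨_, hcd, rfl⟩
  · ext o
    constructor
    · intro ho
      have key : ∀ p ∈ l, satD r p.1 {x | R x p.2} o := fun p hp =>
        ho.2 p.1 {x | R x p.2} (hR.idl _) (hl1 p hp).1 fun j hj => by
          have := (hl1 p hp).2.2.2 j hj
          cases j with
          | base d => exact hR.of_le this
          | gad i c d => exact ⟨hR.of_le this.1, this.2.imp id hR.of_le⟩
      cases o with
      | base d => exact key
      | gad i c d =>
        refine ⟨ho.1 i {x | R x (m i)} (hR.idl _) (hR.of_le (hm1 i)) (fun j hj => ?_) rfl, key⟩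
        have := hm2 i j hj
        cases j with
        | base d => trivial
        | gad k c d => exact fun hk => (this hk).imp id hR.of_le
    · intro ho
      constructor
      · intro i N hN hr hJN
        cases o with
        | base d => trivial
        | gad j c d =>
          rintro rfl
          exact ho.1.imp id fun h => hN.down h (hm3 j N (hN.le hR) hr hJN)
      · intro a N hN ha hJN
        obtain ⟨p, hp, hpa, hpN⟩ := hl2 a N ha (hN.le hR) (fun _ => bot_le) (hn0 a N hJN) hJN
        cases o with
        | base d => exact hN.down (ho p hp) hpN
        | gad i c d =>
          obtain ⟨h1, h2⟩ := ho.2 p hp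
          exact ⟨hN.down h1 hpN, h2.imp (fun h => h.trans (hpa i)) fun h => hN.down h hpN⟩

/-- A finite intersection of boxes in `G × B` is a finite union of rectangles. -/
theorem exists_rects {G : Type u} [Lattice G] (l : List (G × B)) : ∀ (c0 : G) (d0 : B),
    ∃ K : List (G × B), (∀ q ∈ K, q.1 ≤ c0 ∧ q.2 ≤ d0 ∧ ∀ p ∈ l, q.1 ≤ p.1 ∨ q.2 ≤ p.2) ∧
      ∀ R : B → B → Prop, CPre R → ∀ c d, c ≤ c0 → R d d0 → (∀ p ∈ l, c ≤ p.1 ∨ R d p.2) →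
        ∃ q ∈ K, c ≤ q.1 ∧ R d q.2 := by
  induction l with
  | nil => exact fun c0 d0 => ⟨[(c0, d0)], by simp, fun R hR c d h1 h2 _ => by simpa using ⟨h1, h2⟩⟩
  | cons p l ih =>
    intro c0 d0
    obtain ⟨K1, h1, h2⟩ := ih (c0 ⊓ p.1) d0
    obtain ⟨K2, h3, h4⟩ := ih c0 (d0 ⊓ p.2)
    refine ⟨K1 ++ K2, fun q hq => ?_, fun R hR c d hc hd hp => ?_⟩
    · rcases List.mem_append.1 hq with hq | hq
      · obtain ⟨a1, a2, a3⟩ := h1 q hq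
        refine ⟨a1.trans inf_le_left, a2, fun s hs => ?_⟩
        rcases List.mem_cons.1 hs with rfl | hs
        exacts [Or.inl (a1.trans inf_le_right), a3 s hs]
      · obtain ⟨a1, a2, a3⟩ := h3 q hq
        refine ⟨a1, a2.trans inf_le_left, fun s hs => ?_⟩
        rcases List.mem_cons.1 hs with rfl | hs
        exacts [Or.inr (a2.trans inf_le_right), a3 s hs]
    · have hl : ∀ p ∈ l, c ≤ p.1 ∨ R d p.2 := fun s hs => hp s (by simp [hs])
      rcases hp p (by simp) with h | h
      · obtain ⟨q, hq, hq'⟩ := h2 R hR c d (le_inf hc h) hd hl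
        exact ⟨q, by simp [hq], hq'⟩
      · obtain ⟨q, hq, hq'⟩ := h4 R hR c d hc (hR.inf hd h) hl
        exact ⟨q, by simp [hq], hq'⟩

theorem exists_listInf (l : List B) (hl : l ≠ []) :
    ∃ v : B, (∀ n ∈ l, v ≤ n) ∧ ∀ R : B → B → Prop, CPre R → ∀ d, (∀ n ∈ l, R d n) → R d v := by
  induction l with
  | nil => exact absurd rfl hl
  | cons n l ih =>
    by_cases h : l = []
    · subst h
      exact ⟨n, by simp, fun R hR d hd => hd n (by simp)⟩
    · obtain ⟨v, h1, h2⟩ := ih h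
      refine ⟨n ⊓ v, ?_, fun R hR d hd => hR.inf (hd n (by simp))
        (h2 R hR d fun k hk => hd k (by simp [hk]))⟩
      intro k hk
      rcases List.mem_cons.1 hk with rfl | hk
      exacts [inf_le_left, inf_le_right.trans (h1 k hk)]

/-- Every presented set is finitely generated, by the same objects modulo every congruence. -/
theorem exists_gens {l : List ((∀ i, F i) × B)} {m : X → B} (P : Pres r l m) :
    ∃ J : List (Obj B F), J ≠ [] ∧ ∀ R, CPre R → hull r R l m = cl r R {j | j ∈ J} := by
  obtain ⟨v, hv1, hv2⟩ := exists_listInf (l.map Prod.snd) (by simpa using P.ne)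
  simp only [List.mem_map, forall_exists_index, and_imp, forall_apply_eq_imp_iff₂] at hv1 hv2
  choose K hK1 hK2 using fun i => exists_rects (l.map fun p => (p.1 i, p.2)) (⊤ : F i) (m i)
  simp only [List.mem_map, forall_exists_index, and_imp, forall_apply_eq_imp_iff₂] at hK1 hK2
  refine ⟨.base v :: P.fin.toFinset.toList.flatMap fun i =>
    (K i).map fun q => .gad i q.1 q.2, by simp, fun R hR => ?_⟩
  ext o
  constructor
  · intro ho
    have hmem : ∀ i, m i ≠ r i → ∀ q ∈ K i, Obj.gad i q.1 q.2 ∈ {j | j ∈ Obj.base v ::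
        P.fin.toFinset.toList.flatMap fun i => (K i).map fun q => Obj.gad i q.1 q.2} := by
      intro i hi q hq
      simp only [Set.mem_ofPred_eq, List.mem_cons, List.mem_flatMap]
      refine Or.inr ⟨i, by simpa using hi, ?_⟩
      exact List.mem_map.2 ⟨q, hq, rfl⟩
    cases o with
    | base d =>
      refine ⟨fun _ _ _ _ _ => trivial, fun a N hN _ h => ?_⟩
      exact hN.down (hv2 R hR d ho) (h (.base v) (by simp))
    | gad i c d =>
      obtain ⟨h1, h2⟩ := ho
      have hrv : R (r i) v := hv2 R hR _ fun p hp => (h2 p hp).1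
      by_cases hc : c = ⊥
      · subst hc
        refine ⟨fun _ _ _ _ _ _ => Or.inl rfl, fun a N hN _ h => ?_⟩
        exact ⟨hN.down hrv (h (.base v) (by simp)), Or.inl bot_le⟩
      have h1 := h1.resolve_left hc
      by_cases hm : m i = r i
      · rw [hm] at h1
        refine ⟨?_, fun a N hN _ h => ?_⟩
        · rintro j N hN hr h rfl
          exact Or.inr (hN.down h1 hr)
        · have : r i ∈ N := hN.down hrv (h (.base v) (by simp))
          exact ⟨this, Or.inr (hN.down h1 this)⟩
      · obtain ⟨q, hq, hq1, hq2⟩ := hK2 i R hR c d le_top h1 fun p hp => (h2 p hp).2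
        have hq' := hmem i hm q hq
        refine ⟨?_, fun a N hN _ h => ?_⟩
        · rintro j N hN hr h rfl
          refine (h _ hq' rfl).imp (fun h => ?_) fun h => hN.down hq2 h
          exact le_bot_iff.1 (h ▸ hq1)
        · obtain ⟨h3, h4⟩ := h _ hq'
          exact ⟨h3, h4.imp (fun h => hq1.trans h) fun h => hN.down hq2 h⟩
  · intro ho
    have hU : ∀ i, ∀ j ∈ {j | j ∈ Obj.base v ::
        P.fin.toFinset.toList.flatMap fun i => (K i).map fun q => Obj.gad i q.1 q.2},
        satU i {x | R x (m i)} j := by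
      intro i j hj
      simp only [Set.mem_ofPred_eq, List.mem_cons, List.mem_flatMap, List.mem_map] at hj
      rcases hj with rfl | ⟨k, hk, q, hq, rfl⟩
      · trivial
      · rintro rfl
        exact Or.inr (hR.of_le (hK1 k q hq).2.1)
    have hD : ∀ p ∈ l, ∀ j ∈ {j | j ∈ Obj.base v ::
        P.fin.toFinset.toList.flatMap fun i => (K i).map fun q => Obj.gad i q.1 q.2},
        satD r p.1 {x | R x p.2} j := by
      intro p hp j hj
      simp only [Set.mem_ofPred_eq, List.mem_cons, List.mem_flatMap, List.mem_map] at hj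
      rcases hj with rfl | ⟨k, hk, q, hq, rfl⟩
      · exact hR.of_le (hv1 p hp)
      · have hk : m k ≠ r k := by simpa using hk
        exact ⟨hR.of_le (P.tame k hk p hp), ((hK1 k q hq).2.2 p hp).imp id hR.of_le⟩
    have key : ∀ p ∈ l, satD r p.1 {x | R x p.2} o := fun p hp =>
      ho.2 p.1 _ (hR.idl _) (P.proper p hp) (hD p hp)
    cases o with
    | base d => exact key
    | gad i c d =>
      exact ⟨ho.1 i _ (hR.idl _) (hR.of_le (P.le_m i)) (hU i) rfl, key⟩

end Construction

end SIT

/-! ### The extension `W r F` of a lattice -/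

namespace SIT

section Lattice

variable {B X : Type u} [Lattice B] (r : X → B) (F : X → Type u) [∀ i, Lattice (F i)]
  [∀ i, BoundedOrder (F i)] [∀ i, Nontrivial (F i)]

/-- The extension of `B` by the gadgets `F i` placed above `r i`: finitely generated closed sets
of objects, ordered by inclusion. -/
@[ext] structure W : Type u where
  /-- the underlying closed set of objects -/
  val : Set (Obj B F)
  prop : ∃ J : List (Obj B F), J ≠ [] ∧ val = cl r (fun a b => a ≤ b) {j | j ∈ J}

variable {r F}

theorem W.cl_eq (w : W r F) : cl r (fun a b => a ≤ b) w.1 = w.1 := by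
  obtain ⟨H, J, hJ, rfl⟩ := w
  exact cl_cl_le r cpre_le _

/-- Finite presentations of elements; the same one works modulo every congruence of `B`. -/
theorem W.exists_pres (w : W r F) :
    ∃ l m, Pres r l m ∧ (∀ R, CPre R → cl r R w.1 = hull r R l m) ∧
      w.1 = hull r (fun a b => a ≤ b) l m := by
  obtain ⟨H, J, hJ, rfl⟩ := w
  obtain ⟨l, m, hP, h⟩ := SIT.exists_pres r J hJ
  refine ⟨l, m, hP, fun R hR => ?_, h _ cpre_le⟩
  rw [cl_cl_le r hR, h R hR]

/-- The element with a given presentation. -/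
def W.ofPres (l : List ((∀ i, F i) × B)) (m : X → B) (P : Pres r l m) : W r F :=
  ⟨hull r (fun a b => a ≤ b) l m, by
    obtain ⟨J, hJ, h⟩ := exists_gens r P
    exact ⟨J, hJ, h _ cpre_le⟩⟩

theorem Pres.inf {l l' : List ((∀ i, F i) × B)} {m m' : X → B} (P : Pres r l m)
    (P' : Pres r l' m') : Pres r (l ++ l') (fun i => m i ⊓ m' i) := by
  have key : ∀ i, m i ⊓ m' i ≠ r i → m i ≠ r i ∧ m' i ≠ r i := by
    intro i hi
    constructor
    · intro h; apply hi; rw [h]; exact inf_eq_left.2 (P'.le_m i)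
    · intro h; apply hi; rw [h]; exact inf_eq_right.2 (P.le_m i)
  refine ⟨by simp [P.ne], ?_, fun i => le_inf (P.le_m i) (P'.le_m i),
    P.fin.subset fun i hi => (key i hi).1, ?_⟩
  · intro p hp
    rcases List.mem_append.1 hp with hp | hp
    exacts [P.proper p hp, P'.proper p hp]
  · intro i hi p hp
    rcases List.mem_append.1 hp with hp | hp
    exacts [P.tame i (key i hi).1 p hp, P'.tame i (key i hi).2 p hp]

theorem hull_inf {R : B → B → Prop} (hR : CPre R) (l l' : List ((∀ i, F i) × B)) (m m' : X → B) :
    hull r R (l ++ l') (fun i => m i ⊓ m' i) = hull r R l m ∩ hull r R l' m' := by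
  have key : ∀ d a b, R d (a ⊓ b) ↔ R d a ∧ R d b := fun d a b =>
    ⟨fun h => ⟨hR.trans h (hR.of_le inf_le_left), hR.trans h (hR.of_le inf_le_right)⟩,
      fun h => hR.inf h.1 h.2⟩
  ext o
  cases o with
  | base d =>
    simp only [mem_hull_base, List.mem_append, Set.mem_inter_iff, or_imp, forall_and]
  | gad i c d =>
    simp only [mem_hull_gad, List.mem_append, Set.mem_inter_iff, or_imp, forall_and, key]
    tauto

instance : Lattice (W r F) where
  le w w' := w.1 ⊆ w'.1
  lt w w' := w.1 ⊂ w'.1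
  le_refl _ := Set.Subset.rfl
  le_trans _ _ _ h h' := Set.Subset.trans h h'
  le_antisymm _ _ h h' := W.ext (Set.Subset.antisymm h h')
  lt_iff_le_not_ge _ _ := Iff.rfl
  sup w w' := ⟨cl r (fun a b => a ≤ b) (w.1 ∪ w'.1), by
    obtain ⟨H, J, hJ, rfl⟩ := w
    obtain ⟨H', J', hJ', rfl⟩ := w'
    refine ⟨J ++ J', by simp [hJ], ?_⟩
    apply Set.Subset.antisymm
    · refine cl_subset r (Set.union_subset ?_ ?_)
      · exact cl_mono r fun j hj => List.mem_append_left _ hj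
      · exact cl_mono r fun j hj => List.mem_append_right _ hj
    · refine cl_mono r fun j hj => ?_
      rcases List.mem_append.1 hj with hj | hj
      · exact Or.inl (subset_cl r _ _ hj)
      · exact Or.inr (subset_cl r _ _ hj)⟩
  le_sup_left _ _ := Set.Subset.trans Set.subset_union_left (subset_cl r _ _)
  le_sup_right _ _ := Set.Subset.trans Set.subset_union_right (subset_cl r _ _)
  sup_le w w' v h h' := by
    change cl r _ _ ⊆ _
    rw [← v.cl_eq]
    exact cl_mono r (Set.union_subset h h')
  inf w w' := ⟨w.1 ∩ w'.1, by
    obtain ⟨l, m, P, -, h⟩ := w.exists_pres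
    obtain ⟨l', m', P', -, h'⟩ := w'.exists_pres
    obtain ⟨J, hJ, hh⟩ := exists_gens r (P.inf P')
    exact ⟨J, hJ, by rw [← hh _ cpre_le, hull_inf cpre_le, h, h']⟩⟩
  inf_le_left _ _ := Set.inter_subset_left
  inf_le_right _ _ := Set.inter_subset_right
  le_inf _ _ _ h h' := Set.subset_inter h h'

theorem W.le_def {w w' : W r F} : w ≤ w' ↔ w.1 ⊆ w'.1 := Iff.rfl

theorem W.sup_val (w w' : W r F) : (w ⊔ w').1 = cl r (fun a b => a ≤ b) (w.1 ∪ w'.1) := rfl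

theorem W.inf_val (w w' : W r F) : (w ⊓ w').1 = w.1 ∩ w'.1 := rfl

variable (r F) in
/-- The principal element generated by an object. -/
def ob (o : Obj B F) : W r F := ⟨cl r (fun a b => a ≤ b) {o}, [o], by simp, by simp⟩

theorem ob_le {o : Obj B F} {w : W r F} : ob r F o ≤ w ↔ o ∈ w.1 := by
  constructor
  · exact fun h => h (subset_cl r _ _ rfl)
  · intro h
    change cl r _ _ ⊆ _
    rw [← w.cl_eq]
    exact cl_mono r (by simpa using h)

theorem W.le_iff_ob {w w' : W r F} : w ≤ w' ↔ ∀ o, ob r F o ≤ w → ob r F o ≤ w' :=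
  ⟨fun h _ ho => ho.trans h, fun h o ho => ob_le.1 (h o (ob_le.2 ho))⟩

variable (r F) in
/-- The embedding of `B`. -/
def bs (d : B) : W r F := ob r F (.base d)

variable (r) in
/-- The gadget element `c` over the interval `[r i, r i ⊔ d]`. -/
def gd (i : X) (c : F i) (d : B) : W r F := ob r F (.gad i c d)

theorem bs_le {d : B} {w : W r F} : bs r F d ≤ w ↔ Obj.base d ∈ w.1 := ob_le

theorem gd_le {i : X} {c : F i} {d : B} {w : W r F} : gd r i c d ≤ w ↔ Obj.gad i c d ∈ w.1 := ob_le

theorem W.le_iff {w w' : W r F} : w ≤ w' ↔ (∀ d, bs r F d ≤ w → bs r F d ≤ w') ∧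
    ∀ i (c : F i) d, gd r i c d ≤ w → gd r i c d ≤ w' := by
  rw [W.le_iff_ob]
  constructor
  · exact fun h => ⟨fun d => h _, fun i c d => h _⟩
  · rintro ⟨h1, h2⟩ (d | ⟨i, c, d⟩)
    exacts [h1 d, h2 i c d]

/-- Every element is a finite join of principal elements. -/
theorem W.induction {P : W r F → Prop} (h1 : ∀ d, P (bs r F d)) (h2 : ∀ i c d, P (gd r i c d))
    (h3 : ∀ w w', P w → P w' → P (w ⊔ w')) (w : W r F) : P w := by
  obtain ⟨H, J, hJ, rfl⟩ := w
  have hob : ∀ o, P (ob r F o) := by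
    rintro (d | ⟨i, c, d⟩)
    exacts [h1 d, h2 i c d]
  induction J with
  | nil => exact absurd rfl hJ
  | cons o J ih =>
    by_cases h : J = []
    · subst h
      refine Eq.mpr (congrArg P ?_) (hob o)
      apply W.ext
      simp [ob]
    · refine Eq.mpr (congrArg P ?_) (h3 _ _ (hob o) (ih h))
      apply le_antisymm
      · change cl r _ _ ⊆ cl r _ _
        refine cl_mono r fun j hj => ?_
        rcases List.mem_cons.1 hj with rfl | hj
        · exact Or.inl (subset_cl r _ _ rfl)
        · exact Or.inr (subset_cl r _ _ hj)
      · apply sup_le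
        · exact ob_le.2 (subset_cl r _ _ List.mem_cons_self)
        · exact cl_mono r fun j hj => List.mem_cons_of_mem _ hj

section Rules

variable {w : W r F} {i : X} {c c' : F i} {d d' : B}

theorem bs_mono (h : d ≤ d') : bs r F d ≤ bs r F d' := by
  rw [bs_le]
  obtain ⟨l, m, P, -, hw⟩ := (bs r F d').exists_pres
  have := bs_le.1 (le_refl (bs r F d'))
  rw [hw] at this ⊢
  exact fun p hp => h.trans (this p hp)

theorem bs_sup (d d' : B) : bs r F (d ⊔ d') = bs r F d ⊔ bs r F d' := by
  apply le_antisymm _ (sup_le (bs_mono le_sup_left) (bs_mono le_sup_right))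
  rw [bs_le]
  obtain ⟨l, m, P, -, hw⟩ := (bs r F d ⊔ bs r F d').exists_pres
  have h1 := bs_le.1 (le_sup_left : _ ≤ bs r F d ⊔ bs r F d')
  have h2 := bs_le.1 (le_sup_right : _ ≤ bs r F d ⊔ bs r F d')
  rw [hw] at h1 h2 ⊢
  exact fun p hp => sup_le (h1 p hp) (h2 p hp)

/-- Every element of `W r F` has a largest element of `B` below it. -/
theorem exists_trace (w : W r F) : ∃ ρ : B, ∀ d, bs r F d ≤ w ↔ d ≤ ρ := by
  obtain ⟨l, m, P, -, hw⟩ := w.exists_pres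
  obtain ⟨v, hv1, hv2⟩ := exists_listInf (l.map Prod.snd) (by simpa using P.ne)
  refine ⟨v, fun d => ?_⟩
  rw [bs_le, hw]
  constructor
  · intro h
    refine hv2 (· ≤ ·) cpre_le d ?_
    simpa using fun n x hx => h (x, n) hx
  · exact fun h p hp => h.trans (hv1 _ (List.mem_map_of_mem hp))

theorem bs_le_gd (i : X) (c : F i) (d : B) : bs r F (r i) ≤ gd r i c d := by
  rw [bs_le]
  obtain ⟨l, m, P, -, hw⟩ := (gd r i c d).exists_pres
  have := gd_le.1 (le_refl (gd r i c d))
  rw [hw] at this ⊢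
  exact fun p hp => (this.2 p hp).1

theorem gd_mono (hc : c ≤ c') (hd : d ≤ d' ⊔ r i) : gd r i c d ≤ gd r i c' d' := by
  rw [gd_le]
  obtain ⟨l, m, P, -, hw⟩ := (gd r i c' d').exists_pres
  have := gd_le.1 (le_refl (gd r i c' d'))
  rw [hw] at this ⊢
  refine ⟨this.1.imp (fun h => le_bot_iff.1 (hc.trans_eq h)) fun h => hd.trans (sup_le h (P.le_m i)),
    fun p hp => ⟨(this.2 p hp).1, (this.2 p hp).2.imp (fun h => hc.trans h) fun h =>
      hd.trans (sup_le h (this.2 p hp).1)⟩⟩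

theorem gd_eq_bs (h : c = ⊥ ∨ d ≤ r i) : gd r i c d = bs r F (r i) := by
  refine le_antisymm ?_ (bs_le_gd i c d)
  rw [gd_le]
  obtain ⟨l, m, P, -, hw⟩ := (bs r F (r i)).exists_pres
  have := bs_le.1 (le_refl (bs r F (r i)))
  rw [hw] at this ⊢
  refine ⟨h.imp id fun h => h.trans (P.le_m i), fun p hp => ⟨this p hp, ?_⟩⟩
  exact h.imp (fun h => h.trans_le bot_le) fun h => h.trans (this p hp)

theorem gd_sup_left (i : X) (c c' : F i) (d : B) :
    gd r i (c ⊔ c') d = gd r i c d ⊔ gd r i c' d := by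
  apply le_antisymm _ (sup_le (gd_mono le_sup_left le_sup_left) (gd_mono le_sup_right le_sup_left))
  rw [gd_le]
  obtain ⟨l, m, P, -, hw⟩ := (gd r i c d ⊔ gd r i c' d).exists_pres
  have h1 := gd_le.1 (le_sup_left : _ ≤ gd r i c d ⊔ gd r i c' d)
  have h2 := gd_le.1 (le_sup_right : _ ≤ gd r i c d ⊔ gd r i c' d)
  rw [hw] at h1 h2 ⊢
  refine ⟨?_, fun p hp => ⟨(h1.2 p hp).1, ?_⟩⟩
  · rcases h1.1 with h | h
    · rcases h2.1 with h' | h'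
      · exact Or.inl (by simp [h, h'])
      · exact Or.inr h'
    · exact Or.inr h
  · rcases (h1.2 p hp).2 with h | h
    · rcases (h2.2 p hp).2 with h' | h'
      · exact Or.inl (sup_le h h')
      · exact Or.inr h'
    · exact Or.inr h

theorem gd_sup_right (i : X) (c : F i) (d d' : B) :
    gd r i c (d ⊔ d') = gd r i c d ⊔ gd r i c d' := by
  apply le_antisymm _ (sup_le (gd_mono le_rfl (le_sup_left.trans le_sup_left))
    (gd_mono le_rfl (le_sup_right.trans le_sup_left)))
  rw [gd_le]
  obtain ⟨l, m, P, -, hw⟩ := (gd r i c d ⊔ gd r i c d').exists_pres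
  have h1 := gd_le.1 (le_sup_left : _ ≤ gd r i c d ⊔ gd r i c d')
  have h2 := gd_le.1 (le_sup_right : _ ≤ gd r i c d ⊔ gd r i c d')
  rw [hw] at h1 h2 ⊢
  refine ⟨?_, fun p hp => ⟨(h1.2 p hp).1, ?_⟩⟩
  · rcases h1.1 with h | h
    · exact Or.inl h
    · rcases h2.1 with h' | h'
      · exact Or.inl h'
      · exact Or.inr (sup_le h h')
  · rcases (h1.2 p hp).2 with h | h
    · exact Or.inl h
    · rcases (h2.2 p hp).2 with h' | h'
      · exact Or.inl h'
      · exact Or.inr (sup_le h h')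

theorem bs_le_gd_top (i : X) (d : B) : bs r F d ≤ gd r i (⊤ : F i) d := by
  rw [bs_le]
  obtain ⟨l, m, P, -, hw⟩ := (gd r i (⊤ : F i) d).exists_pres
  have := gd_le.1 (le_refl (gd r i (⊤ : F i) d))
  rw [hw] at this ⊢
  exact fun p hp => ((this.2 p hp).2).resolve_left fun h => P.proper p hp i (top_le_iff.1 h)

/-- The base element `d` and the copy over `[r i, r i ⊔ d]` of any nonzero `c` join to the copy of
the top. -/
theorem gd_top_le (hc : c ≠ ⊥) (h1 : bs r F d ≤ w) (h2 : gd r i c d ≤ w) : gd r i ⊤ d ≤ w := by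
  rw [bs_le] at h1
  rw [gd_le] at h2 ⊢
  obtain ⟨l, m, P, -, hw⟩ := w.exists_pres
  rw [hw] at h1 h2 ⊢
  exact ⟨Or.inr (h2.1.resolve_left hc), fun p hp => ⟨(h2.2 p hp).1, Or.inr (h1 p hp)⟩⟩

theorem gd_sup_base (i : X) (c : F i) (d : B) : gd r i c (d ⊔ r i) = gd r i c d :=
  le_antisymm (gd_mono le_rfl le_rfl) (gd_mono le_rfl (le_sup_left.trans le_sup_left))

/-- The nontrivial elements of the `i`-th gadget below `w` have a common bound. -/
theorem exists_bound (w : W r F) (i : X) : ∃ m, r i ≤ m ∧ ∀ (c : F i) d, gd r i c d ≤ w →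
    c = ⊥ ∨ d ≤ m := by
  obtain ⟨l, m, P, -, hw⟩ := w.exists_pres
  refine ⟨m i, P.le_m i, fun c d h => ?_⟩
  rw [gd_le, hw] at h
  exact h.1

end Rules

section Spec

variable {i : X} {c f : F i} {b d y : B}

open Classical in
theorem presE (i : X) (f : F i) (hf : f ≠ ⊤) (hy : r i ≤ y) (hd : y ≤ d) :
    Pres r [(Function.update (fun _ => ⊥) i f, y)] (Function.update r i d) := by
  have key : ∀ j, Function.update r i d j ≠ r j → j = i := by
    intro j hj
    by_contra h
    exact hj (Function.update_of_ne h _ _)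
  refine ⟨by simp, ?_, fun j => ?_, (Set.finite_singleton i).subset key, ?_⟩
  · intro p hp j
    rw [List.mem_singleton] at hp
    subst hp
    by_cases h : j = i
    · subst h; simpa using hf
    · simp [Function.update_of_ne h]
  · by_cases h : j = i
    · subst h; simpa using hy.trans hd
    · simp [Function.update_of_ne h]
  · intro j hj p hp
    rw [List.mem_singleton] at hp
    subst hp
    rw [key j hj]
    exact hy

open Classical in
theorem presTop (i : X) (hd : r i ≤ d) :
    Pres r (F := F) [(fun _ => ⊥, d)] (Function.update r i d) := by
  have key : ∀ j, Function.update r i d j ≠ r j → j = i := by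
    intro j hj
    by_contra h
    exact hj (Function.update_of_ne h _ _)
  refine ⟨by simp, by simp, fun j => ?_, (Set.finite_singleton i).subset key, ?_⟩
  · by_cases h : j = i
    · subst h; simpa using hd
    · simp [Function.update_of_ne h]
  · intro j hj p hp
    rw [List.mem_singleton] at hp
    subst hp
    rw [key j hj]
    exact hd

theorem presBase (d : B) : Pres r (F := F) [(fun _ => ⊥, d)] r :=
  ⟨by simp, by simp, fun _ => le_rfl, by simp, fun i hi => absurd rfl hi⟩

theorem bs_le_bs : bs r F b ≤ bs r F d ↔ b ≤ d := by
  refine ⟨fun h => ?_, bs_mono⟩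
  have h1 : bs r F d ≤ W.ofPres _ _ (presBase d) := by
    rw [bs_le]
    simp [W.ofPres]
  have := h.trans h1
  rw [bs_le] at this
  simpa [W.ofPres] using this

theorem bs_inj : bs r F b = bs r F d ↔ b = d := by
  rw [le_antisymm_iff, le_antisymm_iff, bs_le_bs, bs_le_bs]

theorem gd_le_bs : gd r i c b ≤ bs r F d ↔ r i ≤ d ∧ (c = ⊥ ∨ b ≤ r i) := by
  constructor
  · intro h
    refine ⟨bs_le_bs.1 ((bs_le_gd i c b).trans h), ?_⟩
    have h1 : bs r F d ≤ W.ofPres _ _ (presBase d) := by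
      rw [bs_le]
      simp [W.ofPres]
    have := h.trans h1
    rw [gd_le] at this
    exact this.1
  · rintro ⟨h1, h2⟩
    rw [gd_eq_bs h2]
    exact bs_mono h1

open Classical in
theorem E_le (hf : f ≠ ⊤) (hy : r i ≤ y) (hd : y ≤ d) :
    gd r i f d ⊔ gd r i ⊤ y ≤ W.ofPres _ _ (presE i f hf hy hd) := by
  apply sup_le
  · rw [gd_le]; simp [W.ofPres, hy]
  · rw [gd_le]; simp [W.ofPres, hy, hd]

open Classical in
theorem T_le (i : X) (hd : r i ≤ d) : gd r (F := F) i ⊤ d ≤ W.ofPres _ _ (presTop i hd) := by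
  rw [gd_le]; simp [W.ofPres, hd]

open Classical in
/-- The gadget elements over `r i` below `E = gd i f d ⊔ gd i ⊤ y`. -/
theorem gd_le_E (hy : r i ≤ y) (hd : y ≤ d) :
    gd r i c b ≤ gd r i f d ⊔ gd r i ⊤ y ↔ c = ⊥ ∨ (b ≤ d ∧ (c ≤ f ∨ b ≤ y)) := by
  constructor
  · intro h
    by_cases hf : f = ⊤
    · subst hf
      rw [sup_eq_left.2 (gd_mono le_rfl (hd.trans le_sup_left))] at h
      have := h.trans (T_le i (hy.trans hd))
      rw [gd_le] at this
      have := this.1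
      simp only [Function.update_self] at this
      exact this.imp id fun h => ⟨h, Or.inl le_top⟩
    · have := h.trans (E_le hf hy hd)
      rw [gd_le] at this
      simp only [W.ofPres, mem_hull_gad, Function.update_self, List.mem_singleton, forall_eq] at this
      exact this.1.imp id fun h => ⟨h, this.2.2⟩
  · rintro (h | ⟨h1, h2 | h2⟩)
    · rw [gd_eq_bs (Or.inl h)]
      exact (bs_le_gd i f d).trans le_sup_left
    · exact (gd_mono h2 (h1.trans le_sup_left)).trans le_sup_left
    · exact (gd_mono le_top (h2.trans le_sup_left)).trans le_sup_right

open Classical in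
theorem bs_le_E (hy : r i ≤ y) (hd : y ≤ d) :
    bs r F b ≤ gd r i f d ⊔ gd r i ⊤ y ↔ b ≤ y ∨ (f = ⊤ ∧ b ≤ d) := by
  constructor
  · intro h
    by_cases hf : f = ⊤
    · subst hf
      rw [sup_eq_left.2 (gd_mono le_rfl (hd.trans le_sup_left))] at h
      have := h.trans (T_le i (hy.trans hd))
      rw [bs_le] at this
      simp only [W.ofPres, mem_hull_base, List.mem_singleton, forall_eq] at this
      exact Or.inr ⟨rfl, this⟩
    · have := h.trans (E_le hf hy hd)
      rw [bs_le] at this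
      simp only [W.ofPres, mem_hull_base, List.mem_singleton, forall_eq] at this
      exact Or.inl this
  · rintro (h | ⟨rfl, h⟩)
    · exact ((bs_mono h).trans (bs_le_gd_top i y)).trans le_sup_right
    · exact ((bs_mono h).trans (bs_le_gd_top i d)).trans le_sup_left

open Classical in
theorem gd_le_E_ne {j : X} {c : F j} (hy : r i ≤ y) (hd : y ≤ d) (hj : j ≠ i) :
    gd r j c b ≤ gd r i f d ⊔ gd r i ⊤ y ↔
      (c = ⊥ ∨ b ≤ r j) ∧ bs r F (r j) ≤ gd r i f d ⊔ gd r i ⊤ y := by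
  constructor
  · intro h
    refine ⟨?_, (bs_le_gd j c b).trans h⟩
    by_cases hf : f = ⊤
    · subst hf
      rw [sup_eq_left.2 (gd_mono le_rfl (hd.trans le_sup_left))] at h
      have := h.trans (T_le i (hy.trans hd))
      rw [gd_le] at this
      simpa only [Function.update_of_ne hj] using this.1
    · have := h.trans (E_le hf hy hd)
      rw [gd_le] at this
      simpa only [Function.update_of_ne hj] using this.1
  · rintro ⟨h1, h2⟩
    rwa [gd_eq_bs h1]

theorem gd_eq_E (i : X) (f : F i) (d : B) :
    gd r i f d = gd r i f (d ⊔ r i) ⊔ gd r i ⊤ (r i) := by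
  rw [gd_eq_bs (Or.inr le_rfl), sup_eq_left.2 (bs_le_gd _ _ _), gd_sup_base]

theorem gd_le_gd : gd r i c b ≤ gd r i f d ↔ c = ⊥ ∨ b ≤ r i ∨ (c ≤ f ∧ b ≤ d ⊔ r i) := by
  rw [gd_eq_E i f d, gd_le_E le_rfl le_sup_right]
  constructor
  · rintro (h | ⟨h1, h2 | h2⟩) <;> tauto
  · rintro (h | h | h)
    · tauto
    · exact Or.inr ⟨h.trans le_sup_right, Or.inr h⟩
    · tauto

theorem gd_le_gd_ne {j : X} {c : F j} (h : gd r j c b ≤ gd r i f d) (hc : c ≠ ⊥) (hb : ¬ b ≤ r j) :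
    j = i := by
  by_contra hj
  rw [gd_eq_E i f d, gd_le_E_ne le_rfl le_sup_right hj] at h
  tauto

theorem bs_le_gd_iff : bs r F b ≤ gd r i f d ↔ b ≤ r i ∨ (f = ⊤ ∧ b ≤ d ⊔ r i) := by
  rw [gd_eq_E i f d, bs_le_E le_rfl le_sup_right]

/-- For `r i ≤ y ≤ d`, the map `c ↦ gd i c d ⊔ gd i ⊤ y` preserves meets. With `E_sup`, it embeds
the gadget over `[y, d]` and transports congruences of `W r F` to the gadget. -/
theorem E_inf (hy : r i ≤ y) (hd : y ≤ d) (c f : F i) :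
    (gd r i c d ⊔ gd r i ⊤ y) ⊓ (gd r i f d ⊔ gd r i ⊤ y) = gd r i (c ⊓ f) d ⊔ gd r i ⊤ y := by
  apply le_antisymm
  · rw [W.le_iff]
    constructor
    · intro b hb
      rw [le_inf_iff, bs_le_E hy hd, bs_le_E hy hd] at hb
      rw [bs_le_E hy hd]
      rcases hb with ⟨h1 | h1, h2 | h2⟩
      · exact Or.inl h1
      · exact Or.inl h1
      · exact Or.inl h2
      · exact Or.inr ⟨by simp [h1.1, h2.1], h1.2⟩
    · intro j e b hb
      rw [le_inf_iff] at hb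
      by_cases hj : j = i
      · subst hj
        rw [gd_le_E hy hd, gd_le_E hy hd] at hb
        rw [gd_le_E hy hd, le_inf_iff]
        tauto
      · rw [gd_le_E_ne hy hd hj, gd_le_E_ne hy hd hj, bs_le_E hy hd, bs_le_E hy hd] at hb
        rw [gd_le_E_ne hy hd hj, bs_le_E hy hd]
        refine ⟨hb.1.1, ?_⟩
        rcases hb with ⟨⟨-, h1 | h1⟩, -, h2 | h2⟩
        · exact Or.inl h1
        · exact Or.inl h1
        · exact Or.inl h2
        · exact Or.inr ⟨by simp [h1.1, h2.1], h1.2⟩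
  · exact sup_le (le_inf ((gd_mono inf_le_left le_sup_left).trans le_sup_left)
      ((gd_mono inf_le_right le_sup_left).trans le_sup_left)) (le_inf le_sup_right le_sup_right)

theorem E_sup (y d : B) (c f : F i) :
    (gd r i c d ⊔ gd r i ⊤ y) ⊔ (gd r i f d ⊔ gd r i ⊤ y) = gd r i (c ⊔ f) d ⊔ gd r i ⊤ y := by
  rw [gd_sup_left, sup_sup_sup_comm, sup_idem]

theorem gd_inf (i : X) (c f : F i) (b d : B) :
    gd r i c b ⊓ gd r i f d = gd r i (c ⊓ f) ((b ⊔ r i) ⊓ (d ⊔ r i)) := by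
  apply le_antisymm
  · rw [W.le_iff]
    constructor
    · intro e he
      rw [le_inf_iff, bs_le_gd_iff, bs_le_gd_iff] at he
      rw [bs_le_gd_iff]
      rcases he with ⟨h1 | h1, h2 | h2⟩
      · exact Or.inl h1
      · exact Or.inl h1
      · exact Or.inl h2
      · exact Or.inr ⟨by simp [h1.1, h2.1], (le_inf h1.2 h2.2).trans le_sup_left⟩
    · intro j e a ha
      rw [le_inf_iff] at ha
      by_cases htr : e = ⊥ ∨ a ≤ r j
      · rw [gd_eq_bs htr] at ha ⊢
        rw [bs_le_gd_iff, bs_le_gd_iff] at ha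
        rw [bs_le_gd_iff]
        rcases ha with ⟨h1 | h1, h2 | h2⟩
        · exact Or.inl h1
        · exact Or.inl h1
        · exact Or.inl h2
        · exact Or.inr ⟨by simp [h1.1, h2.1], (le_inf h1.2 h2.2).trans le_sup_left⟩
      · push Not at htr
        obtain rfl := gd_le_gd_ne ha.1 htr.1 htr.2
        rw [gd_le_gd, gd_le_gd] at ha
        refine gd_mono (le_inf ?_ ?_) ((le_inf ?_ ?_).trans le_sup_left) <;> tauto
  · exact le_inf (gd_mono inf_le_left (inf_le_left.trans (by simp)))
      (gd_mono inf_le_right (inf_le_right.trans (by simp)))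

theorem bs_inf (b d : B) : bs r F (b ⊓ d) = bs r F b ⊓ bs r F d := by
  apply le_antisymm (le_inf (bs_mono inf_le_left) (bs_mono inf_le_right))
  rw [W.le_iff]
  constructor
  · intro e he
    rw [le_inf_iff, bs_le_bs, bs_le_bs] at he
    exact bs_mono (le_inf he.1 he.2)
  · intro j e a ha
    rw [le_inf_iff, gd_le_bs, gd_le_bs] at ha
    rw [gd_le_bs]
    exact ⟨le_inf ha.1.1 ha.2.1, ha.1.2⟩

/-- The elements of `B` are those without nontrivial gadget elements below them. -/
theorem mem_range_bs {w : W r F} :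
    w ∈ Set.range (bs r F) ↔ ∀ i (c : F i) d, gd r i c d ≤ w → c = ⊥ ∨ d ≤ r i := by
  constructor
  · rintro ⟨b, rfl⟩ i c d h
    exact (gd_le_bs.1 h).2
  · intro h
    obtain ⟨ρ, hρ⟩ := exists_trace w
    refine ⟨ρ, le_antisymm ((hρ ρ).2 le_rfl) ?_⟩
    rw [W.le_iff]
    refine ⟨fun d hd => bs_mono ((hρ d).1 hd), fun i c d hd => ?_⟩
    rw [gd_le_bs]
    exact ⟨(hρ _).1 ((bs_le_gd i c d).trans hd), h i c d hd⟩

theorem mem_range_of_le {w : W r F} (h : w ≤ bs r F d) : w ∈ Set.range (bs r F) := by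
  rw [mem_range_bs]
  exact fun i c e he => (gd_le_bs.1 (he.trans h)).2

end Spec

end Lattice

end SIT

/-! ### Congruences of the extension -/

namespace SIT

section Congruence

/-- The order of a lattice modulo a congruence. -/
def cle {L : Type u} [Lattice L] (θ : L → L → Prop) (a b : L) : Prop := θ (a ⊔ b) b

theorem cpre_cle {L : Type u} [Lattice L] {θ : L → L → Prop} (h : LatCon L θ) : CPre (cle θ) := by
  obtain ⟨⟨hr, hs, ht⟩, hc⟩ := h
  refine ⟨fun {a b} hab => ?_, fun {a b c} h1 h2 => ?_, fun {a b c} h1 h2 => ?_,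
    fun {a b c} h1 h2 => ?_⟩
  · rw [cle, sup_eq_right.2 hab]; exact hr b
  · have h3 := (hc _ _ _ _ (hr a) h2).1
    have h4 := (hc _ _ _ _ h1 (hr c)).1
    rw [sup_assoc] at h4
    exact ht (hs h3) (ht h4 h2)
  · have := (hc _ _ _ _ h1 h2).1
    rwa [sup_sup_sup_comm, sup_idem] at this
  · have h3 := (hc _ _ _ _ h1 h2).2
    have h4 := (hc _ _ _ _ (hr (c ⊔ a ⊓ b)) h3).2
    rw [inf_eq_left.2 (le_inf (sup_le_sup_left inf_le_left c) (sup_le_sup_left inf_le_right c)),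
      inf_eq_right.2 (le_sup_right : a ⊓ b ≤ c ⊔ a ⊓ b)] at h4
    exact h4

theorem con_iff_cle {L : Type u} [Lattice L] {θ : L → L → Prop} (h : LatCon L θ) (a b : L) :
    θ a b ↔ cle θ a b ∧ cle θ b a := by
  obtain ⟨⟨hr, hs, ht⟩, hc⟩ := h
  constructor
  · intro h
    have h1 := (hc _ _ _ _ h (hr b)).1
    have h2 := (hc _ _ _ _ (hs h) (hr a)).1
    rw [sup_idem] at h1 h2
    exact ⟨h1, h2⟩
  · rintro ⟨h1, h2⟩
    rw [cle, sup_comm] at h2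
    exact ht (hs h2) h1

/-- Simplicity of a bounded lattice: a congruence that identifies two distinct elements identifies
the bounds. -/
def Simple (G : Type u) [Lattice G] [BoundedOrder G] : Prop :=
  ∀ θ : G → G → Prop, LatCon G θ → ∀ a b, a ≠ b → θ a b → θ ⊥ ⊤

variable {B X : Type u} [Lattice B] {r : X → B} {F : X → Type u} [∀ i, Lattice (F i)]
  [∀ i, BoundedOrder (F i)] [∀ i, Nontrivial (F i)]

theorem cl_inter {R : B → B → Prop} (hR : CPre R) (w w' : W r F) :
    cl r R (w ⊓ w').1 = cl r R w.1 ∩ cl r R w'.1 := by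
  obtain ⟨l, m, P, h1, h2⟩ := w.exists_pres
  obtain ⟨l', m', P', h1', h2'⟩ := w'.exists_pres
  obtain ⟨J, hJ, hh⟩ := exists_gens r (P.inf P')
  rw [h1 R hR, h1' R hR, ← hull_inf hR, hh R hR, ← cl_cl_le r hR {j | j ∈ J}, ← hh _ cpre_le,
    hull_inf cpre_le, W.inf_val, h2, h2']

theorem cl_union {R : B → B → Prop} (hR : CPre R) (w w' : W r F) :
    cl r R (w ⊔ w').1 = cl r R (cl r R w.1 ∪ cl r R w'.1) := by
  rw [W.sup_val, cl_cl_le r hR]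
  apply Set.Subset.antisymm
  · exact cl_mono r (Set.union_subset_union (subset_cl r R _) (subset_cl r R _))
  · exact cl_subset r (Set.union_subset (cl_mono r Set.subset_union_left)
      (cl_mono r Set.subset_union_right))

/-- The extension of a congruence to `W`, through the closure modulo the congruence. -/
theorem latCon_ext {R : B → B → Prop} (hR : CPre R) :
    LatCon (W r F) fun w w' => cl r R w.1 = cl r R w'.1 := by
  refine ⟨⟨fun _ => rfl, fun h => h.symm, fun h h' => h.trans h'⟩, fun a b c d h1 h2 => ⟨?_, ?_⟩⟩
  all_goals dsimp only at h1 h2 ⊢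
  · rw [cl_union hR, cl_union hR, h1, h2]
  · rw [cl_inter hR, cl_inter hR, h1, h2]

theorem mem_cl_bs {R : B → B → Prop} (hR : CPre R) (a b : B) :
    (bs r F a).1 ⊆ cl r R (bs r F b).1 ↔ R a b := by
  have h1 : cl r R (bs r F b).1 = cl r R {Obj.base b} := cl_cl_le r hR _
  rw [h1]
  constructor
  · intro h
    have := (h (bs_le.1 (le_refl (bs r F a)))).2 (fun _ => ⊥) {x | R x b} (hR.idl b)
      (fun _ => bot_ne_top) (by simpa [satD] using hR.of_le le_rfl)
    exact this
  · intro h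
    refine (cl_le_subset r hR _).trans (cl_subset r ?_)
    rw [Set.singleton_subset_iff]
    exact ⟨fun _ _ _ _ _ => trivial, fun _ N hN _ h' => hN.down h (h' _ rfl)⟩

section Unique

variable {S : W r F → W r F → Prop} {R : B → B → Prop}

theorem S_of_ob (hS : CPre S) {w w' : W r F} (h : ∀ o, ob r F o ≤ w → S (ob r F o) w') : S w w' := by
  induction w using W.induction with
  | h1 d => exact h _ le_rfl
  | h2 i c d => exact h _ le_rfl
  | h3 w v hw hv => 
    exact hS.sup (hw fun o ho => h o (ho.trans le_sup_left))
      (hv fun o ho => h o (ho.trans le_sup_right))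

theorem S_bs (hS : CPre S) (hSR : ∀ a b, S (bs r F a) (bs r F b) ↔ R a b)
    {d : B} {w : W r F} (h : S (bs r F d) w) : ∃ e, bs r F e ≤ w ∧ R d e := by
  obtain ⟨e, he⟩ := mem_range_of_le (inf_le_left : bs r F d ⊓ w ≤ _)
  refine ⟨e, he.trans_le inf_le_right, (hSR d e).1 ?_⟩
  rw [he]
  exact hS.inf (hS.of_le le_rfl) h

/-- Collapsing an interval of `B` above `r i` collapses the corresponding tops of the gadget;
two disjoint nonzero elements of the gadget force this. -/
theorem S_top (hS : CPre S) (hSR : ∀ a b, S (bs r F a) (bs r F b) ↔ R a b)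
    (hD : ∀ i, ∃ c f : F i, c ≠ ⊥ ∧ f ≠ ⊥ ∧ c ⊓ f = ⊥) (i : X) {d y : B} (h : R d y) :
    S (gd r i ⊤ d) (gd r i ⊤ y) := by
  obtain ⟨c, f, hc, hf, hcf⟩ := hD i
  set y0 := y ⊔ r i
  set y1 := d ⊔ y0
  have hy01 : y0 ≤ y1 := le_sup_right
  have hbs : S (bs r F y1) (bs r F y0) := by
    rw [show y1 = d ⊔ y0 from rfl, bs_sup]
    exact hS.sup (hS.trans ((hSR d y).2 h) (hS.of_le (bs_mono le_sup_left))) (hS.of_le le_rfl)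
  have h0 : S (bs r F y1) (gd r i ⊤ y0) := hS.trans hbs (hS.of_le (bs_le_gd_top i y0))
  have h1 : S (gd r i ⊤ y1) (gd r i f y1 ⊔ gd r i ⊤ y0) := by
    refine hS.trans (hS.of_le (gd_top_le hf le_sup_left le_sup_right :
      gd r i ⊤ y1 ≤ bs r F y1 ⊔ gd r i f y1)) (hS.sup (hS.trans h0 (hS.of_le le_sup_right)) ?_)
    exact hS.of_le le_sup_left
  have h2 : S (gd r i c y1) (gd r i ⊤ y0) := by
    have h3 : S (gd r i c y1) ((gd r i c y1 ⊔ gd r i ⊤ y0) ⊓ (gd r i f y1 ⊔ gd r i ⊤ y0)) :=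
      hS.inf (hS.of_le le_sup_left) (hS.trans (hS.of_le (gd_mono le_top le_sup_left)) h1)
    rw [E_inf le_sup_right hy01, hcf, gd_eq_bs (Or.inl rfl), sup_eq_right.2 (bs_le_gd _ _ _)] at h3
    exact h3
  have h3 : S (gd r i ⊤ y1) (gd r i ⊤ y0) :=
    hS.trans (hS.of_le (gd_top_le hc le_sup_left le_sup_right :
      gd r i ⊤ y1 ≤ bs r F y1 ⊔ gd r i c y1)) (hS.sup h0 h2)
  rw [show y0 = y ⊔ r i from rfl, gd_sup_base] at h3
  exact hS.trans (hS.of_le (gd_mono le_rfl (le_sup_left.trans le_sup_left))) h3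

/-- One half of the uniqueness of the extended congruence: a congruence preorder of `W r F` that
restricts to `R` contains the one induced by `R`. -/
theorem S_of_subset (hS : CPre S) (hSR : ∀ a b, S (bs r F a) (bs r F b) ↔ R a b)
    (hR : CPre R) (hD : ∀ i, ∃ c f : F i, c ≠ ⊥ ∧ f ≠ ⊥ ∧ c ⊓ f = ⊥)
    {w w' : W r F} (h : w.1 ⊆ cl r R w'.1) : S w w' := by
  obtain ⟨l, m, P, h1, h2⟩ := w'.exists_pres
  rw [h1 R hR] at h
  have hbase : ∀ d, Obj.base d ∈ hull r R l m → S (bs r F d) w' := by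
    intro d hd
    obtain ⟨v, hv1, hv2⟩ := exists_listInf (l.map Prod.snd) (by simpa using P.ne)
    refine hS.trans ((hSR d v).2 (hv2 R hR d ?_)) (hS.of_le ?_)
    · simpa using fun n x hx => hd (x, n) hx
    · rw [bs_le, h2]
      exact fun p hp => hv1 _ (List.mem_map_of_mem hp)
  refine S_of_ob hS fun o ho => ?_
  have ho' := h (ob_le.1 ho)
  cases o with
  | base d => exact hbase d ho'
  | gad i c d =>
    change S (gd r i c d) w'
    have hri : S (bs r F (r i)) w' := hbase _ fun p hp => (ho'.2 p hp).1
    by_cases hc : c = ⊥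
    · rwa [gd_eq_bs (Or.inl hc)]
    have hd := ho'.1.resolve_left hc
    by_cases hm : m i = r i
    · rw [hm] at hd
      have := S_top hS hSR hD i hd
      rw [gd_eq_bs (Or.inr le_rfl)] at this
      exact hS.trans (hS.of_le (gd_mono le_top le_sup_left)) (hS.trans this hri)
    · classical
      obtain ⟨v, hv1, hv2⟩ := exists_listInf
        (m i :: (l.filter fun p => ¬ c ≤ p.1 i).map Prod.snd) (by simp)
      have hdv : R d v := by
        refine hv2 R hR d fun n hn => ?_
        rcases List.mem_cons.1 hn with rfl | hn
        · exact hd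
        · obtain ⟨p, hp, rfl⟩ := List.mem_map.1 hn
          simp only [List.mem_filter, decide_eq_true_eq] at hp
          exact (ho'.2 p hp.1).2.resolve_left hp.2
      have hvw : gd r i c v ≤ w' := by
        rw [gd_le, h2]
        refine ⟨Or.inr (hv1 _ List.mem_cons_self), fun p hp => ⟨P.tame i hm p hp, ?_⟩⟩
        by_cases hcp : c ≤ p.1 i
        · exact Or.inl hcp
        · refine Or.inr (hv1 _ (List.mem_cons_of_mem _ (List.mem_map_of_mem ?_)))
          simp [hp, hcp]
      have h3 : S (gd r i c d) (gd r i c (d ⊔ v) ⊓ gd r i ⊤ v) :=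
        hS.inf (hS.of_le (gd_mono le_rfl (le_sup_left.trans le_sup_left)))
          (hS.trans (hS.of_le (gd_mono le_top le_sup_left)) (S_top hS hSR hD i hdv))
      refine hS.trans h3 (hS.of_le (le_trans ?_ hvw))
      rw [gd_inf, inf_top_eq]
      exact gd_mono le_rfl (inf_le_right.trans le_rfl)

end Unique

section Unique2

variable {Θ : W r F → W r F → Prop} {R : B → B → Prop}

/-- Simplicity of the gadget: any nontrivial collapse inside it collapses the interval of `B`. -/
theorem collapse (hΘ : LatCon (W r F) Θ) (hSR : ∀ a b, cle Θ (bs r F a) (bs r F b) ↔ R a b)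
    (hsim : ∀ i, Simple (F i)) {i : X} {c f : F i} {d y : B} (hy : r i ≤ y)
    (hd : y ≤ d) (hcf : ¬ c ≤ f) (h : cle Θ (gd r i c d) (gd r i f d ⊔ gd r i ⊤ y)) : R d y := by
  have hS := cpre_cle hΘ
  have hcon : LatCon (F i) fun a b =>
      Θ (gd r i a d ⊔ gd r i ⊤ y) (gd r i b d ⊔ gd r i ⊤ y) := by
    refine ⟨⟨fun _ => hΘ.1.1 _, fun h => hΘ.1.2 h, fun h h' => hΘ.1.3 h h'⟩,
      fun a b c d h1 h2 => ⟨?_, ?_⟩⟩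
    · have := (hΘ.2 _ _ _ _ h1 h2).1
      rwa [E_sup, E_sup] at this
    · have := (hΘ.2 _ _ _ _ h1 h2).2
      rwa [E_inf hy hd, E_inf hy hd] at this
  have h1 : Θ (gd r i (c ⊔ f) d ⊔ gd r i ⊤ y) (gd r i f d ⊔ gd r i ⊤ y) := by
    rw [con_iff_cle hΘ]
    refine ⟨?_, hS.of_le (sup_le_sup_right (gd_mono le_sup_right le_sup_left) _)⟩
    rw [gd_sup_left, sup_assoc]
    exact hS.sup h (hS.of_le le_rfl)
  have h2 := hsim i _ hcon _ _ (fun h => hcf (sup_eq_right.1 h)) h1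
  have h3 := ((con_iff_cle hΘ _ _).1 h2).2
  rw [gd_eq_bs (Or.inl rfl), sup_eq_right.2 (bs_le_gd _ _ _)] at h3
  have h4 : cle Θ (bs r F d) (gd r i ⊤ y) :=
    hS.trans (hS.of_le ((bs_le_gd_top i d).trans le_sup_left)) h3
  obtain ⟨e, he1, he2⟩ := S_bs hS hSR h4
  have he3 : e ≤ y := by
    rcases bs_le_gd_iff.1 he1 with h | h
    · exact h.trans hy
    · exact h.2.trans (sup_le le_rfl hy)
  exact (hSR _ _).1 (hS.trans ((hSR _ _).2 he2) (hS.of_le (bs_mono he3)))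

/-- The other half of the uniqueness of the extended congruence: the preorder of a congruence that
restricts to `R` is contained in the one induced by `R`. -/
theorem subset_of_S (hΘ : LatCon (W r F) Θ) (hSR : ∀ a b, cle Θ (bs r F a) (bs r F b) ↔ R a b)
    (hR : CPre R) (hsim : ∀ i, Simple (F i))
    (hD : ∀ i, ∃ c f : F i, c ≠ ⊥ ∧ f ≠ ⊥ ∧ c ⊓ f = ⊥)
    {w w' : W r F} (h : cle Θ w w') : w.1 ⊆ cl r R w'.1 := by
  have hS := cpre_cle hΘ
  obtain ⟨l, m, P, h1, h2⟩ := w'.exists_pres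
  rw [h1 R hR]
  have hbase : ∀ d, cle Θ (bs r F d) w' → ∀ p ∈ l, R d p.2 := by
    intro d hd p hp
    obtain ⟨e, he1, he2⟩ := S_bs hS hSR hd
    rw [bs_le, h2] at he1
    exact hR.trans he2 (hR.of_le (he1 p hp))
  intro o ho
  rw [← ob_le] at ho
  have ho := hS.trans (hS.of_le ho) h
  cases o with
  | base d => exact hbase d ho
  | gad i c d =>
    change cle Θ (gd r i c d) w' at ho
    have hri : ∀ p ∈ l, R (r i) p.2 := hbase _ (hS.trans (hS.of_le (bs_le_gd i c d)) ho)
    by_cases hc : c = ⊥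
    · subst hc
      exact ⟨Or.inl rfl, fun p hp => ⟨hri p hp, Or.inl bot_le⟩⟩
    have hmi : R d (m i) := by
      -- it suffices to consider some `c' ≤ c` different from `⊥` and `⊤`
      obtain ⟨c', hc'1, hc'2, hc'3⟩ : ∃ c' : F i, c' ≠ ⊥ ∧ c' ≠ ⊤ ∧ c' ≤ c := by
        by_cases hct : c = ⊤
        · obtain ⟨a, b, ha, hb, hab⟩ := hD i
          refine ⟨a, ha, ?_, by simp [hct]⟩
          rintro rfl
          exact hb (by simpa using hab)
        · exact ⟨c, hc, hct, le_rfl⟩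
      have hc'4 : cle Θ (gd r i c' (d ⊔ r i)) w' :=
        hS.trans (hS.of_le (by rw [gd_sup_base]; exact gd_mono hc'3 le_sup_left)) ho
      have key : R (d ⊔ r i) ((d ⊔ r i) ⊓ m i) := by
        refine collapse hΘ hSR hsim (c := c') (f := ⊥) (le_inf le_sup_right (P.le_m i))
          inf_le_left (fun h => hc'1 (le_bot_iff.1 h)) ?_
        refine hS.trans (hS.inf (hS.of_le le_rfl) hc'4) (hS.of_le ?_)
        rw [gd_eq_bs (Or.inl rfl), sup_eq_right.2 (bs_le_gd _ _ _), W.le_iff]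
        constructor
        · intro b hb
          rw [le_inf_iff, bs_le_gd_iff] at hb
          rcases hb.1 with h | h
          · exact (bs_mono h).trans (bs_le_gd _ _ _)
          · exact absurd h.1 hc'2
        · intro j e b hb
          rw [le_inf_iff] at hb
          by_cases htr : e = ⊥ ∨ b ≤ r j
          · rw [gd_eq_bs htr, bs_le_gd_iff] at hb
            rw [gd_eq_bs htr]
            rcases hb.1 with h | h
            · exact (bs_mono h).trans (bs_le_gd _ _ _)
            · exact absurd h.1 hc'2
          · push Not at htr
            obtain rfl := gd_le_gd_ne hb.1 htr.1 htr.2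
            have h3 := gd_le_gd.1 hb.1
            have h4 := hb.2
            rw [gd_le, h2] at h4
            refine gd_mono le_top ((le_inf ?_ (h4.1.resolve_left htr.1)).trans le_sup_left)
            have := ((h3.resolve_left htr.1).resolve_left htr.2).2
            rwa [sup_assoc, sup_idem] at this
      exact hR.trans (hR.of_le le_sup_left) (hR.trans key (hR.of_le inf_le_right))
    refine ⟨Or.inr hmi, fun p hp => ⟨hri p hp, ?_⟩⟩
    by_cases hcp : c ≤ p.1 i
    · exact Or.inl hcp
    refine Or.inr ?_
    by_cases hm : m i = r i
    · rw [hm] at hmi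
      exact hR.trans hmi (hri p hp)
    have hrp := P.tame i hm p hp
    have key : R (d ⊔ r i) ((d ⊔ r i) ⊓ p.2) := by
      refine collapse hΘ hSR hsim (c := c) (f := p.1 i) (le_inf le_sup_right hrp)
        inf_le_left hcp ?_
      have hyr : r i ≤ (d ⊔ r i) ⊓ p.2 := le_inf le_sup_right hrp
      rw [gd_sup_base i c]
      refine hS.trans (hS.inf (hS.of_le le_rfl) ho) (hS.of_le ?_)
      have hb0 : ∀ b, bs r F b ≤ gd r i c d ⊓ w' →
          bs r F b ≤ gd r i (p.1 i) (d ⊔ r i) ⊔ gd r i ⊤ ((d ⊔ r i) ⊓ p.2) := by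
        intro b hb
        rw [le_inf_iff, bs_le_gd_iff, bs_le, h2] at hb
        rw [bs_le_E hyr inf_le_left]
        refine Or.inl (le_inf ?_ (hb.2 p hp))
        rcases hb.1 with h | h
        · exact h.trans le_sup_right
        · exact h.2
      rw [W.le_iff]
      refine ⟨hb0, fun j e b hb => ?_⟩
      by_cases htr : e = ⊥ ∨ b ≤ r j
      · rw [gd_eq_bs htr] at hb ⊢
        exact hb0 _ hb
      · push Not at htr
        rw [le_inf_iff] at hb
        obtain rfl := gd_le_gd_ne hb.1 htr.1 htr.2
        have h3 := gd_le_gd.1 hb.1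
        have h4 := hb.2
        rw [gd_le, h2] at h4
        have h5 := ((h3.resolve_left htr.1).resolve_left htr.2).2
        rw [gd_le_E hyr inf_le_left]
        exact Or.inr ⟨h5, (h4.2 p hp).2.imp id fun h => le_inf h5 h⟩
    exact hR.trans (hR.of_le le_sup_left) (hR.trans key (hR.of_le inf_le_right))

end Unique2

/-- Extending a lattice by simple gadgets preserves its congruences. -/
theorem cpEmb_bs (hsim : ∀ i, Simple (F i))
    (hD : ∀ i, ∃ c f : F i, c ≠ ⊥ ∧ f ≠ ⊥ ∧ c ⊓ f = ⊥) : CPEmb B (W r F) (bs r F) := by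
  refine ⟨fun _ _ h => bs_inj.1 h, bs_sup, bs_inf, fun θ hθ => ?_⟩
  have hR := cpre_cle hθ
  have hsub : ∀ A C : Set (Obj B F), cl r (cle θ) A = cl r (cle θ) C ↔
      A ⊆ cl r (cle θ) C ∧ C ⊆ cl r (cle θ) A := fun A C =>
    ⟨fun h => ⟨h ▸ subset_cl r _ _, h ▸ subset_cl r _ _⟩,
      fun h => Set.Subset.antisymm (cl_subset r h.1) (cl_subset r h.2)⟩
  refine ⟨fun w w' => cl r (cle θ) w.1 = cl r (cle θ) w'.1, ⟨latCon_ext hR, fun x y => ?_⟩, ?_⟩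
  · dsimp only
    rw [hsub, mem_cl_bs hR, mem_cl_bs hR, con_iff_cle hθ]
  · rintro Θ ⟨hΘ, hΘθ⟩
    have hSR : ∀ a b, cle Θ (bs r F a) (bs r F b) ↔ cle θ a b := fun a b => by
      rw [cle, ← bs_sup, hΘθ, cle]
    funext w w'
    apply propext
    rw [con_iff_cle hΘ, hsub]
    exact and_congr ⟨subset_of_S hΘ hSR hR hsim hD, S_of_subset (cpre_cle hΘ) hSR hR hD⟩
      ⟨subset_of_S hΘ hSR hR hsim hD, S_of_subset (cpre_cle hΘ) hSR hR hD⟩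

theorem CPEmb.comp {L M N : Type u} [Lattice L] [Lattice M] [Lattice N] {f : L → M} {g : M → N}
    (hf : CPEmb L M f) (hg : CPEmb M N g) : CPEmb L N (g ∘ f) := by
  obtain ⟨f1, f2, f3, f4⟩ := hf
  obtain ⟨g1, g2, g3, g4⟩ := hg
  refine ⟨g1.comp f1, fun x y => by simp [f2, g2], fun x y => by simp [f3, g3], fun θ hθ => ?_⟩
  obtain ⟨Φ, ⟨hΦ1, hΦ2⟩, hΦ3⟩ := f4 θ hθ
  obtain ⟨Ψ, ⟨hΨ1, hΨ2⟩, hΨ3⟩ := g4 Φ hΦ1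
  refine ⟨Ψ, ⟨hΨ1, fun x y => (hΨ2 _ _).trans (hΦ2 x y)⟩, ?_⟩
  rintro Ω ⟨hΩ1, hΩ2⟩
  apply hΨ3
  refine ⟨hΩ1, ?_⟩
  have : (fun x y => Ω (g x) (g y)) = Φ := by
    apply hΦ3
    refine ⟨⟨⟨fun _ => hΩ1.1.1 _, fun h => hΩ1.1.2 h, fun h h' => hΩ1.1.3 h h'⟩,
      fun a b c d h1 h2 => ?_⟩, hΩ2⟩
    dsimp only
    rw [g2, g2, g3, g3]
    exact hΩ1.2 _ _ _ _ h1 h2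
  intro x y
  rw [← this]

end Congruence

end SIT

/-! ### The double comb -/

namespace SIT

section CombSection

/-- Two antitone combs with common roof `s`. The teeth `t i` and spine elements `del i` are indexed
by a linear order whose elements are coloured by the two combs. -/
inductive Comb {I : Type u} (col : I → Bool) : Type u
  | bot : Comb col
  | top : Comb col
  | s : Comb col
  | del (i : I) : Comb col
  | t (i : I) : Comb col

namespace Comb

variable {I : Type u} [LinearOrder I] {col : I → Bool}

/-- The order of a double comb. -/
def le : Comb col → Comb col → Prop
  | bot, _ => True
  | _, top => True
  | s, s => True
  | del _, s => True
  | del i, del j => col i = col j ∧ j ≤ i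
  | del i, t j => col i = col j ∧ j ≤ i
  | t i, t j => i = j
  | _, _ => False

/-- The join of a double comb. -/
def sup : Comb col → Comb col → Comb col
  | bot, x => x
  | x, bot => x
  | top, _ => top
  | _, top => top
  | s, s => s
  | s, del _ => s
  | del _, s => s
  | s, t _ => top
  | t _, s => top
  | del i, del j => if col i = col j then del (min i j) else s
  | del i, t j => if col i = col j ∧ j ≤ i then t j else top
  | t j, del i => if col i = col j ∧ j ≤ i then t j else top
  | t i, t j => if i = j then t i else top

/-- The meet of a double comb. -/
def inf : Comb col → Comb col → Comb col
  | bot, _ => bot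
  | _, bot => bot
  | top, x => x
  | x, top => x
  | s, s => s
  | s, del i => del i
  | del i, s => del i
  | s, t i => del i
  | t i, s => del i
  | del i, del j => if col i = col j then del (max i j) else bot
  | del i, t j => if col i = col j then del (max i j) else bot
  | t i, del j => if col i = col j then del (max i j) else bot
  | t i, t j => if i = j then t i else if col i = col j then del (max i j) else bot

instance : Lattice (Comb col) where
  le := le
  le_refl x := by cases x <;> simp [le]
  le_trans x y z := by cases x <;> cases y <;> cases z <;> simp [le] <;> grind
  le_antisymm x y := by cases x <;> cases y <;> simp [le] <;> grind
  sup := sup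
  le_sup_left x y := by cases x <;> cases y <;> simp only [sup] <;> grind [le]
  le_sup_right x y := by cases x <;> cases y <;> simp only [sup] <;> grind [le]
  sup_le x y z := by cases x <;> cases y <;> cases z <;> simp only [sup] <;> grind [le]
  inf := inf
  inf_le_left x y := by cases x <;> cases y <;> simp only [inf] <;> grind [le]
  inf_le_right x y := by cases x <;> cases y <;> simp only [inf] <;> grind [le]
  le_inf x y z := by cases x <;> cases y <;> cases z <;> simp only [inf] <;> grind [le]

instance : BoundedOrder (Comb col) where
  top := top
  le_top x := by cases x <;> trivial
  bot := bot
  bot_le x := by cases x <;> trivial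

instance : Nontrivial (Comb col) := ⟨⟨bot, top, by simp⟩⟩

theorem bot_def : (⊥ : Comb col) = bot := rfl
theorem top_def : (⊤ : Comb col) = top := rfl
theorem le_def (x y : Comb col) : x ≤ y ↔ le x y := Iff.rfl
theorem sup_def (x y : Comb col) : x ⊔ y = sup x y := rfl
theorem inf_def (x y : Comb col) : x ⊓ y = inf x y := rfl


end Comb

open Cardinal

/-- The properties of the index set of a double comb: both colours occur, no index is the last one
of its colour, and the final segments of colour `a` all have the infinite cardinality `κ a`. -/
structure CombHyp {I : Type u} [LinearOrder I] (col : I → Bool) (κ : Bool → Cardinal.{u}) :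
    Prop where
  ne : ∀ a, ∃ i, col i = a
  nomax : ∀ i, ∃ j, i < j ∧ col j = col i
  card : ∀ i, #{j // col j = col i ∧ i ≤ j} = κ (col i)
  aleph : ∀ a, ℵ₀ ≤ κ a

/-- The members of the comb of colour `a`. -/
def CombC {I : Type u} (col : I → Bool) (a : Bool) : Set (Comb col) :=
  {x | ∃ i, col i = a ∧ (x = .del i ∨ x = .t i)}

namespace Comb

variable {I : Type u} [LinearOrder I] {col : I → Bool} {κ : Bool → Cardinal.{u}}

theorem C_ne_bot {a : Bool} {x : Comb col} (h : x ∈ CombC col a) : x ≠ ⊥ := by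
  obtain ⟨i, -, rfl | rfl⟩ := h <;> simp [bot_def]

theorem C_ne_top {a : Bool} {x : Comb col} (h : x ∈ CombC col a) : x ≠ ⊤ := by
  obtain ⟨i, -, rfl | rfl⟩ := h <;> simp [top_def]

theorem C_down {a : Bool} {x y : Comb col} (h : x ∈ CombC col a) (hy : y ≤ x) (hb : y ≠ ⊥) :
    y ∈ CombC col a := by
  obtain ⟨i, hi, rfl | rfl⟩ := h <;> cases y <;> simp [le_def, le, bot_def, CombC] at * <;> grind

theorem exists_C (H : CombHyp col κ) {x : Comb col} (hx : x ≠ ⊥) :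
    ∃ a, ∃ h ∈ CombC col a, h ≤ x := by
  obtain ⟨i, hi⟩ := H.ne true
  cases x with
  | bot => exact absurd rfl hx
  | top => exact ⟨true, del i, ⟨i, hi, Or.inl rfl⟩, le_top⟩
  | s => exact ⟨true, del i, ⟨i, hi, Or.inl rfl⟩, trivial⟩
  | del j => exact ⟨col j, del j, ⟨j, rfl, Or.inl rfl⟩, le_rfl⟩
  | t j => exact ⟨col j, t j, ⟨j, rfl, Or.inr rfl⟩, le_rfl⟩

/-- Up to finitely many elements, the lower set of a comb element is a final segment of the spine of
its colour. -/
theorem card_C (H : CombHyp col κ) {a : Bool} {x : Comb col} (h : x ∈ CombC col a) :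
    #(Set.Iic x) = κ a := by
  obtain ⟨i, rfl, hx⟩ := h
  have hx1 : del i ≤ x := by rcases hx with rfl | rfl <;> simp [le_def, le]
  have hx2 : x ≤ t i := by rcases hx with rfl | rfl <;> simp [le_def, le]
  apply le_antisymm
  · have h1 : #(Set.Iic x) ≤ #(Option (Option {j // col j = col i ∧ i ≤ j})) := by
      refine Cardinal.mk_le_of_injective (f := fun y => match y with
        | ⟨.del j, hj⟩ => some (some ⟨j, by
            have := (le_def _ _).1 (le_trans hj hx2); simpa [le] using this⟩)
        | ⟨.t j, hj⟩ => some none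
        | _ => none) ?_
      rintro ⟨y, hy⟩ ⟨z, hz⟩ hyz
      have hy' := (le_def _ _).1 (le_trans hy hx2)
      have hz' := (le_def _ _).1 (le_trans hz hx2)
      cases y <;> cases z <;> simp [le] at * <;> grind
    rw [mk_option, mk_option, H.card, add_assoc] at h1
    rwa [add_eq_left (H.aleph _) ((add_lt_aleph0 one_lt_aleph0 one_lt_aleph0).le.trans
      (H.aleph _))] at h1
  · rw [← H.card]
    refine Cardinal.mk_le_of_injective (f := fun j => ⟨del j.1, le_trans ?_ hx1⟩) ?_
    · rw [le_def, le]; exact j.2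
    · intro j k hjk
      simpa [Subtype.ext_iff] using hjk

theorem disj (H : CombHyp col κ) : ∃ i j, (t i : Comb col) ⊓ t j = ⊥ ∧ (t i : Comb col) ⊔ t j = ⊤ ∧
    col i = true ∧ col j = false := by
  obtain ⟨i, hi⟩ := H.ne true
  obtain ⟨j, hj⟩ := H.ne false
  refine ⟨i, j, ?_, ?_, hi, hj⟩ <;> simp [sup_def, inf_def, sup, inf, bot_def, top_def] <;> grind

theorem disj' (H : CombHyp col κ) : ∃ c f : Comb col, c ≠ ⊥ ∧ f ≠ ⊥ ∧ c ⊓ f = ⊥ := by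
  obtain ⟨i, j, h, -⟩ := disj H
  exact ⟨t i, t j, by simp [bot_def], by simp [bot_def], h⟩

/-- Collapsing a spine element to `⊥` identifies the teeth of the other colour with `⊤`, hence
(meeting two of them) collapses the teeth of the given colour to `⊥`, and two of these join to `⊤`.
Every nontrivial congruence collapses a spine element. -/
theorem simple (H : CombHyp col κ) : Simple (Comb col) := by
  intro θ hθ a b hab h
  rw [con_iff_cle hθ]
  have hS := cpre_cle hθ
  refine ⟨hS.of_le bot_le, ?_⟩
  set S := cle θ
  have hop : ∀ i, ∃ k, col k ≠ col i := by
    intro i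
    obtain ⟨k, hk⟩ := H.ne (!col i)
    exact ⟨k, by simp [hk]⟩
  have infR : ∀ {x y} z, S x y → S (x ⊓ z) (y ⊓ z) := fun z h =>
    hS.inf (hS.trans (hS.of_le inf_le_left) h) (hS.of_le inf_le_right)
  have supR : ∀ {x y} z, S x y → S (x ⊔ z) (y ⊔ z) := fun z h =>
    hS.sup (hS.trans h (hS.of_le le_sup_left)) (hS.of_le le_sup_right)
  -- a spine element below `⊥`: the opposite teeth become equivalent to `⊤`
  have c1 : ∀ i, S (del i) ⊥ → S ⊤ ⊥ := by
    intro i hi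
    obtain ⟨k, hk⟩ := hop i
    obtain ⟨i', hi', hi'c⟩ := H.nomax i
    obtain ⟨k', hk', hk'c⟩ := H.nomax k
    have h1 : ∀ k, col k ≠ col i → S ⊤ (t k) := by
      intro k hk
      have := supR (t k) hi
      simpa [sup_def, sup, bot_def, top_def, hk.symm] using this
    have h2 : S ⊤ (del k') := by
      have := hS.inf (h1 k hk) (h1 k' (by rw [hk'c]; exact hk))
      simpa [inf_def, inf, hk'.ne, hk'c, hk'.le] using this
    have h3 : ∀ j, col j = col i → S (t j) ⊥ := by
      intro j hj
      have := infR (t j) h2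
      simpa [inf_def, inf, bot_def, top_def, hk'c, hk, hj] using this
    have := hS.sup (h3 i rfl) (h3 i' hi'c)
    simpa [sup_def, sup, bot_def, top_def, hi'.ne] using this
  have c2 : ∀ j, S ⊤ (t j) → S ⊤ ⊥ := by
    intro j hj
    obtain ⟨k, hk⟩ := hop j
    apply c1 k
    have := infR (del k) hj
    simpa [inf_def, inf, bot_def, top_def, hk.symm] using this
  have c3 : S ⊤ s → S ⊤ ⊥ := by
    intro h
    obtain ⟨i, -⟩ := H.ne true
    obtain ⟨j, hj, hjc⟩ := H.nomax i
    have h1 := supR (t i) (infR (t j) h)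
    refine c2 i ?_
    simpa [sup_def, sup, inf_def, inf, bot_def, top_def, hj.ne', hj.le, hjc] using h1
  have main : ∀ p q, ¬ p ≤ q → S p q → S ⊤ ⊥ := by
    intro p q hpq hS1
    cases p with
    | bot => exact absurd bot_le hpq
    | top =>
      cases q with
      | bot => exact hS1
      | top => exact absurd le_rfl hpq
      | s => exact c3 hS1
      | del j => exact c2 j (hS.trans hS1 (hS.of_le (by simp [le_def, le])))
      | t j => exact c2 j hS1
    | s =>
      obtain ⟨i, hi⟩ := H.ne true
      have h1 := infR (del i) hS1
      cases q with
      | bot => exact c1 i (by simpa [inf_def, inf, bot_def] using h1)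
      | top => exact absurd le_top hpq
      | s => exact absurd le_rfl hpq
      | del j =>
        obtain ⟨k, hk⟩ := hop j
        have h1 := infR (del k) hS1
        exact c1 k (by simpa [inf_def, inf, bot_def, hk.symm] using h1)
      | t j =>
        obtain ⟨k, hk⟩ := hop j
        have h1 := infR (del k) hS1
        exact c1 k (by simpa [inf_def, inf, bot_def, hk.symm] using h1)
    | del i =>
      have key : ∀ j, ¬ (col i = col j ∧ j ≤ i) → S (del i) (t j) → S ⊤ ⊥ := by
        intro j hj h
        by_cases hc : col i = col j
        · apply c2 j
          have := supR (t j) h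
          simpa [sup_def, sup, bot_def, top_def, hc, show ¬ j ≤ i from fun h => hj ⟨hc, h⟩]
            using this
        · apply c1 i
          have := infR (del i) h
          simpa [inf_def, inf, bot_def, hc, Ne.symm hc] using this
      cases q with
      | bot => exact c1 i hS1
      | top => exact absurd le_top hpq
      | s => exact absurd trivial hpq
      | del j => exact key j hpq (hS.trans hS1 (hS.of_le (by simp [le_def, le])))
      | t j => exact key j hpq hS1
    | t i =>
      obtain ⟨k, hk⟩ := hop i
      have h1 : S (t i) s → S ⊤ ⊥ := by
        intro h
        have := supR s h
        exact c3 (by simpa [sup_def, sup, top_def] using this)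
      cases q with
      | bot => exact h1 (hS.trans hS1 (hS.of_le bot_le))
      | top => exact absurd le_top hpq
      | s => exact h1 hS1
      | del j => exact h1 (hS.trans hS1 (hS.of_le trivial))
      | t j =>
        have := hS.inf (hS.of_le le_rfl) hS1
        apply h1
        refine hS.trans this (hS.of_le ?_)
        have hij : i ≠ j := hpq
        by_cases hc : col i = col j <;> simp [inf_def, inf, hij, hc, le_def, le]
  have h' := (con_iff_cle hθ a b).1 h
  by_cases hle : a ≤ b
  · exact main b a (fun h => hab (le_antisymm hle h)) h'.2
  · exact main a b hle h'.1

/-- The two combs are preserved because their lower sets differ in cardinality, and within a comb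
all elements are fixed by well-founded induction on the index. -/
theorem rigid [WellFoundedLT I] (H : CombHyp col κ) (hκ : κ true ≠ κ false)
    (φ : Comb col ≃o Comb col) (x : Comb col) : φ x = x := by
  have hinv : ∀ (φ : Comb col ≃o Comb col) a x, x ∈ CombC col a → φ x ∈ CombC col a := by
    intro φ a x hx
    have hne : φ x ≠ ⊥ := by
      rw [Ne, ← φ.map_bot, φ.injective.eq_iff]
      exact C_ne_bot hx
    have hcard : ∀ b, ∀ y ∈ CombC col b, y ≤ φ x → b = a := by
      intro b y hy hyx
      have h1 : φ.symm y ∈ CombC col a := C_down hx ((φ.symm_apply_le).2 hyx) (by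
        rw [Ne, ← φ.symm.map_bot, φ.symm.injective.eq_iff]
        exact C_ne_bot hy)
      have h2 : #(Set.Iic y) = #(Set.Iic (φ.symm y)) :=
        Cardinal.mk_congr ⟨fun z => ⟨φ.symm z.1, φ.symm.monotone z.2⟩,
          fun z => ⟨φ z.1, (φ.le_symm_apply).1 z.2⟩, fun z => by simp, fun z => by simp⟩
      rw [card_C H hy, card_C H h1] at h2
      cases a <;> cases b <;> simp_all
    obtain ⟨i, hi⟩ := H.ne (!a)
    have hi' : (del i : Comb col) ∈ CombC col (!a) := ⟨i, hi, Or.inl rfl⟩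
    cases hφ : φ x with
    | bot => exact absurd hφ hne
    | top =>
      have := hcard _ _ hi' (hφ ▸ le_top)
      simp at this
    | s =>
      have := hcard _ _ hi' (by rw [hφ]; trivial)
      simp at this
    | del j =>
      have := hcard (col j) (del j) ⟨j, rfl, Or.inl rfl⟩ hφ.ge
      exact ⟨j, this, Or.inl rfl⟩
    | t j =>
      have := hcard (col j) (t j) ⟨j, rfl, Or.inr rfl⟩ hφ.ge
      exact ⟨j, this, Or.inr rfl⟩
  have hs : ∀ φ : Comb col ≃o Comb col, φ s = s := by
    intro φ
    have h1 : ∀ a, ∀ y ∈ CombC col a, φ s ≠ y := by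
      rintro a y hy h
      have := hinv φ.symm a y hy
      rw [← h, φ.symm_apply_apply] at this
      obtain ⟨i, -, h | h⟩ := this <;> simp at h
    cases hφ : φ s with
    | bot =>
      have := φ.injective (hφ.trans φ.map_bot.symm)
      simp [bot_def] at this
    | top =>
      have := φ.injective (hφ.trans φ.map_top.symm)
      simp [top_def] at this
    | s => rfl
    | del j => exact absurd hφ (h1 (col j) _ ⟨j, rfl, Or.inl rfl⟩)
    | t j => exact absurd hφ (h1 (col j) _ ⟨j, rfl, Or.inr rfl⟩)
  have hd0 : ∀ (φ : Comb col ≃o Comb col) i, ∃ j, φ (del i) = del j := by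
    intro φ i
    obtain ⟨j, -, h | h⟩ := hinv φ _ (del i) ⟨i, rfl, Or.inl rfl⟩
    · exact ⟨j, h⟩
    · have h1 : φ (del i) ≤ φ s := φ.monotone trivial
      rw [hs, h] at h1
      exact h1.elim
  have hd : ∀ i, ∀ φ : Comb col ≃o Comb col, φ (del i) = del i := by
    intro i
    induction i using WellFoundedLT.induction with
    | ind i ih =>
      have h1 : ∀ φ : Comb col ≃o Comb col, φ (del i) ≤ del i := by
        intro φ
        obtain ⟨j, hj⟩ := hd0 φ i
        obtain ⟨k, hk, hk'⟩ := hinv φ _ (del i) ⟨i, rfl, Or.inl rfl⟩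
        have hkj : j = k := by simpa [hj] using hk'
        subst hkj
        rw [hj]
        refine ⟨hk, ?_⟩
        by_contra hlt
        push Not at hlt
        have := φ.injective (hj.trans (ih j hlt φ).symm)
        simp only [del.injEq] at this
        exact hlt.ne' this
      intro φ
      refine le_antisymm (h1 φ) ?_
      have := φ.monotone (h1 φ.symm)
      rwa [φ.apply_symm_apply] at this
  cases x with
  | bot => exact φ.map_bot
  | top => exact φ.map_top
  | s => exact hs φ
  | del i => exact hd i φ
  | t i =>
    have h1 : φ (t i) ⊓ s = del i := by
      have : φ (t i ⊓ s) = φ (t i) ⊓ φ s := map_inf φ _ _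
      rw [hs] at this
      rw [← this]
      exact hd i φ
    have h2 : ¬ φ (t i) ≤ s := by
      rw [← hs φ, φ.le_iff_le]
      exact id
    cases hφ : φ (t i) with
    | bot => rw [hφ] at h2; exact absurd trivial h2
    | top => rw [hφ] at h1; simp [inf_def, inf] at h1
    | s => rw [hφ] at h2; exact absurd trivial h2
    | del j => rw [hφ] at h2; exact absurd trivial h2
    | t j =>
      rw [hφ] at h1
      simp only [inf_def, inf, del.injEq] at h1
      rw [h1]

/-- The top is the join of two smaller elements that are not disjoint; by `not_top_char` this
distinguishes it from the other elements. -/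
theorem top_char (H : CombHyp col κ) :
    ∃ u v : Comb col, u ≠ ⊤ ∧ v ≠ ⊤ ∧ u ⊔ v = ⊤ ∧ u ⊓ v ≠ ⊥ := by
  obtain ⟨i, -⟩ := H.ne true
  obtain ⟨j, hj, hjc⟩ := H.nomax i
  refine ⟨t i, t j, ?_⟩
  simp [sup_def, inf_def, sup, inf, hj.ne, hjc, top_def, bot_def]

/-- No element other than the top is the join of two smaller elements that are not disjoint. -/
theorem not_top_char {u v z : Comb col} (hz : z ≠ ⊤) (hu : u < z) (hv : v < z) (h : u ⊔ v = z) :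
    u ⊓ v = ⊥ := by
  have hu' := hu.ne
  have hv' := hv.ne
  clear hu hv
  subst h
  revert hz hu' hv'
  cases u <;> cases v <;> simp [sup_def, inf_def, sup, inf, top_def, bot_def] <;> grind

end Comb
end CombSection

end SIT

/-! ### Hiding a bounded lattice in a simple one -/

namespace SIT

section SKSection

/-- The lattice obtained from a bounded lattice `K` by inserting, for every `b ≠ ⊥`, a copy of
`G` without its bounds into the interval `[⊥, b]`. The element `x` of `K` is `(x, ⊤)`, and the
copy of `f` below `b` is `(b, f)`. -/
@[ext] structure SK (K G : Type u) [Lattice K] [BoundedOrder K] [Lattice G] [BoundedOrder G] :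
    Type u where
  /-- the element of `K` -/
  fst : K
  /-- the element of the inserted copy -/
  snd : G
  snd_ne : snd ≠ ⊥
  bot_imp : fst = ⊥ → snd = ⊤

namespace SK

variable {K G : Type u} [Lattice K] [BoundedOrder K] [Lattice G] [BoundedOrder G]
  [Nontrivial K] [Nontrivial G]

/-- The embedding of `K`. -/
def el (x : K) : SK K G := ⟨x, ⊤, top_ne_bot, fun _ => rfl⟩

open Classical in
/-- The copy of `G` below `b`. -/
noncomputable def pt (b : K) (f : G) : SK K G :=
  if h : f = ⊥ ∨ b = ⊥ then el ⊥ else ⟨b, f, fun h' => h (Or.inl h'), fun h' => absurd (Or.inr h') h⟩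

instance : PartialOrder (SK K G) where
  le p q := p.1 = ⊥ ∨ (q.2 = ⊤ ∧ p.1 ≤ q.1) ∨ (p.1 = q.1 ∧ p.2 ≤ q.2)
  le_refl p := Or.inr (Or.inr ⟨rfl, le_rfl⟩)
  le_trans p q s h1 h2 := by
    rcases h1 with h1 | h1 | h1
    · exact Or.inl h1
    · rcases h2 with h2 | h2 | h2
      · exact Or.inl (le_bot_iff.1 (h2 ▸ h1.2))
      · exact Or.inr (Or.inl ⟨h2.1, h1.2.trans h2.2⟩)
      · exact Or.inr (Or.inl ⟨top_le_iff.1 (h1.1 ▸ h2.2), h2.1 ▸ h1.2⟩)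
    · rcases h2 with h2 | h2 | h2
      · exact Or.inl (h1.1.trans h2)
      · exact Or.inr (Or.inl ⟨h2.1, h1.1 ▸ h2.2⟩)
      · exact Or.inr (Or.inr ⟨h1.1.trans h2.1, h1.2.trans h2.2⟩)
  le_antisymm p q h1 h2 := by
    have hp := p.bot_imp
    have hq := q.bot_imp
    have key : p.1 = q.1 := by
      rcases h1 with h1 | h1 | h1
      · rcases h2 with h2 | h2 | h2
        · rw [h1, h2]
        · rw [h1]; rw [h1] at h2; exact (le_bot_iff.1 h2.2).symm
        · exact h2.1.symm
      · rcases h2 with h2 | h2 | h2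
        · rw [h2]; rw [h2] at h1; exact le_bot_iff.1 h1.2
        · exact le_antisymm h1.2 h2.2
        · exact h2.1.symm
      · exact h1.1
    have key2 : p.2 = q.2 := by
      by_cases hb : p.1 = ⊥
      · rw [hp hb, hq (key ▸ hb)]
      · rcases h1 with h1 | h1 | h1
        · exact absurd h1 hb
        · rcases h2 with h2 | h2 | h2
          · exact absurd (key.trans h2) hb
          · rw [h1.1, h2.1]
          · exact le_antisymm (h1.1 ▸ le_top) h2.2
        · rcases h2 with h2 | h2 | h2
          · exact absurd (key.trans h2) hb
          · exact le_antisymm h1.2 (h2.1 ▸ le_top)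
          · exact le_antisymm h1.2 h2.2
    exact SK.ext key key2

theorem le_def (p q : SK K G) :
    p ≤ q ↔ p.1 = ⊥ ∨ (q.2 = ⊤ ∧ p.1 ≤ q.1) ∨ (p.1 = q.1 ∧ p.2 ≤ q.2) := Iff.rfl

open Classical in
/-- The join. -/
noncomputable def sup (p q : SK K G) : SK K G :=
  if p.1 = ⊥ then q else if q.1 = ⊥ then p else
    if p.1 = q.1 then pt p.1 (p.2 ⊔ q.2) else el (p.1 ⊔ q.1)

open Classical in
/-- The meet. -/
noncomputable def inf (p q : SK K G) : SK K G :=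
  if p ≤ q then p else if q ≤ p then q else
    if p.1 = q.1 then pt p.1 (p.2 ⊓ q.2) else
      if p.2 = ⊤ ∧ q.2 = ⊤ then el (p.1 ⊓ q.1) else el ⊥

theorem el_bot_le (p : SK K G) : el ⊥ ≤ p := Or.inl rfl

theorem pt_fst {b : K} {f : G} (hb : b ≠ ⊥) (hf : f ≠ ⊥) : (pt b f : SK K G).1 = b := by
  simp [pt, hb, hf]

theorem pt_snd {b : K} {f : G} (hb : b ≠ ⊥) (hf : f ≠ ⊥) : (pt b f : SK K G).2 = f := by
  simp [pt, hb, hf]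

theorem pt_le_iff {b : K} {f : G} (hb : b ≠ ⊥) (p : SK K G) :
    pt b f ≤ p ↔ f = ⊥ ∨ (p.2 = ⊤ ∧ b ≤ p.1) ∨ (b = p.1 ∧ f ≤ p.2) := by
  by_cases hf : f = ⊥
  · simp [pt, hf, el_bot_le]
  · rw [le_def, pt_fst hb hf, pt_snd hb hf]
    simp [hb, hf]

noncomputable instance : Lattice (SK K G) where
  sup := sup
  le_sup_left p q := by
    have hp := p.snd_ne
    simp only [sup]
    split_ifs with h1 h2 h3
    · exact Or.inl h1
    · exact le_rfl
    · have hne : p.2 ⊔ q.2 ≠ ⊥ := fun h => hp (sup_eq_bot_iff.1 h).1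
      refine Or.inr (Or.inr ?_)
      rw [pt_fst h1 hne, pt_snd h1 hne]
      exact ⟨rfl, le_sup_left⟩
    · exact Or.inr (Or.inl ⟨rfl, le_sup_left⟩)
  le_sup_right p q := by
    have hp := p.snd_ne
    simp only [sup]
    split_ifs with h1 h2 h3
    · exact le_rfl
    · exact Or.inl h2
    · have hne : p.2 ⊔ q.2 ≠ ⊥ := fun h => hp (sup_eq_bot_iff.1 h).1
      refine Or.inr (Or.inr ?_)
      rw [pt_fst h1 hne, pt_snd h1 hne]
      exact ⟨h3.symm, le_sup_right⟩
    · exact Or.inr (Or.inl ⟨rfl, le_sup_right⟩)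
  sup_le p q s h1 h2 := by
    simp only [sup]
    split_ifs with h3 h4 h5
    · exact h2
    · exact h1
    · rw [pt_le_iff h3]
      rw [le_def] at h1 h2
      have := h1.resolve_left h3
      have := h2.resolve_left h4
      right
      by_cases hs : s.2 = ⊤
      · refine Or.inl ⟨hs, ?_⟩
        rcases h1.resolve_left h3 with h | h
        exacts [h.2, h.1.le]
      · refine Or.inr ?_
        simp only [hs, false_and, false_or] at h1 h2
        exact ⟨(h1.resolve_left h3).1, sup_le (h1.resolve_left h3).2 (h2.resolve_left h4).2⟩
    · rw [le_def] at h1 h2 ⊢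
      have h1 := h1.resolve_left h3
      have h2 := h2.resolve_left h4
      by_cases hs : s.2 = ⊤
      · refine Or.inr (Or.inl ⟨hs, ?_⟩)
        refine sup_le ?_ ?_
        · rcases h1 with h | h
          exacts [h.2, h.1.le]
        · rcases h2 with h | h
          exacts [h.2, h.1.le]
      · simp only [hs, false_and, false_or] at h1 h2
        exact absurd (h1.1.trans h2.1.symm) h5
  inf := inf
  inf_le_left p q := by
    simp only [inf]
    split_ifs with h1 h2 h3 h4
    · exact le_rfl
    · exact h2
    · have hb : p.1 ≠ ⊥ := fun h => h1 (Or.inl h)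
      rw [pt_le_iff hb]
      exact Or.inr (Or.inr ⟨rfl, inf_le_left⟩)
    · exact Or.inr (Or.inl ⟨h4.1, inf_le_left⟩)
    · exact el_bot_le _
  inf_le_right p q := by
    simp only [inf]
    split_ifs with h1 h2 h3 h4
    · exact h1
    · exact le_rfl
    · have hb : p.1 ≠ ⊥ := fun h => h1 (Or.inl h)
      rw [pt_le_iff hb]
      exact Or.inr (Or.inr ⟨h3, inf_le_right⟩)
    · exact Or.inr (Or.inl ⟨h4.2, inf_le_right⟩)
    · exact el_bot_le _
  le_inf s p q h1 h2 := by
    by_cases hs : s.1 = ⊥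
    · exact Or.inl hs
    simp only [inf]
    split_ifs with h3 h4 h5 h6
    · exact h1
    · exact h2
    · have hb : p.1 ≠ ⊥ := fun h => h3 (Or.inl h)
      -- neither component is `⊤`, otherwise `p` and `q` are comparable
      have hp : p.2 ≠ ⊤ := fun h => h4 (Or.inr (Or.inl ⟨h, h5.symm.le⟩))
      have hq : q.2 ≠ ⊤ := fun h => h3 (Or.inr (Or.inl ⟨h, h5.le⟩))
      rw [le_def] at h1 h2
      simp only [hs, hp, hq, false_and, false_or] at h1 h2
      have hne : p.2 ⊓ q.2 ≠ ⊥ := fun h => s.snd_ne (le_bot_iff.1 (h ▸ le_inf h1.2 h2.2))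
      refine Or.inr (Or.inr ?_)
      rw [pt_fst hb hne, pt_snd hb hne]
      exact ⟨h1.1, le_inf h1.2 h2.2⟩
    · rw [le_def] at h1 h2 ⊢
      refine Or.inr (Or.inl ⟨rfl, le_inf ?_ ?_⟩)
      · rcases h1.resolve_left hs with h | h
        exacts [h.2, h.1.le]
      · rcases h2.resolve_left hs with h | h
        exacts [h.2, h.1.le]
    · rw [le_def] at h1 h2
      have h1 := h1.resolve_left hs
      have h2 := h2.resolve_left hs
      exfalso
      rcases h1 with h1 | h1
      · rcases h2 with h2 | h2
        · exact h6 ⟨h1.1, h2.1⟩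
        · exact h4 (Or.inr (Or.inl ⟨h1.1, h2.1 ▸ h1.2⟩))
      · rcases h2 with h2 | h2
        · exact h3 (Or.inr (Or.inl ⟨h2.1, h1.1 ▸ h2.2⟩))
        · exact h5 (h1.1.symm.trans h2.1)

noncomputable instance : BoundedOrder (SK K G) where
  top := el ⊤
  le_top _ := Or.inr (Or.inl ⟨rfl, le_top⟩)
  bot := el ⊥
  bot_le := el_bot_le

theorem bot_def : (⊥ : SK K G) = el ⊥ := rfl
theorem top_def : (⊤ : SK K G) = el ⊤ := rfl

instance : Nontrivial (SK K G) := ⟨⟨⊥, ⊤, fun h => bot_ne_top (congrArg SK.fst h)⟩⟩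

theorem el_le_el {x y : K} : (el x : SK K G) ≤ el y ↔ x ≤ y := by
  rw [le_def]
  simp only [el, true_and, le_rfl, and_true]
  constructor
  · rintro (h | h | h)
    exacts [h ▸ bot_le, h, h.le]
  · exact fun h => Or.inr (Or.inl h)

theorem el_inj {x y : K} : (el x : SK K G) = el y ↔ x = y := by
  rw [le_antisymm_iff, le_antisymm_iff, el_le_el, el_le_el]

theorem ext_iff_le {p q : SK K G} (h : ∀ s, s ≤ p ↔ s ≤ q) : p = q := eq_of_forall_le_iff h

theorem fst_eq_bot {p : SK K G} : p.1 = ⊥ ↔ p = ⊥ :=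
  ⟨fun h => SK.ext h (p.bot_imp h), fun h => by rw [h]; rfl⟩

theorem pt_self (p : SK K G) : pt p.1 p.2 = p := by
  by_cases h : p.1 = ⊥
  · simp only [pt, h, or_true, dite_true]
    rw [fst_eq_bot.1 h]; rfl
  · exact SK.ext (pt_fst h p.snd_ne) (pt_snd h p.snd_ne)

theorem pt_top (b : K) : pt b ⊤ = (el b : SK K G) := pt_self (el b : SK K G)

theorem pt_bot (b : K) : pt b ⊥ = (⊥ : SK K G) := by simp [pt, bot_def]

theorem pt_le_pt {b : K} (hb : b ≠ ⊥) {f g : G} : (pt b f : SK K G) ≤ pt b g ↔ f ≤ g := by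
  by_cases hg : g = ⊥
  · subst hg
    rw [pt_bot, le_bot_iff, le_bot_iff]
    constructor
    · intro h
      by_contra hf
      have := congrArg SK.fst h
      rw [pt_fst hb hf] at this
      exact hb this
    · rintro rfl; exact pt_bot b
  · rw [pt_le_iff hb, pt_fst hb hg, pt_snd hb hg]
    constructor
    · rintro (h | h | h)
      exacts [h ▸ bot_le, h.1 ▸ le_top, h.2]
    · exact fun h => Or.inr (Or.inr ⟨rfl, h⟩)

theorem le_pt {b : K} (hb : b ≠ ⊥) {g : G} {p : SK K G} (hg : g ≠ ⊤) (h : p ≤ pt b g) :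
    p = ⊥ ∨ (p.1 = b ∧ p.2 ≤ g) := by
  by_cases hg0 : g = ⊥
  · subst hg0
    rw [pt_bot, le_bot_iff] at h
    exact Or.inl h
  rw [le_def, pt_fst hb hg0, pt_snd hb hg0] at h
  rcases h with h | h | h
  · exact Or.inl (fst_eq_bot.1 h)
  · exact absurd h.1 hg
  · exact Or.inr h

theorem pt_inf {b : K} (hb : b ≠ ⊥) (f g : G) : (pt b f : SK K G) ⊓ pt b g = pt b (f ⊓ g) := by
  by_cases hf : f = ⊤
  · subst hf; rw [top_inf_eq]; exact inf_eq_right.2 ((pt_le_pt hb).2 le_top)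
  by_cases hg : g = ⊤
  · subst hg; rw [inf_top_eq]; exact inf_eq_left.2 ((pt_le_pt hb).2 le_top)
  refine le_antisymm ?_ (le_inf ((pt_le_pt hb).2 inf_le_left) ((pt_le_pt hb).2 inf_le_right))
  generalize hp : (pt b f : SK K G) ⊓ pt b g = p
  have h1 : p ≤ pt b f := hp ▸ inf_le_left
  have h2 : p ≤ pt b g := hp ▸ inf_le_right
  rcases le_pt hb hf h1 with h | h
  · exact h ▸ bot_le
  rcases le_pt hb hg h2 with h' | h'
  · exact h' ▸ bot_le
  · rw [← pt_self p, h.1, pt_le_pt hb]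
    exact le_inf h.2 h'.2

theorem pt_sup {b : K} (hb : b ≠ ⊥) (f g : G) : (pt b f : SK K G) ⊔ pt b g = pt b (f ⊔ g) := by
  by_cases hf : f = ⊥
  · subst hf; rw [pt_bot, bot_sup_eq, bot_sup_eq]
  by_cases hg : g = ⊥
  · subst hg; rw [pt_bot, sup_bot_eq, sup_bot_eq]
  change sup _ _ = _
  simp [sup, pt_fst hb hf, pt_fst hb hg, pt_snd hb hf, pt_snd hb hg, hb]

theorem el_sup (x y : K) : (el (x ⊔ y) : SK K G) = el x ⊔ el y := by
  apply eq_of_forall_ge_iff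
  intro p
  rw [sup_le_iff]
  constructor
  · exact fun h => ⟨(el_le_el.2 le_sup_left).trans h, (el_le_el.2 le_sup_right).trans h⟩
  · rintro ⟨h1, h2⟩
    rw [le_def] at h1 h2 ⊢
    simp only [el, top_le_iff] at h1 h2 ⊢
    by_cases hx : x = ⊥
    · subst hx; simpa using h2
    by_cases hy : y = ⊥
    · subst hy; simpa using h1
    have hp : p.2 = ⊤ := by tauto
    refine Or.inr (Or.inl ⟨hp, sup_le ?_ ?_⟩)
    · rcases h1.resolve_left hx with h | h
      exacts [h.2, h.1.le]
    · rcases h2.resolve_left hy with h | h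
      exacts [h.2, h.1.le]

theorem le_el {x : K} {p : SK K G} : p ≤ el x ↔ p.1 ≤ x := by
  rw [le_def]
  simp only [el, le_top, true_and, and_true]
  constructor
  · rintro (h | h | h)
    exacts [h ▸ bot_le, h, h.le]
  · exact fun h => Or.inr (Or.inl h)

theorem el_inf (x y : K) : (el (x ⊓ y) : SK K G) = el x ⊓ el y := by
  apply eq_of_forall_le_iff
  intro p
  rw [le_inf_iff, le_el, le_el, le_el, le_inf_iff]

/-- Simplicity is inherited from the inserted copies. -/
theorem simple (hG : Simple G) (hmid : ∃ f : G, f ≠ ⊥ ∧ f ≠ ⊤) : Simple (SK K G) := by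
  obtain ⟨f0, hf0, hf0'⟩ := hmid
  intro θ hθ a b hab h
  have hS := cpre_cle hθ
  rw [con_iff_cle hθ]
  refine ⟨hS.of_le bot_le, ?_⟩
  have copy : ∀ b : K, b ≠ ⊥ → ∀ f g : G, ¬ f ≤ g → cle θ (pt b f) (pt b g) → cle θ (el b) ⊥ := by
    intro b hb f g hfg h
    have hcon : LatCon G fun x y => θ (pt b x) (pt b y) := by
      refine ⟨⟨fun _ => hθ.1.1 _, fun h => hθ.1.2 h, fun h h' => hθ.1.3 h h'⟩,
        fun x y z w h1 h2 => ?_⟩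
      dsimp only
      rw [← pt_sup hb, ← pt_sup hb, ← pt_inf hb, ← pt_inf hb]
      exact hθ.2 _ _ _ _ h1 h2
    have h1 : θ (pt b (f ⊔ g)) (pt b g) := by
      rw [← pt_sup hb]; exact h
    have h2 := hG _ hcon _ _ (fun h => hfg (sup_eq_right.1 h)) h1
    have h3 := ((con_iff_cle hθ _ _).1 h2).2
    rwa [pt_top, pt_bot] at h3
  have main : ∀ p q : SK K G, ¬ p ≤ q → cle θ p q → ∃ b : K, b ≠ ⊥ ∧ cle θ (el b) ⊥ := by
    intro p q hpq h
    have hb : p.1 ≠ ⊥ := fun h => hpq (Or.inl h)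
    refine ⟨p.1, hb, ?_⟩
    have h1 : cle θ p (p ⊓ q) := hS.inf (hS.of_le le_rfl) h
    generalize hs : p ⊓ q = s at h1
    have hsp : s ≤ p := hs ▸ inf_le_left
    have hsp' : s ≠ p := fun h => hpq (inf_eq_left.1 (hs.trans h))
    rcases hsp with h2 | h2 | h2
    · have h3 : s = pt p.1 ⊥ := by rw [pt_bot]; exact fst_eq_bot.1 h2
      rw [h3] at h1
      nth_rewrite 1 [← pt_self p] at h1
      exact copy _ hb _ _ (fun h => p.snd_ne (le_bot_iff.1 h)) h1
    · by_cases hbs : p.1 ≤ s.1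
      · have h3 : s.1 = p.1 := le_antisymm h2.2 hbs
        have h4 : ¬ p.2 ≤ s.2 := by
          intro h
          rw [h2.1, top_le_iff] at h
          exact hsp' (SK.ext h3 (h.trans h2.1.symm))
        nth_rewrite 1 [← pt_self p] at h1
        rw [← pt_self s, h3] at h1
        exact copy _ hb _ _ h4 h1
      · refine copy _ hb f0 ⊥ (fun h => hf0 (le_bot_iff.1 h)) ?_
        rw [pt_bot]
        have h3 : cle θ (pt p.1 f0) (pt p.1 f0 ⊓ s) := by
          refine hS.inf (hS.of_le le_rfl) (hS.trans (hS.of_le ?_) h1)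
          rw [pt_le_iff hb]
          exact Or.inr (Or.inl ⟨h2.1, le_rfl⟩)
        have h4 : pt p.1 f0 ⊓ s = ⊥ := by
          have h5 : pt p.1 f0 ⊓ s ≤ s := inf_le_right
          rcases le_pt hb hf0' (inf_le_left : pt p.1 f0 ⊓ s ≤ _) with h | h
          · exact h
          · exfalso
            rw [le_def] at h5
            rcases h5 with h5 | h5 | h5
            · exact hb (h.1.symm.trans h5)
            · exact hbs (h.1 ▸ h5.2)
            · exact hbs (h.1 ▸ h5.1.le)
        rwa [h4] at h3
    · have h3 : ¬ p.2 ≤ s.2 := fun h => hsp' (SK.ext h2.1 (le_antisymm h2.2 h))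
      nth_rewrite 1 [← pt_self p] at h1
      rw [← pt_self s, h2.1] at h1
      exact copy _ hb _ _ h3 h1
  have h' := (con_iff_cle hθ a b).1 h
  have hex : ∃ b : K, b ≠ ⊥ ∧ cle θ (el b) ⊥ := by
    by_cases hle : a ≤ b
    · exact main b a (fun h => hab (le_antisymm hle h)) h'.2
    · exact main a b hle h'.1
  obtain ⟨b, hb, h⟩ := hex
  by_cases hbt : b = ⊤
  · rwa [hbt] at h
  -- the copy below `⊤` is disturbed as well
  refine copy ⊤ top_ne_bot ⊤ f0 (fun h => hf0' (top_le_iff.1 h)) ?_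
  have h1 : cle θ (el b ⊔ pt ⊤ f0) (pt ⊤ f0) :=
    hS.sup (hS.trans h (hS.of_le bot_le)) (hS.of_le le_rfl)
  have h2 : (el b ⊔ pt ⊤ f0 : SK K G) = pt ⊤ ⊤ := by
    change sup _ _ = _
    have h3 : (el b : SK K G).1 ≠ ⊥ := hb
    have h4 : (el b : SK K G).1 ≠ ⊤ := hbt
    rw [pt_top]
    simp only [sup, h3, if_false, pt_fst top_ne_bot hf0, top_ne_bot, h4, sup_top_eq]
  rwa [h2] at h1

/-- Automorphisms of `K` act on the first component. -/
def mapIso (α : K ≃o K) : SK K G ≃o SK K G where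
  toFun p := ⟨α p.1, p.2, p.snd_ne, fun h => p.bot_imp (by simpa using h)⟩
  invFun p := ⟨α.symm p.1, p.2, p.snd_ne, fun h => p.bot_imp (by simpa using h)⟩
  left_inv p := by simp
  right_inv p := by simp
  map_rel_iff' {p q} := by simp [le_def]

theorem mapIso_el (α : K ≃o K) (x : K) : mapIso α (el x : SK K G) = el (α x) := rfl

/-- The elements of `K` are recognised inside `SK K G`. -/
theorem mem_el (h1 : ∃ u v : G, u ≠ ⊤ ∧ v ≠ ⊤ ∧ u ⊔ v = ⊤ ∧ u ⊓ v ≠ ⊥)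
    (h2 : ∀ u v z : G, z ≠ ⊤ → u < z → v < z → u ⊔ v = z → u ⊓ v = ⊥) (z : SK K G) :
    z.2 = ⊤ ↔ z = ⊥ ∨ ∃ u v, u < z ∧ v < z ∧ u ⊔ v = z ∧ u ⊓ v ≠ ⊥ := by
  constructor
  · intro hz
    by_cases hb : z.1 = ⊥
    · exact Or.inl (fst_eq_bot.1 hb)
    right
    obtain ⟨u, v, hu, hv, huv, huv'⟩ := h1
    have hz' : z = pt z.1 ⊤ := by rw [← hz, pt_self]
    refine ⟨pt z.1 u, pt z.1 v, ?_, ?_, ?_, ?_⟩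
    · rw [hz']
      simp only [pt_fst hb top_ne_bot]
      rw [lt_iff_le_not_ge, pt_le_pt hb, pt_le_pt hb]
      exact ⟨le_top, fun h => hu (top_le_iff.1 h)⟩
    · rw [hz']
      simp only [pt_fst hb top_ne_bot]
      rw [lt_iff_le_not_ge, pt_le_pt hb, pt_le_pt hb]
      exact ⟨le_top, fun h => hv (top_le_iff.1 h)⟩
    · rw [pt_sup hb, huv, ← hz']
    · rw [pt_inf hb, ← pt_bot z.1]
      intro h
      exact huv' (le_bot_iff.1 ((pt_le_pt hb).1 h.le))
  · rintro (rfl | ⟨u, v, hu, hv, huv, huv'⟩)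
    · rfl
    · by_contra hz
      have hb : z.1 ≠ ⊥ := fun h => hz (z.bot_imp h)
      rw [← pt_self z] at hu hv
      rcases le_pt hb hz hu.le with rfl | hu'
      · simp at huv'
      rcases le_pt hb hz hv.le with rfl | hv'
      · simp at huv'
      rw [← pt_self u, hu'.1, lt_iff_le_not_ge, pt_le_pt hb, pt_le_pt hb] at hu
      rw [← pt_self v, hv'.1, lt_iff_le_not_ge, pt_le_pt hb, pt_le_pt hb] at hv
      rw [← pt_self u, ← pt_self v, hu'.1, hv'.1] at huv huv'
      rw [pt_sup hb] at huv
      rw [pt_inf hb] at huv'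
      have h3 : u.2 ⊔ v.2 = z.2 := by
        rw [← huv, pt_snd hb]
        exact fun h => u.snd_ne (sup_eq_bot_iff.1 h).1
      rw [h2 _ _ _ hz (lt_iff_le_not_ge.2 hu) (lt_iff_le_not_ge.2 hv) h3] at huv'
      exact huv' (pt_bot _)

/-- Every automorphism of `SK K G` comes from one of `K`, if `G` is rigid. -/
theorem auto_eq (h1 : ∃ u v : G, u ≠ ⊤ ∧ v ≠ ⊤ ∧ u ⊔ v = ⊤ ∧ u ⊓ v ≠ ⊥)
    (h2 : ∀ u v z : G, z ≠ ⊤ → u < z → v < z → u ⊔ v = z → u ⊓ v = ⊥)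
    (hG : ∀ (φ : G ≃o G) x, φ x = x) (σ : SK K G ≃o SK K G) :
    ∃ α : K ≃o K, σ = mapIso α := by
  have hinv : ∀ (σ : SK K G ≃o SK K G) z, z.2 = ⊤ → (σ z).2 = ⊤ := by
    intro σ z hz
    rw [mem_el h1 h2] at hz ⊢
    rcases hz with rfl | ⟨u, v, hu, hv, huv, huv'⟩
    · exact Or.inl σ.map_bot
    · refine Or.inr ⟨σ u, σ v, σ.strictMono hu, σ.strictMono hv, ?_, ?_⟩
      · rw [← map_sup, huv]
      · rw [← map_inf, Ne, ← σ.map_bot, σ.injective.eq_iff]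
        exact huv'
  have helσ : ∀ (σ : SK K G ≃o SK K G) x, σ (el x) = el (σ (el x)).1 := fun σ x =>
    SK.ext rfl (hinv σ (el x) rfl)
  let α : K ≃o K :=
    { toFun := fun x => (σ (el x)).1
      invFun := fun x => (σ.symm (el x)).1
      left_inv := fun x => by
        change (σ.symm (el (σ (el x)).1)).1 = x
        rw [← helσ σ x, σ.symm_apply_apply]; rfl
      right_inv := fun x => by
        change (σ (el (σ.symm (el x)).1)).1 = x
        rw [← helσ σ.symm x, σ.apply_symm_apply]; rfl
      map_rel_iff' := fun {x y} => by
        change (σ (el x)).1 ≤ (σ (el y)).1 ↔ x ≤ y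
        rw [← el_le_el (G := G), ← helσ σ x, ← helσ σ y, σ.le_iff_le, el_le_el] }
  refine ⟨α, ?_⟩
  -- `τ` fixes `K`, hence the inserted copies setwise, hence pointwise
  let τ : SK K G ≃o SK K G := σ.trans (mapIso α.symm)
  have hτ : ∀ x, τ (el x) = el x := by
    intro x
    change mapIso α.symm (σ (el x)) = el x
    rw [helσ σ x, mapIso_el]
    exact congrArg el (α.symm_apply_apply x)
  have hτs : ∀ x, τ.symm (el x) = el x := fun x => by rw [τ.symm_apply_eq, hτ]
  have hfst : ∀ τ : SK K G ≃o SK K G, (∀ x, τ (el x) = el x) → ∀ p, (τ p).1 = p.1 := by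
    intro τ hτ p
    apply eq_of_forall_ge_iff
    intro x
    rw [← le_el (G := G), ← le_el (G := G)]
    conv_lhs => rw [← hτ x]
    exact τ.le_iff_le
  have hfix : ∀ p, τ p = p := by
    intro p
    by_cases hb : p.1 = ⊥
    · rw [fst_eq_bot.1 hb, τ.map_bot]
    have hpt : ∀ τ : SK K G ≃o SK K G, (∀ x, τ (el x) = el x) → ∀ f, ∃ g, τ (pt p.1 f) = pt p.1 g := by
      intro τ hτ f
      by_cases hf : f = ⊥
      · exact ⟨⊥, by rw [hf, pt_bot, τ.map_bot]⟩
      · refine ⟨(τ (pt p.1 f)).2, ?_⟩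
        conv_lhs => rw [← pt_self (τ (pt p.1 f)), hfst τ hτ, pt_fst hb hf]
    choose φ hφ using hpt τ hτ
    choose ψ hψ using hpt τ.symm hτs
    have hptinj : ∀ {f g : G}, (pt p.1 f : SK K G) = pt p.1 g ↔ f = g := by
      intro f g
      rw [le_antisymm_iff, le_antisymm_iff, pt_le_pt hb, pt_le_pt hb]
    let Φ : G ≃o G :=
      { toFun := φ
        invFun := ψ
        left_inv := fun f => by rw [← hptinj, ← hψ, ← hφ, τ.symm_apply_apply]
        right_inv := fun f => by rw [← hptinj, ← hφ, ← hψ, τ.apply_symm_apply]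
        map_rel_iff' := fun {f g} => by
          change φ f ≤ φ g ↔ f ≤ g
          rw [← pt_le_pt hb, ← hφ, ← hφ, τ.le_iff_le, pt_le_pt hb] }
    have h3 := hφ p.2
    rw [show φ p.2 = p.2 from hG Φ p.2, pt_self] at h3
    exact h3
  refine OrderIso.ext (funext fun p => ?_)
  have h3 := hfix p
  change mapIso α.symm (σ p) = p at h3
  refine SK.ext ?_ ?_
  · have h4 := congrArg SK.fst h3
    change α.symm (σ p).1 = p.1 at h4
    rw [OrderIso.symm_apply_eq] at h4
    exact h4
  · have h4 := congrArg SK.snd h3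
    exact h4

/-- The lower sets of the inserted elements are those in `G`. -/
theorem card_Iic {b : K} (hb : b ≠ ⊥) {f : G} (hf : f ≠ ⊤) :
    Cardinal.mk (Set.Iic (pt b f : SK K G)) = Cardinal.mk (Set.Iic f) := by
  apply le_antisymm
  · refine Cardinal.mk_le_of_surjective (f := fun g : Set.Iic f =>
      (⟨pt b g.1, (pt_le_pt hb).2 g.2⟩ : Set.Iic (pt b f : SK K G))) ?_
    rintro ⟨p, hp⟩
    rcases le_pt hb hf hp with rfl | h
    · exact ⟨⟨⊥, bot_le⟩, by simp [pt_bot]⟩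
    · refine ⟨⟨p.2, h.2⟩, ?_⟩
      simp only [← h.1, pt_self]
  · refine Cardinal.mk_le_of_injective (f := fun g : Set.Iic f =>
      (⟨pt b g.1, (pt_le_pt hb).2 g.2⟩ : Set.Iic (pt b f : SK K G))) ?_
    rintro ⟨g, hg⟩ ⟨g', hg'⟩ h
    simp only [Subtype.mk.injEq] at h ⊢
    exact le_antisymm ((pt_le_pt hb).1 h.le) ((pt_le_pt hb).1 h.ge)

end SK
end SKSection

end SIT

/-! ### Recognizing the base inside the extension -/

namespace SIT

open Cardinal

section Rigidity

variable {B X : Type u} [Lattice B] {r : X → B} {F : X → Type u} [∀ i, Lattice (F i)]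
  [∀ i, BoundedOrder (F i)] [∀ i, Nontrivial (F i)]

/-- A bound on the `i`-th gadget part passes to joins. -/
theorem bound_sup {w w' : W r F} {i : X} {m : B} (hm : r i ≤ m)
    (h : ∀ (c : F i) d, gd r i c d ≤ w → c = ⊥ ∨ d ≤ m)
    (h' : ∀ (c : F i) d, gd r i c d ≤ w' → c = ⊥ ∨ d ≤ m) {c : F i} {d : B}
    (hcd : gd r i c d ≤ w ⊔ w') : c = ⊥ ∨ d ≤ m := by
  rw [gd_le, W.sup_val] at hcd
  refine hcd.1 i {x | x ≤ m} (cpre_le.idl m) hm ?_ rfl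
  rintro (e | ⟨j, f, e⟩) hj
  · trivial
  · rintro rfl
    rcases hj with hj | hj
    · exact h f e (gd_le.2 hj)
    · exact h' f e (gd_le.2 hj)

/-- The data that make the gadgets recognizable inside the extension: each gadget has two sets of
small elements `C i a`, whose lower sets have a cardinality `κ i a` that exceeds the one of `B` and
determines `i` and `a`; and every element of `B` carries a gadget. -/
structure Marked (r : X → B) (C : ∀ i, Bool → Set (F i)) (κ : X → Bool → Cardinal.{u}) :
    Prop where
  ne_bot : ∀ i a, ∀ h ∈ C i a, h ≠ ⊥
  ne_top : ∀ i a, ∀ h ∈ C i a, h ≠ ⊤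
  down : ∀ i a, ∀ h ∈ C i a, ∀ c ≤ h, c ≠ ⊥ → c ∈ C i a
  ex : ∀ i (c : F i), c ≠ ⊥ → ∃ a, ∃ h ∈ C i a, h ≤ c
  card : ∀ i a, ∀ h ∈ C i a, #(Set.Iic h) = κ i a
  inj : ∀ i a j b, κ i a = κ j b → i = j ∧ a = b
  aleph : ∀ i a, ℵ₀ ≤ κ i a
  lt : ∀ i a, #B < κ i a
  surj : ∀ x, ∃ i, r i = x
  cov : ∀ i, ∃ f f' : F i, f ≠ ⊤ ∧ f' ≠ ⊤ ∧ f ⊔ f' = ⊤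

variable {C : ∀ i, Bool → Set (F i)} {κ : X → Bool → Cardinal.{u}}

/-- Elements below a small gadget element are generated by finitely many objects from a set of size
`κ i a`. -/
theorem card_Iic_le (M : Marked r C κ) {i : X} {a : Bool} {h : F i} (hh : h ∈ C i a) {d : B}
    {w : W r F} (hw : w ≤ gd r i h d) : #(Set.Iic w) ≤ κ i a := by
  let φ : B ⊕ (Set.Iic h × B) → Obj B F := Sum.elim .base fun p => .gad i p.1 p.2
  have key : ∀ v : W r F, v ≤ gd r i h d →
      ∃ l : List (B ⊕ (Set.Iic h × B)), v.1 = cl r (fun a b => a ≤ b) (φ '' {o | o ∈ l}) := by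
    intro v
    induction v using W.induction with
    | h1 b => exact fun _ => ⟨[Sum.inl b], by simp [φ, bs, ob]⟩
    | h2 j c b =>
      intro hv
      by_cases hc : c = ⊥ ∨ b ≤ r j
      · rw [gd_eq_bs hc]
        exact ⟨[Sum.inl (r j)], by simp [φ, bs, ob]⟩
      · push Not at hc
        obtain rfl := gd_le_gd_ne hv hc.1 hc.2
        rcases gd_le_gd.1 hv with h1 | h1 | h1
        · exact absurd h1 hc.1
        · exact absurd h1 hc.2
        · exact ⟨[Sum.inr (⟨c, h1.1⟩, b)], by simp [φ, gd, ob]⟩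
    | h3 v v' ih ih' =>
      intro hv
      obtain ⟨l, hl⟩ := ih (le_sup_left.trans hv)
      obtain ⟨l', hl'⟩ := ih' (le_sup_right.trans hv)
      refine ⟨l ++ l', ?_⟩
      rw [W.sup_val, hl, hl']
      apply Set.Subset.antisymm
      · apply cl_subset
        apply Set.union_subset
        · exact cl_mono r (Set.image_mono fun o ho => List.mem_append_left _ ho)
        · exact cl_mono r (Set.image_mono fun o ho => List.mem_append_right _ ho)
      · apply cl_mono
        rintro _ ⟨o, ho, rfl⟩
        rcases List.mem_append.1 ho with ho | ho
        · exact Or.inl (subset_cl r _ _ ⟨o, ho, rfl⟩)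
        · exact Or.inr (subset_cl r _ _ ⟨o, ho, rfl⟩)
  choose g hg using fun v : Set.Iic w => key v.1 (le_trans v.2 hw)
  have h1 : #(Set.Iic w) ≤ #(List (B ⊕ (Set.Iic h × B))) := by
    refine Cardinal.mk_le_of_injective (f := g) fun v v' hv => ?_
    apply Subtype.ext
    apply W.ext
    rw [hg v, hg v', hv]
  refine h1.trans ((mk_list_le_max _).trans (max_le (M.aleph i a) ?_))
  simp only [mk_sum, mk_prod, lift_id, M.card i a h hh]
  refine add_le_of_le (M.aleph i a) (M.lt i a).le ?_
  exact mul_le_of_le (M.aleph i a) le_rfl (M.lt i a).le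

theorem le_card_Iic (M : Marked r C κ) {i : X} {a : Bool} {h : F i} (hh : h ∈ C i a) {d : B}
    (hd : ¬ d ≤ r i) {w : W r F} (hw : gd r i h d ≤ w) : κ i a ≤ #(Set.Iic w) := by
  rw [← M.card i a h hh]
  refine Cardinal.mk_le_of_injective (f := fun c => ⟨gd r i c.1 d,
    (gd_mono c.2 le_sup_left).trans hw⟩) ?_
  have key : ∀ c c' : F i, gd r i c d ≤ gd r i c' d → c ≤ c' := by
    intro c c' hc
    rcases gd_le_gd.1 hc with h1 | h1 | h1
    · rw [h1]; exact bot_le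
    · exact absurd h1 hd
    · exact h1.1
  intro c c' hcc
  simp only at hcc
  exact Subtype.ext (le_antisymm (key _ _ hcc.le) (key _ _ hcc.ge))

/-- Nontrivial members of the `a`-th comb of the `i`-th gadget occur below `w`. -/
def Act (C : ∀ i, Bool → Set (F i)) (i : X) (a : Bool) (w : W r F) : Prop :=
  ∃ h ∈ C i a, ∃ d, ¬ d ≤ r i ∧ gd r i h d ≤ w

theorem Act.of_gd (M : Marked r C κ) {i : X} {c : F i} {d : B} {w : W r F} (hc : c ≠ ⊥)
    (hd : ¬ d ≤ r i) (h : gd r i c d ≤ w) : ∃ a, Act C i a w := by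
  obtain ⟨a, f, hf, hfc⟩ := M.ex i c hc
  exact ⟨a, f, hf, d, hd, (gd_mono hfc le_sup_left).trans h⟩

theorem exists_act (M : Marked r C κ) {w : W r F} (hw : w ∉ Set.range (bs r F)) :
    ∃ i a, Act C i a w := by
  rw [mem_range_bs] at hw
  push Not at hw
  obtain ⟨i, c, d, h, hc, hd⟩ := hw
  obtain ⟨a, ha⟩ := Act.of_gd M hc hd h
  exact ⟨i, a, ha⟩

/-- The elements of `B` are recognised by the size of their lower sets. -/
theorem mem_range_iff_card (M : Marked r C κ) {w : W r F} :
    w ∈ Set.range (bs r F) ↔ #(Set.Iic w) ≤ #B := by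
  constructor
  · rintro ⟨b, rfl⟩
    choose g hg using fun v : Set.Iic (bs r F b) => mem_range_of_le v.2
    refine Cardinal.mk_le_of_injective (f := g) fun v v' h => ?_
    apply Subtype.ext
    rw [← hg, ← hg, h]
  · intro h
    by_contra hw
    obtain ⟨i, a, f, hf, d, hd, hfd⟩ := exists_act M hw
    exact absurd (h.trans_lt (M.lt i a)) (le_card_Iic M hf hd hfd).not_gt

/-- Activity is an order-theoretic notion. -/
theorem act_iff (M : Marked r C κ) {i : X} {a : Bool} {w : W r F} :
    Act C i a w ↔ ∃ w' ≤ w, w' ∉ Set.range (bs r F) ∧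
      ∀ w'' ≤ w', w'' ∉ Set.range (bs r F) → #(Set.Iic w'') = κ i a := by
  constructor
  · rintro ⟨h, hh, d, hd, hw⟩
    refine ⟨_, hw, ?_, ?_⟩
    · rw [mem_range_bs]
      intro h1
      rcases h1 i h d le_rfl with h1 | h1
      · exact M.ne_bot i a h hh h1
      · exact hd h1
    · intro w' hw' hr
      refine le_antisymm (card_Iic_le M hh hw') ?_
      rw [mem_range_bs] at hr
      push Not at hr
      obtain ⟨j, c, e, h1, hc, he⟩ := hr
      obtain rfl := gd_le_gd_ne (h1.trans hw') hc he
      rcases gd_le_gd.1 (h1.trans hw') with h2 | h2 | h2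
      · exact absurd h2 hc
      · exact absurd h2 he
      · exact le_card_Iic M (M.down _ _ _ hh _ h2.1 hc) he h1
  · rintro ⟨w', hw', hr, h⟩
    obtain ⟨j, b, f, hf, d, hd, hfd⟩ := exists_act M hr
    have h1 : gd r j f d ∉ Set.range (bs r F) := by
      rw [mem_range_bs]
      intro h1
      rcases h1 j f d le_rfl with h1 | h1
      · exact M.ne_bot j b f hf h1
      · exact hd h1
    have h2 := h _ hfd h1
    have h3 : κ j b = κ i a :=
      le_antisymm (h2 ▸ le_card_Iic M hf hd le_rfl) (h2 ▸ card_Iic_le M hf le_rfl)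
    obtain ⟨rfl, rfl⟩ := M.inj _ _ _ _ h3
    exact ⟨f, hf, d, hd, hfd.trans hw'⟩

theorem card_Iic_map (β : W r F ≃o W r F) (w : W r F) : #(Set.Iic (β w)) = #(Set.Iic w) := by
  rw [← OrderIso.image_Iic]
  exact mk_image_eq β.injective

theorem range_map (M : Marked r C κ) (β : W r F ≃o W r F) {w : W r F} :
    β w ∈ Set.range (bs r F) ↔ w ∈ Set.range (bs r F) := by
  rw [mem_range_iff_card M, mem_range_iff_card M, card_Iic_map]

theorem act_map (M : Marked r C κ) (β : W r F ≃o W r F) {i : X} {a : Bool} {w : W r F} :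
    Act C i a (β w) ↔ Act C i a w := by
  have key : ∀ (β : W r F ≃o W r F) {w : W r F}, Act C i a w → Act C i a (β w) := by
    intro β w h
    rw [act_iff M] at h ⊢
    obtain ⟨w', hw', hr, h⟩ := h
    refine ⟨β w', β.monotone hw', (range_map M β).not.2 hr, fun w'' hw'' hr'' => ?_⟩
    rw [← card_Iic_map β.symm]
    exact h _ (β.symm_apply_le.2 hw'') ((range_map M β.symm).not.2 hr'')
  exact ⟨fun h => by simpa using key β.symm h, key β⟩

/-- Automorphisms fix the base lattice. -/
theorem fix_bs (M : Marked r C κ) (β : W r F ≃o W r F) (x : B) : β (bs r F x) = bs r F x := by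
  have key : ∀ β : W r F ≃o W r F, β (bs r F x) ≤ bs r F x := by
    intro β
    obtain ⟨b, hb⟩ := (range_map M β).2 ⟨x, rfl⟩
    rw [← hb, bs_le_bs]
    by_cases hx : ∀ y, y ≤ x
    · exact hx b
    push Not at hx
    obtain ⟨y, hy⟩ := hx
    obtain ⟨i, rfl⟩ := M.surj x
    obtain ⟨a, h, hh, -⟩ := M.ex i ⊤ top_ne_bot
    have h1 : Act C i a (β.symm (gd r i h y)) := (act_map M β.symm).2 ⟨h, hh, y, hy, le_rfl⟩
    obtain ⟨f, -, d, -, hfd⟩ := h1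
    have h2 := (bs_le_gd i f d).trans hfd
    rw [OrderIso.le_symm_apply, ← hb, bs_le_gd_iff] at h2
    rcases h2 with h2 | h2
    · exact h2
    · exact absurd h2.1 (M.ne_top i a h hh)
  refine le_antisymm (key β) ?_
  rw [← OrderIso.symm_apply_le]
  exact key β.symm

theorem bs_le_map (M : Marked r C κ) (β : W r F ≃o W r F) {b : B} {w : W r F} :
    bs r F b ≤ β w ↔ bs r F b ≤ w := by
  conv_lhs => rw [← fix_bs M β b]
  exact β.le_iff_le

/-- The elements that are active at most in the `i`-th gadget and whose trace is at most `r i`. -/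
def Loc (C : ∀ i, Bool → Set (F i)) (i : X) (w : W r F) : Prop :=
  (∀ j a, Act C j a w → j = i) ∧ ∀ b, bs r F b ≤ w → b ≤ r i

theorem loc_map (M : Marked r C κ) (β : W r F ≃o W r F) {i : X} {w : W r F} :
    Loc C i (β w) ↔ Loc C i w := by
  simp only [Loc, act_map M, bs_le_map M]

theorem loc_gd (M : Marked r C κ) {i : X} {f : F i} (hf : f ≠ ⊤) (d : B) :
    Loc C i (gd r i f d) := by
  constructor
  · rintro j a ⟨h, hh, e, he, hle⟩
    exact gd_le_gd_ne hle (M.ne_bot _ _ _ hh) he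
  · intro b hb
    rcases bs_le_gd_iff.1 hb with h | h
    · exact h
    · exact absurd h.1 hf

/-- Below `gd i ⊤ z`, an element whose trace is at most `r i` lies under a top `gd i ⊤ m` that is
already generated by the element and `z`. -/
theorem exists_minimal_top {i : X} {z : B} (hz : r i ≤ z) (w : W r F) (hw : w ≤ gd r i ⊤ z)
    (hb : ∀ b, bs r F b ≤ w → b ≤ r i) :
    ∃ m, r i ≤ m ∧ gd r i ⊤ m ≤ w ⊔ bs r F z ∧ w ≤ gd r i ⊤ m := by
  induction w using W.induction with
  | h1 b =>
    refine ⟨r i, le_rfl, ?_, ?_⟩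
    · rw [gd_eq_bs (Or.inr le_rfl)]
      exact (bs_mono hz).trans le_sup_right
    · exact (bs_mono (hb b le_rfl)).trans (bs_le_gd _ _ _)
  | h2 j c d =>
    by_cases hc : c = ⊥ ∨ d ≤ r j
    · rw [gd_eq_bs hc] at *
      refine ⟨r i, le_rfl, ?_, ?_⟩
      · rw [gd_eq_bs (Or.inr le_rfl)]
        exact (bs_mono hz).trans le_sup_right
      · exact (bs_mono (hb _ le_rfl)).trans (bs_le_gd _ _ _)
    · push Not at hc
      obtain rfl := gd_le_gd_ne hw hc.1 hc.2
      have hdz : d ≤ z := by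
        rcases gd_le_gd.1 hw with h1 | h1 | h1
        · exact absurd h1 hc.1
        · exact absurd h1 hc.2
        · simpa [hz] using h1.2
      refine ⟨d ⊔ r j, le_sup_right, ?_, ?_⟩
      · rw [gd_sup_base]
        exact gd_top_le hc.1 ((bs_mono hdz).trans le_sup_right) le_sup_left
      · rw [gd_sup_base]
        exact gd_mono le_top le_sup_left
  | h3 v v' ih ih' =>
    obtain ⟨m, hm, h1, h2⟩ := ih (le_sup_left.trans hw) fun b h => hb b (h.trans le_sup_left)
    obtain ⟨m', hm', h1', h2'⟩ := ih' (le_sup_right.trans hw) fun b h => hb b (h.trans le_sup_right)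
    refine ⟨m ⊔ m', hm.trans le_sup_left, ?_, ?_⟩
    · rw [gd_sup_right]
      exact sup_le (h1.trans (sup_le_sup_right le_sup_left _))
        (h1'.trans (sup_le_sup_right le_sup_right _))
    · rw [gd_sup_right]
      exact sup_le_sup h2 h2'

/-- For local elements, being below `gd i ⊤ z` can be expressed by the order and the base lattice. -/
theorem le_gd_top_iff (M : Marked r C κ) {i : X} {z : B} (hz : r i ≤ z) {w : W r F}
    (hw : Loc C i w) :
    w ≤ gd r i ⊤ z ↔ (∀ z', z ≤ z' → ∀ v, Loc C i v → (w ⊔ bs r F z') ⊓ v ≤ w ⊔ bs r F z) ∧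
      ∀ b, bs r F b ≤ w ⊔ bs r F z → b ≤ z := by
  constructor
  · intro h
    constructor
    · intro z' hz' v hv
      obtain ⟨m, hm, h1, h2⟩ := exists_minimal_top hz w h hw.2
      rw [W.le_iff]
      constructor
      · intro b hb
        exact (bs_mono ((hv.2 b (hb.trans inf_le_right)).trans hz)).trans le_sup_right
      · intro j c b hb
        by_cases hc : c = ⊥ ∨ b ≤ r j
        · rw [gd_eq_bs hc] at *
          exact (bs_mono ((hv.2 _ (hb.trans inf_le_right)).trans hz)).trans le_sup_right
        · push Not at hc
          obtain ⟨a, ha⟩ := Act.of_gd M hc.1 hc.2 (hb.trans inf_le_right)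
          obtain rfl := hv.1 _ _ ha
          refine le_trans ?_ h1
          refine gd_mono le_top (le_trans ?_ le_sup_left)
          refine (bound_sup hm (w := w) (w' := bs r F z') ?_ ?_ (hb.trans inf_le_left)).resolve_left
            hc.1
          · intro f e he
            rcases gd_le_gd.1 (he.trans h2) with h3 | h3 | h3
            · exact Or.inl h3
            · exact Or.inr (h3.trans hm)
            · exact Or.inr (by simpa [hm] using h3.2)
          · intro f e he
            exact (gd_le_bs.1 he).2.imp_right fun h => h.trans hm
    · intro b hb
      rcases bs_le_gd_iff.1 (hb.trans (sup_le h (bs_le_gd_top i z))) with h1 | h1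
      · exact h1.trans hz
      · simpa [hz] using h1.2
  · rintro ⟨h1, h2⟩
    rw [W.le_iff]
    constructor
    · intro b hb
      exact (bs_mono (hw.2 b hb)).trans (bs_le_gd _ _ _)
    · intro j c b hb
      by_cases hc : c = ⊥ ∨ b ≤ r j
      · rw [gd_eq_bs hc] at *
        exact (bs_mono (hw.2 _ hb)).trans (bs_le_gd _ _ _)
      · push Not at hc
        obtain ⟨a, ha⟩ := Act.of_gd M hc.1 hc.2 hb
        obtain rfl := hw.1 _ _ ha
        obtain ⟨f, f', hf, hf', hff⟩ := M.cov j
        have h3 : gd r j ⊤ b ≤ w ⊔ bs r F (z ⊔ b) :=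
          gd_top_le hc.1 ((bs_mono le_sup_right).trans le_sup_right) (hb.trans le_sup_left)
        have h4 : ∀ g : F j, g ≠ ⊤ → gd r j g b ≤ w ⊔ bs r F z := fun g hg =>
          (le_inf ((gd_mono le_top le_sup_left).trans h3) le_rfl).trans
            (h1 (z ⊔ b) le_sup_left _ (loc_gd M hg b))
        have h5 : gd r j ⊤ b ≤ w ⊔ bs r F z := by
          rw [← hff, gd_sup_left]
          exact sup_le (h4 f hf) (h4 f' hf')
        exact gd_mono le_top ((h2 b ((bs_le_gd_top j b).trans h5)).trans le_sup_left)

/-- Automorphisms fix the tops of the gadgets. -/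
theorem fix_top (M : Marked r C κ) (β : W r F ≃o W r F) (i : X) (z : B) :
    β (gd r i ⊤ z) = gd r i ⊤ z := by
  have key : ∀ (β : W r F ≃o W r F) z, r i ≤ z → ∀ f : F i, f ≠ ⊤ →
      β (gd r i f z) ≤ gd r i ⊤ z := by
    intro β z hz f hf
    have h0 := loc_gd M hf z
    have h1 := (le_gd_top_iff M hz h0).1 (gd_mono le_top le_sup_left)
    rw [le_gd_top_iff M hz ((loc_map M β).2 h0)]
    have e : ∀ z', β (gd r i f z) ⊔ bs r F z' = β (gd r i f z ⊔ bs r F z') := fun z' => by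
      rw [map_sup, fix_bs M]
    constructor
    · intro z' hz' v hv
      have h2 := β.monotone (h1.1 z' hz' (β.symm v) ((loc_map M β.symm).2 hv))
      rwa [map_inf, ← e, ← e, β.apply_symm_apply] at h2
    · intro b hb
      rw [e, bs_le_map M] at hb
      exact h1.2 b hb
  have key2 : ∀ (β : W r F ≃o W r F), β (gd r i ⊤ z) ≤ gd r i ⊤ z := by
    intro β
    rw [← gd_sup_base]
    obtain ⟨f, f', hf, hf', hff⟩ := M.cov i
    conv_lhs => rw [← hff, gd_sup_left, map_sup]
    exact sup_le (key β _ le_sup_right f hf) (key β _ le_sup_right f' hf')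
  refine le_antisymm (key2 β) ?_
  rw [← OrderIso.symm_apply_le]
  exact key2 β.symm

/-- A criterion for an automorphic image to lie below a gadget element. -/
theorem map_gd_le (M : Marked r C κ) (β : W r F ≃o W r F) {i : X} {f g : F i} {y : B}
    (hg : f = ⊤ → g = ⊤)
    (h : ∀ (c : F i) b, c ≠ ⊥ → ¬ b ≤ r i → b ≤ y ⊔ r i → gd r i c b ≤ β (gd r i f y) → c ≤ g) :
    β (gd r i f y) ≤ gd r i g y := by
  have h0 : β (gd r i f y) ≤ gd r i ⊤ y :=
    (β.monotone (gd_mono le_top le_sup_left)).trans (fix_top M β i y).le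
  have hbs : ∀ b, bs r F b ≤ β (gd r i f y) → bs r F b ≤ gd r i g y := by
    intro b hb
    rw [bs_le_map M] at hb
    rw [bs_le_gd_iff] at hb ⊢
    exact hb.imp_right fun h => ⟨hg h.1, h.2⟩
  rw [W.le_iff]
  refine ⟨hbs, fun j c b hb => ?_⟩
  by_cases hc : c = ⊥ ∨ b ≤ r j
  · rw [gd_eq_bs hc] at *
    exact hbs _ hb
  · push Not at hc
    obtain rfl := gd_le_gd_ne (hb.trans h0) hc.1 hc.2
    rcases gd_le_gd.1 (hb.trans h0) with h1 | h1 | h1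
    · exact absurd h1 hc.1
    · exact absurd h1 hc.2
    · exact gd_mono (h c b hc.1 hc.2 h1.2 hb) h1.2

end Rigidity

end SIT

/-! ### Rigidity of the gadgets -/

namespace SIT

open Cardinal

section Rigidity

variable {B X : Type u} [Lattice B] {r : X → B} {F : X → Type u} [∀ i, Lattice (F i)]
  [∀ i, BoundedOrder (F i)] [∀ i, Nontrivial (F i)]
  {C : ∀ i, Bool → Set (F i)} {κ : X → Bool → Cardinal.{u}}

theorem gd_le_gd_nt {i : X} {c f : F i} {b d : B} (hb : ¬ b ≤ r i)
    (h : gd r i c b ≤ gd r i f d) : c ≤ f := by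
  rcases gd_le_gd.1 h with h1 | h1 | h1
  · rw [h1]; exact bot_le
  · exact absurd h1 hb
  · exact h1.1

/-- The `i`-th copies of `f` are fixed by all automorphisms. -/
def Fixd (i : X) (f : F i) : Prop := ∀ (β : W r F ≃o W r F) y, β (gd r i f y) = gd r i f y

/-- By `map_gd_le`, applied to `β` and to its inverse, it suffices to bound the gadget elements below
the images. -/
theorem fixd_of (M : Marked r C κ) {i : X} {f : F i}
    (h : ∀ (β : W r F ≃o W r F) y (c : F i) b, c ≠ ⊥ → ¬ b ≤ r i → b ≤ y ⊔ r i →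
      gd r i c b ≤ β (gd r i f y) → c ≤ f) : Fixd (r := r) i f := by
  intro β y
  refine le_antisymm (map_gd_le M β id (h β y)) ?_
  rw [← OrderIso.symm_apply_le]
  exact map_gd_le M β.symm id (h β.symm y)

theorem Fixd.sup {i : X} {f g : F i} (hf : Fixd (r := r) i f) (hg : Fixd (r := r) i g) :
    Fixd (r := r) i (f ⊔ g) := by
  intro β y
  rw [gd_sup_left, map_sup, hf, hg]

/-- Automorphisms fix the gadgets that are double combs. -/
theorem fixd_comb (M : Marked r C κ) {i : X} {I : Type u} [LinearOrder I] [WellFoundedLT I]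
    {col : I → Bool} {κ' : Bool → Cardinal.{u}} (H : CombHyp col κ') (e : Comb col ≃o F i)
    (hC : ∀ a, C i a = e '' CombC col a) (f : F i) : Fixd (r := r) i f := by
  have hdel : ∀ k, e (.del k) ∈ C i (col k) := fun k => by
    rw [hC]; exact ⟨_, ⟨k, rfl, Or.inl rfl⟩, rfl⟩
  have hne : ∀ x : Comb col, x ≠ ⊥ → e x ≠ ⊥ := fun x hx h => hx (e.injective (by rw [h, e.map_bot]))
  have hnt : ∀ x : Comb col, x ≠ ⊤ → e x ≠ ⊤ := fun x hx h => hx (e.injective (by rw [h, e.map_top]))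
  -- an element of the comb of colour `a` has no element of the other colour in its image
  have hcol : ∀ (β : W r F ≃o W r F) y (x z : Comb col) b a, x ∈ CombC col a → z ≠ ⊥ →
      ¬ b ≤ r i → gd r i (e z) b ≤ β (gd r i (e x) y) → z ∈ CombC col a := by
    intro β y x z b a hx hz hb h
    have h1 : ∀ a', ∀ h' ∈ CombC col a', h' ≤ z → a' = a := by
      intro a' h' hh' hle
      have h2 : Act C i a' (β (gd r i (e x) y)) :=
        ⟨e h', by rw [hC]; exact ⟨h', hh', rfl⟩, b, hb,
          (gd_mono (e.monotone hle) le_sup_left).trans h⟩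
      rw [act_map M] at h2
      obtain ⟨g, hg, d, hd, hgd⟩ := h2
      rw [hC] at hg
      obtain ⟨g, hg, rfl⟩ := hg
      have h3 := e.le_iff_le.1 (gd_le_gd_nt hd hgd)
      obtain ⟨k, hk, hk'⟩ := Comb.C_down hx h3 (Comb.C_ne_bot hg)
      obtain ⟨l, hl, hl'⟩ := hg
      have : k = l := by
        rcases hk' with rfl | rfl <;> rcases hl' with h | h <;> simp at h <;> exact h
      rw [← hl, ← hk, this]
    obtain ⟨p, hp⟩ := H.ne true
    obtain ⟨q, hq⟩ := H.ne false
    cases z with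
    | bot => exact absurd rfl hz
    | top =>
      have h2 := h1 true (.del p) ⟨p, hp, Or.inl rfl⟩ le_top
      have h3 := h1 false (.del q) ⟨q, hq, Or.inl rfl⟩ le_top
      rw [← h2] at h3; exact absurd h3 (by simp)
    | s =>
      have h2 := h1 true (.del p) ⟨p, hp, Or.inl rfl⟩ trivial
      have h3 := h1 false (.del q) ⟨q, hq, Or.inl rfl⟩ trivial
      rw [← h2] at h3; exact absurd h3 (by simp)
    | del j => exact ⟨j, h1 _ (.del j) ⟨j, rfl, Or.inl rfl⟩ le_rfl, Or.inl rfl⟩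
    | t j => exact ⟨j, h1 _ (.t j) ⟨j, rfl, Or.inr rfl⟩ le_rfl, Or.inr rfl⟩
  have hFdel : ∀ k, Fixd (r := r) i (e (.del k)) := by
    intro k
    induction k using WellFoundedLT.induction with
    | ind k ih =>
      apply fixd_of M
      intro β y c b hc hb hby h
      obtain ⟨z, rfl⟩ := e.surjective c
      have hz : z ≠ ⊥ := fun h => hc (by rw [h, e.map_bot])
      obtain ⟨j, hj, rfl | rfl⟩ := hcol β y _ z b (col k) ⟨k, rfl, Or.inl rfl⟩ hz hb h
      · by_cases hjk : j < k
        · rw [← ih j hjk β b, β.le_iff_le] at h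
          exact gd_le_gd_nt hb h
        · rw [e.le_iff_le]
          exact ⟨hj, not_lt.1 hjk⟩
      · exfalso
        obtain ⟨l, hl⟩ := H.ne (!col k)
        have h1 : Act C i (!col k) (β (gd r i (e (.del l)) b)) :=
          (act_map M β).2 ⟨_, hl ▸ hdel l, b, hb, le_rfl⟩
        obtain ⟨g, hg, d, hd, hgd⟩ := h1
        rw [hC] at hg
        obtain ⟨g, hg, rfl⟩ := hg
        have hdb : d ≤ b ⊔ r i := by
          have h2 := hgd.trans ((β.monotone (gd_mono le_top le_sup_left)).trans (fix_top M β i b).le)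
          rcases gd_le_gd.1 h2 with h3 | h3 | h3
          · exact absurd h3 (hne _ (Comb.C_ne_bot hg))
          · exact absurd h3 hd
          · exact h3.2
        have hsup : Comb.t j ⊔ g = ⊤ := by
          obtain ⟨p, hp, rfl | rfl⟩ := hg <;>
            simp [Comb.sup_def, Comb.sup, Comb.top_def] <;> grind
        have h2 : gd r i ⊤ d ≤ β (gd r i (e .s) y) := by
          rw [← e.map_top, ← hsup, map_sup, gd_sup_left]
          apply sup_le
          · refine (gd_mono le_rfl hdb).trans (h.trans (β.monotone (gd_mono ?_ le_sup_left)))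
            exact e.monotone trivial
          · refine hgd.trans (β.monotone (gd_mono ?_ hby))
            exact e.monotone trivial
        have h3 := (bs_le_gd_top i d).trans h2
        rw [bs_le_map M, bs_le_gd_iff] at h3
        rcases h3 with h3 | h3
        · exact hd h3
        · exact hnt .s (by simp [Comb.top_def]) h3.1
  have hFt : ∀ k, Fixd (r := r) i (e (.t k)) := by
    intro k
    apply fixd_of M
    intro β y c b hc hb hby h
    obtain ⟨z, rfl⟩ := e.surjective c
    have hz : z ≠ ⊥ := fun h => hc (by rw [h, e.map_bot])
    obtain ⟨j, hj, hz'⟩ := hcol β y _ z b (col k) ⟨k, rfl, Or.inr rfl⟩ hz hb h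
    have h1 : gd r i (e (.del j)) b ≤ gd r i (e (.t k)) y := by
      rw [← β.le_iff_le, hFdel]
      refine (gd_mono ?_ le_sup_left).trans h
      apply e.monotone
      rcases hz' with rfl | rfl
      · exact le_rfl
      · exact ⟨rfl, le_rfl⟩
    have h2 := gd_le_gd_nt hb h1
    rcases hz' with rfl | rfl
    · exact h2
    · rw [e.le_iff_le] at h2 ⊢
      have hkj : k ≤ j := h2.2
      rcases hkj.eq_or_lt with rfl | hkj
      · exact le_rfl
      · exfalso
        have hsup : (Comb.t j : Comb col) ⊔ .del k = ⊤ := by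
          simp [Comb.sup_def, Comb.sup, Comb.top_def, hkj]
        have h3 : gd r i ⊤ b ≤ β (gd r i (e (.t k)) y) := by
          rw [← e.map_top, ← hsup, map_sup, gd_sup_left]
          refine sup_le h ?_
          rw [← hFdel k β]
          exact β.monotone (gd_mono (e.monotone ⟨rfl, le_rfl⟩) hby)
        have h4 := (bs_le_gd_top i b).trans h3
        rw [bs_le_map M, bs_le_gd_iff] at h4
        rcases h4 with h4 | h4
        · exact hb h4
        · exact hnt (.t k) (by simp [Comb.top_def]) h4.1
  obtain ⟨z, rfl⟩ := e.surjective f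
  cases z with
  | bot =>
    intro β y
    rw [show e .bot = ⊥ from e.map_bot, gd_eq_bs (Or.inl rfl), fix_bs M]
  | top =>
    intro β y
    rw [show e .top = ⊤ from e.map_top, fix_top M]
  | s =>
    obtain ⟨p, hp⟩ := H.ne true
    obtain ⟨q, hq⟩ := H.ne false
    have h1 : (Comb.s : Comb col) = .del p ⊔ .del q := by
      simp [Comb.sup_def, Comb.sup, hp, hq]
    rw [h1, map_sup]
    exact (hFdel p).sup (hFdel q)
  | del k => exact hFdel k
  | t k => exact hFt k

/-- A configuration transferring information between the intervals `[m, y]`, `[m, u]` and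
`[m, u']`: `u` meets `y` and `u'` in `m`, each of `y` and `u` lies below the join of the other two
elements, and `m` is comparable with everything below `u` or `u'`. -/
structure Link (m y u u' : B) : Prop where
  inf : u ⊓ u' = m
  left : u ⊓ y = m
  le : y ≤ u ⊔ u'
  le_left : u ≤ y ⊔ u'
  di_left : ∀ e ≤ u, e ≤ m ∨ m ≤ e
  di_right : ∀ e ≤ u', e ≤ m ∨ m ≤ e

/-- A set `B₀` containing `y₀`, where `x₀ < y₀`, such that all intervals above `x₀` with upper end
in `B₀` are linked, and `B` is, as an ideal, generated by `B₀` and the linking elements. -/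
structure Linked (B₀ : Set B) (x₀ y₀ : B) : Prop where
  mem : y₀ ∈ B₀
  lt : x₀ < y₀
  link : ∀ m y, x₀ ≤ m → m ≤ y → y ∈ B₀ → ∃ u u', Link m y u u'
  ind : ∀ P : B → Prop, (∀ d d', d ≤ d' → P d' → P d) → (∀ d d', P d → P d' → P (d ⊔ d')) →
    (∀ y ∈ B₀, y₀ ≤ y → P y) →
    (∀ m y u u', x₀ ≤ m → m ≤ y → y ∈ B₀ → y₀ ≤ y → Link m y u u' → P u) → ∀ d, P d

theorem gd_cut {i : X} (c : F i) {d d' : B} (h : d ≤ d' ⊔ r i) :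
    gd r i c d' ⊓ gd r i ⊤ d = gd r i c d := by
  rw [gd_inf, inf_top_eq, inf_eq_right.2 (sup_le h le_sup_right), gd_sup_base]

/-- Since tops are fixed, the image over a smaller interval is cut out of the image over a larger one. -/
theorem map_cut (M : Marked r C κ) (β : W r F ≃o W r F) {i : X} (c : F i) {d d' : B}
    (h : d ≤ d' ⊔ r i) : β (gd r i c d) = β (gd r i c d') ⊓ gd r i ⊤ d := by
  rw [← gd_cut c h, map_inf, fix_top M]

/-- One half of purity: what occurs in the image over `m` occurs over the linking element. -/
theorem pure_link (M : Marked r C κ) (β : W r F ≃o W r F) {i : X} {t f : F i} {m y u : B}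
    (hm : r i ≤ m) (hmr : ¬ m ≤ r i) (hmu : m ≤ u)
    (hdi : ∀ e ≤ u, e ≤ m ∨ m ≤ e) (h : gd r i f m ≤ β (gd r i t y)) :
    gd r i f u ≤ β (gd r i t u) := by
  rw [← OrderIso.symm_apply_le] at h ⊢
  apply map_gd_le M
  · rintro rfl
    rw [fix_top M] at h
    exact top_le_iff.1 (gd_le_gd_nt hmr h)
  · intro c b hc hb hbu hcb
    rw [sup_eq_left.2 (hm.trans hmu)] at hbu
    have key : ∀ e, ¬ e ≤ r i → e ≤ b → e ≤ m → c ≤ t := by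
      intro e he heb hem
      have h1 : gd r i c e ≤ β.symm (gd r i f m) := by
        rw [map_cut M β.symm f (hmu.trans le_sup_left)]
        exact le_inf ((gd_mono le_rfl (heb.trans le_sup_left)).trans hcb)
          (gd_mono le_top (hem.trans le_sup_left))
      exact gd_le_gd_nt he (h1.trans h)
    rcases hdi b hbu with h1 | h1
    · exact key b hb le_rfl h1
    · exact key m hmr h1 le_rfl

/-- Purity: an element `f` that occurs in an image over part of the interval `[x₀, y]` occurs in it
over the whole interval. -/
theorem pure_B0 {B₀ : Set B} {x₀ y₀ : B} (N : Linked B₀ x₀ y₀) (M : Marked r C κ)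
    (β : W r F ≃o W r F) {i : X} (hi : r i = x₀) {t f : F i} {m y : B} (hy : y ∈ B₀)
    (hxy : x₀ ≤ y) (hf : f ≠ ⊥) (hmr : ¬ m ≤ r i) (h : gd r i f m ≤ β (gd r i t y)) :
    gd r i f y ≤ β (gd r i t y) := by
  subst hi
  have hmy : m ⊔ r i ≤ y := by
    have h1 := h.trans ((β.monotone (gd_mono le_top le_sup_left)).trans (fix_top M β i y).le)
    rcases gd_le_gd.1 h1 with h2 | h2 | h2
    · exact absurd h2 hf
    · exact absurd h2 hmr
    · exact sup_le (by simpa [hxy] using h2.2) hxy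
  rw [← gd_sup_base] at h
  have hmr' : ¬ m ⊔ r i ≤ r i := fun h => hmr (le_sup_left.trans h)
  obtain ⟨u, u', K⟩ := N.link (m ⊔ r i) y le_sup_right hmy hy
  have hmu : m ⊔ r i ≤ u := K.inf ▸ inf_le_left
  have hmu' : m ⊔ r i ≤ u' := K.inf ▸ inf_le_right
  have h1 := pure_link M β le_sup_right hmr' hmu K.di_left h
  have h2 := pure_link M β le_sup_right hmr' hmu' K.di_right h
  have h3 : gd r i f (u ⊔ u') ≤ β (gd r i t (u ⊔ u')) := by
    rw [gd_sup_right, gd_sup_right, map_sup]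
    exact sup_le_sup h1 h2
  rw [map_cut M β t (K.le.trans le_sup_left), ← gd_cut f (K.le.trans le_sup_left)]
  exact inf_le_inf_right _ h3

/-- A pure element below `gd i ⊤ y` lies below a single gadget element over the full interval. -/
theorem exists_join {i : X} {y : B} {v : W r F} (hv : bs r F (r i) ≤ v) (w : W r F)
    (hw : w ≤ gd r i ⊤ y) (hb : ∀ b, bs r F b ≤ w → b ≤ r i)
    (h : ∀ (c : F i) d, c ≠ ⊥ → ¬ d ≤ r i → gd r i c d ≤ w → gd r i c y ≤ v) :
    ∃ f, gd r i f y ≤ v ∧ w ≤ gd r i f y := by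
  induction w using W.induction with
  | h1 b =>
    refine ⟨⊥, ?_, ?_⟩
    · rwa [gd_eq_bs (Or.inl rfl)]
    · exact (bs_mono (hb b le_rfl)).trans (bs_le_gd _ _ _)
  | h2 j c d =>
    by_cases hc : c = ⊥ ∨ d ≤ r j
    · rw [gd_eq_bs hc] at *
      refine ⟨⊥, ?_, ?_⟩
      · rwa [gd_eq_bs (Or.inl rfl)]
      · exact (bs_mono (hb _ le_rfl)).trans (bs_le_gd _ _ _)
    · push Not at hc
      obtain rfl := gd_le_gd_ne hw hc.1 hc.2
      rcases gd_le_gd.1 hw with h1 | h1 | h1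
      · exact absurd h1 hc.1
      · exact absurd h1 hc.2
      · exact ⟨c, h c d hc.1 hc.2 le_rfl, gd_mono le_rfl h1.2⟩
  | h3 w w' ih ih' =>
    obtain ⟨f, h1, h2⟩ := ih (le_sup_left.trans hw) (fun b h => hb b (h.trans le_sup_left))
      fun c d hc hd hcd => h c d hc hd (hcd.trans le_sup_left)
    obtain ⟨f', h1', h2'⟩ := ih' (le_sup_right.trans hw) (fun b h => hb b (h.trans le_sup_right))
      fun c d hc hd hcd => h c d hc hd (hcd.trans le_sup_right)
    refine ⟨f ⊔ f', ?_, ?_⟩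
    · rw [gd_sup_left]; exact sup_le h1 h1'
    · rw [gd_sup_left]; exact sup_le_sup h2 h2'

/-- Over an interval `[x₀, y]` with `y ∈ B₀`, automorphisms map gadget elements to gadget elements. -/
theorem exists_img {B₀ : Set B} {x₀ y₀ : B} (N : Linked B₀ x₀ y₀) (M : Marked r C κ)
    (β : W r F ≃o W r F) {i : X} (hi : r i = x₀) (t : F i) {y : B} (hy : y ∈ B₀)
    (hxy : x₀ ≤ y) : ∃ t' : F i, β (gd r i t y) = gd r i t' y := by
  by_cases ht : t = ⊤
  · exact ⟨⊤, by rw [ht, fix_top M]⟩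
  obtain ⟨f, h1, h2⟩ := exists_join (i := i) (y := y) (v := β (gd r i t y))
    ((bs_le_map M β).2 (bs_le_gd _ _ _)) (β (gd r i t y))
    ((β.monotone (gd_mono le_top le_sup_left)).trans (fix_top M β i y).le)
    (fun b hb => ((bs_le_gd_iff.1 ((bs_le_map M β).1 hb)).resolve_right fun h => ht h.1))
    fun c d hc hd hcd => pure_B0 N M β hi hy hxy hc hd hcd
  exact ⟨f, le_antisymm h2 h1⟩

/-- The map of the gadget induced over `[x₀, y]` does not depend on `y`. -/
theorem exists_sigma {B₀ : Set B} {x₀ y₀ : B} (N : Linked B₀ x₀ y₀) (M : Marked r C κ)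
    (β : W r F ≃o W r F) {i : X} (hi : r i = x₀) :
    ∃ σ : F i → F i, ∀ t, ∀ y ∈ B₀, y₀ ≤ y → β (gd r i t y) = gd r i (σ t) y := by
  choose σ hσ using fun t => exists_img N M β hi t N.mem N.lt.le
  have hyr : ¬ y₀ ≤ r i := hi ▸ N.lt.not_ge
  refine ⟨σ, fun t y hy hy0 => ?_⟩
  obtain ⟨t', ht'⟩ := exists_img N M β hi t hy (N.lt.le.trans hy0)
  have h1 := map_cut M β t (hy0.trans (le_sup_left (b := r i)))
  rw [ht', gd_cut _ (hy0.trans le_sup_left), hσ] at h1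
  rw [ht', le_antisymm (gd_le_gd_nt hyr h1.le) (gd_le_gd_nt hyr h1.ge)]

/-- The map induced over `y` also describes the action over the linking element `u`. -/
theorem map_link_le (M : Marked r C κ) (β : W r F ≃o W r F) {i : X} {σ : F i → F i}
    {m y u u' : B} (hm : r i ≤ m) (hmy : m ≤ y) (hyr : ¬ y ≤ r i) (K : Link m y u u')
    (hσ : ∀ t, β (gd r i t y) = gd r i (σ t) y) (t : F i) :
    β (gd r i t u) ≤ gd r i (σ t) u := by
  have hmu : m ≤ u := K.inf ▸ inf_le_left
  have hmu' : m ≤ u' := K.inf ▸ inf_le_right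
  apply map_gd_le M
  · rintro rfl
    have h1 := hσ ⊤
    rw [fix_top M] at h1
    exact top_le_iff.1 (gd_le_gd_nt hyr h1.le)
  · intro c b hc hb hbu hcb
    rw [sup_eq_left.2 (hm.trans hmu)] at hbu
    have h1 : gd r i c b ≤ gd r i (σ t) (y ⊔ u') ⊔ gd r i ⊤ u' := by
      refine hcb.trans ((β.monotone (gd_mono le_rfl (K.le_left.trans le_sup_left))).trans ?_)
      rw [gd_sup_right, map_sup, hσ]
      apply sup_le
      · exact (gd_mono le_rfl (le_sup_left.trans le_sup_left)).trans le_sup_left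
      · refine le_trans ?_ le_sup_right
        exact (β.monotone (gd_mono le_top le_sup_left)).trans (fix_top M β i u').le
    rcases (gd_le_E (hm.trans hmu') le_sup_right).1 h1 with h2 | ⟨-, h2 | h2⟩
    · exact absurd h2 hc
    · exact h2
    · have hbm : b ≤ m := K.inf ▸ le_inf hbu h2
      have h3 : gd r i c b ≤ β (gd r i t m) := by
        rw [map_cut M β t (hmu.trans le_sup_left)]
        exact le_inf hcb (gd_mono le_top (hbm.trans le_sup_left))
      have h4 := h3.trans (β.monotone (gd_mono le_rfl (hmy.trans le_sup_left)))
      rw [hσ] at h4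
      exact gd_le_gd_nt hb h4

/-- Automorphisms act on the distinguished gadget through an automorphism of the gadget. -/
theorem exists_auto {B₀ : Set B} {x₀ y₀ : B} (N : Linked B₀ x₀ y₀) (M : Marked r C κ)
    (β : W r F ≃o W r F) {i : X} (hi : r i = x₀) :
    ∃ σ : F i ≃o F i, ∀ t d, β (gd r i t d) = gd r i (σ t) d := by
  obtain ⟨σ, hσ⟩ := exists_sigma N M β hi
  obtain ⟨τ, hτ⟩ := exists_sigma N M β.symm hi
  have hyr : ¬ y₀ ≤ r i := hi ▸ N.lt.not_ge
  have hinj : ∀ {c c' : F i}, gd r i c y₀ ≤ gd r i c' y₀ ↔ c ≤ c' := fun {c c'} =>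
    ⟨gd_le_gd_nt hyr, fun h => gd_mono h le_sup_left⟩
  have hστ : ∀ t, σ (τ t) = t := by
    intro t
    have h1 : gd r i (σ (τ t)) y₀ = gd r i t y₀ := by
      rw [← hσ _ _ N.mem le_rfl, ← hτ _ _ N.mem le_rfl, β.apply_symm_apply]
    exact le_antisymm (hinj.1 h1.le) (hinj.1 h1.ge)
  have hτσ : ∀ t, τ (σ t) = t := by
    intro t
    have h1 : gd r i (τ (σ t)) y₀ = gd r i t y₀ := by
      rw [← hτ _ _ N.mem le_rfl, ← hσ _ _ N.mem le_rfl, β.symm_apply_apply]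
    exact le_antisymm (hinj.1 h1.le) (hinj.1 h1.ge)
  refine ⟨{ toFun := σ, invFun := τ, left_inv := hτσ, right_inv := hστ,
            map_rel_iff' := fun {t t'} => ?_ }, ?_⟩
  · change σ t ≤ σ t' ↔ t ≤ t'
    rw [← hinj, ← hσ _ _ N.mem le_rfl, ← hσ _ _ N.mem le_rfl, β.le_iff_le, hinj]
  · change ∀ t d, β (gd r i t d) = gd r i (σ t) d
    intro t d
    revert t
    refine N.ind (fun d => ∀ t, β (gd r i t d) = gd r i (σ t) d) ?_ ?_ ?_ ?_ d
    · intro d d' h hd' t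
      rw [map_cut M β t (h.trans le_sup_left), hd', gd_cut _ (h.trans le_sup_left)]
    · intro d d' hd hd' t
      rw [gd_sup_right, gd_sup_right, map_sup, hd, hd']
    · exact fun y hy hy0 t => hσ t y hy hy0
    · intro m y u u' hm hmy hy hy0 K t
      have hyr' : ¬ y ≤ r i := fun h => hyr (hy0.trans h)
      refine le_antisymm (map_link_le M β (hi ▸ hm) hmy hyr' K (fun t => hσ t y hy hy0) t) ?_
      rw [← OrderIso.symm_apply_le]
      have h1 := map_link_le M β.symm (hi ▸ hm) hmy hyr' K (fun t => hτ t y hy hy0) (σ t)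
      rwa [hτσ] at h1

end Rigidity

end SIT

/-! ### Index sets, linked intervals and induced automorphisms -/

namespace SIT

open Cardinal

theorem card_Ici_ord {c : Cardinal.{u}} (hc : ℵ₀ ≤ c) (i : c.ord.ToType) : #(Set.Ici i) = c := by
  have : Infinite c.ord.ToType := by rwa [Cardinal.infinite_iff, mk_ord_toType]
  rw [← Set.compl_Iio, mk_compl_of_infinite, mk_ord_toType]
  rw [mk_ord_toType]
  have h1 := mk_Iio_lt i (by rw [mk_ord_toType, Ordinal.type_toType])
  rwa [mk_ord_toType] at h1

/-- Index sets for double combs exist: put two initial ordinals on top of each other. -/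
theorem exists_comb (κ : Bool → Cardinal.{u}) (hκ : ∀ a, ℵ₀ ≤ κ a) :
    ∃ (I : Type u) (_ : LinearOrder I) (_ : WellFoundedLT I) (col : I → Bool), CombHyp col κ := by
  let P := (κ true).ord.ToType
  let Q := (κ false).ord.ToType
  have : NoMaxOrder P := noMaxOrder (hκ true)
  have : NoMaxOrder Q := noMaxOrder (hκ false)
  have : Nonempty P := by
    rw [← mk_ne_zero_iff, mk_ord_toType]
    exact (aleph0_pos.trans_le (hκ true)).ne'
  have : Nonempty Q := by
    rw [← mk_ne_zero_iff, mk_ord_toType]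
    exact (aleph0_pos.trans_le (hκ false)).ne'
  let col : P ⊕ₗ Q → Bool := fun x => Sum.elim (fun _ => true) (fun _ => false) (ofLex x)
  refine ⟨P ⊕ₗ Q, inferInstance, ⟨Sum.lex_wf wellFounded_lt wellFounded_lt⟩, col, ?_, ?_, ?_, hκ⟩
  · rintro (_ | _)
    · exact ⟨toLex (Sum.inr (Classical.arbitrary Q)), rfl⟩
    · exact ⟨toLex (Sum.inl (Classical.arbitrary P)), rfl⟩
  · rintro (i | i)
    · obtain ⟨j, hj⟩ := exists_gt i
      exact ⟨toLex (Sum.inl j), Sum.Lex.inl_lt_inl_iff.2 hj, rfl⟩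
    · obtain ⟨j, hj⟩ := exists_gt i
      exact ⟨toLex (Sum.inr j), Sum.Lex.inr_lt_inr_iff.2 hj, rfl⟩
  · rintro (i | i)
    · refine Eq.trans (Eq.symm ?_) (card_Ici_ord (hκ true) i)
      refine Cardinal.mk_congr (Equiv.ofBijective (fun j : Set.Ici i =>
        ⟨toLex (Sum.inl j.1), rfl, Sum.Lex.inl_le_inl_iff.2 j.2⟩) ⟨?_, ?_⟩)
      · intro j k h
        exact Subtype.ext (Sum.inl_injective (toLex.injective (congrArg Subtype.val h)))
      · rintro ⟨j | j, h1, h2⟩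
        · exact ⟨⟨j, Sum.Lex.inl_le_inl_iff.1 h2⟩, rfl⟩
        · exact absurd (show false = true from h1) (by simp)
    · refine Eq.trans (Eq.symm ?_) (card_Ici_ord (hκ false) i)
      refine Cardinal.mk_congr (Equiv.ofBijective (fun j : Set.Ici i =>
        ⟨toLex (Sum.inr j.1), rfl, Sum.Lex.inr_le_inr_iff.2 j.2⟩) ⟨?_, ?_⟩)
      · intro j k h
        exact Subtype.ext (Sum.inr_injective (toLex.injective (congrArg Subtype.val h)))
      · rintro ⟨j | j, h1, h2⟩
        · exact absurd (show true = false from h1) (by simp)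
        · exact ⟨⟨j, Sum.Lex.inr_le_inr_iff.1 h2⟩, rfl⟩

/-- Any family of size in the universe can be indexed by distinct cardinals beyond a given one. -/
theorem exists_cardinals (Y : Type u) (c : Cardinal.{u}) :
    ∃ κ : Y → Cardinal.{u}, Function.Injective κ ∧ ∀ y, ℵ₀ ≤ κ y ∧ c < κ y := by
  have h1 : Order.succ (max ℵ₀ c) ∈ Set.range aleph := by
    rw [range_aleph]
    exact Set.mem_Ici.2 (le_trans (le_max_left ℵ₀ c) (Order.le_succ (max ℵ₀ c)))
  obtain ⟨o, ho⟩ := h1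
  refine ⟨fun y => aleph (o + Ordinal.typein (@WellOrderingRel Y) y), ?_, ?_⟩
  · intro y z h
    have h2 := aleph.injective h
    rwa [add_right_inj, Ordinal.typein_inj] at h2
  · intro y
    refine ⟨aleph0_le_aleph _, ?_⟩
    refine lt_of_lt_of_le ?_ (aleph_le_aleph.2 (le_add_right le_rfl) : aleph o ≤ _)
    rw [ho]
    exact (le_max_right _ _).trans_lt (Order.lt_succ _)

section Level1

variable {B : Type u} [Lattice B] {I : Type u} [LinearOrder I] {col : I → Bool}
  {κ : Bool → Cardinal.{u}}

/-- Placing a double comb above every element above `x₀` links all intervals above `x₀`. -/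
theorem linked_W (H : CombHyp col κ) {x₀ y₀ : B} (hxy : x₀ < y₀) :
    Linked (Set.range (bs (fun i : {m // x₀ ≤ m} => i.1) fun _ => Comb col))
      (bs _ _ x₀) (bs _ _ y₀) := by
  obtain ⟨p, q, hinf, hsup, -⟩ := Comb.disj H
  have key : ∀ (i : {m // x₀ ≤ m}) (y : B) (f g : Comb col), i.1 ≤ y → f ⊓ g = ⊥ → f ⊔ g = ⊤ →
      f ≠ ⊤ → g ≠ ⊤ → g ≠ ⊥ → Link (bs (fun i : {m // x₀ ≤ m} => i.1) (fun _ => Comb col) i.1)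
        (bs _ _ y) (gd _ i f y) (gd _ i g y) := by
    intro i y f g hy hinf hsup hf hg hg'
    have hdi : ∀ f : Comb col, f ≠ ⊤ →
        ∀ e ≤ (gd (fun i : {m // x₀ ≤ m} => i.1) (F := fun _ => Comb col) i f y),
          e ≤ bs _ _ i.1 ∨ bs _ _ i.1 ≤ e := by
      intro f hf e he
      by_cases hr : e ∈ Set.range (bs (fun i : {m // x₀ ≤ m} => i.1) fun _ => Comb col)
      · obtain ⟨b, rfl⟩ := hr
        exact Or.inl (bs_mono ((bs_le_gd_iff.1 he).resolve_right fun h => hf h.1))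
      · rw [mem_range_bs] at hr
        push Not at hr
        obtain ⟨j, c, d, h1, hc, hd⟩ := hr
        obtain rfl := gd_le_gd_ne (h1.trans he) hc hd
        exact Or.inr ((bs_le_gd _ _ _).trans h1)
    refine ⟨?_, ?_, ?_, ?_, hdi f hf, hdi g hg⟩
    · rw [gd_inf, hinf, gd_eq_bs (Or.inl rfl)]
    · apply le_antisymm
      · obtain ⟨b, hb⟩ := mem_range_of_le (inf_le_right (a := gd (fun i : {m // x₀ ≤ m} => i.1)
          (F := fun _ => Comb col) i f y) (b := bs _ _ y))
        rw [← hb]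
        have h1 := hb.le.trans inf_le_left
        exact bs_mono ((bs_le_gd_iff.1 h1).resolve_right fun h => hf h.1)
      · exact le_inf (bs_le_gd _ _ _) (bs_mono hy)
    · rw [← gd_sup_left, hsup]
      exact bs_le_gd_top _ _
    · exact (gd_mono le_top le_sup_left).trans (gd_top_le hg' le_sup_left le_sup_right)
  have hpt : ∀ k, (Comb.t k : Comb col) ≠ ⊤ := fun k => by simp [Comb.top_def]
  have hpb : ∀ k, (Comb.t k : Comb col) ≠ ⊥ := fun k => by simp [Comb.bot_def]
  refine ⟨⟨_, rfl⟩, ?_, ?_, ?_⟩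
  · rw [lt_iff_le_not_ge, bs_le_bs, bs_le_bs]
    exact lt_iff_le_not_ge.1 hxy
  · rintro m _ hm hmy ⟨y, rfl⟩
    obtain ⟨m, rfl⟩ := mem_range_of_le hmy
    exact ⟨_, _, key ⟨m, bs_le_bs.1 hm⟩ y _ _ (bs_le_bs.1 hmy) hinf hsup (hpt p) (hpt q) (hpb q)⟩
  · intro P hdown hPsup hP0 hPu d
    induction d using W.induction with
    | h1 b => exact hdown _ _ (bs_mono le_sup_left) (hP0 (bs _ _ (b ⊔ y₀)) ⟨_, rfl⟩
        (bs_mono le_sup_right))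
    | h2 i c b =>
      have h1 : ∀ f g : Comb col, f ⊓ g = ⊥ → f ⊔ g = ⊤ → f ≠ ⊤ → g ≠ ⊤ → g ≠ ⊥ →
          P (gd _ i f (b ⊔ i.1 ⊔ y₀)) := fun f g h1 h2 h3 h4 h5 =>
        hPu _ _ _ _ (bs_mono i.2) (bs_mono (le_sup_right.trans le_sup_left)) ⟨_, rfl⟩
          (bs_mono le_sup_right) (key i (b ⊔ i.1 ⊔ y₀) f g (le_sup_right.trans le_sup_left)
            h1 h2 h3 h4 h5)
      have h2 := hPsup _ _ (h1 _ _ hinf hsup (hpt p) (hpt q) (hpb q))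
        (h1 (.t q) (.t p) (by rw [inf_comm]; exact hinf) (by rw [sup_comm]; exact hsup) (hpt q) (hpt p) (hpb p))
      rw [← gd_sup_left, hsup] at h2
      exact hdown _ _ (gd_mono le_top ((le_sup_left.trans le_sup_left).trans le_sup_left)) h2
    | h3 v w hv hw => exact hPsup _ _ hv hw

end Level1

section Map

variable {B X : Type u} [Lattice B] {r : X → B} {F : X → Type u} [∀ i, Lattice (F i)]
  [∀ i, BoundedOrder (F i)] [∀ i, Nontrivial (F i)]

/-- The action of a family of gadget automorphisms on objects. -/
def objMap (τ : ∀ i, F i ≃o F i) : Obj B F → Obj B F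
  | .base d => .base d
  | .gad i c d => .gad i (τ i c) d

theorem objMap_symm (τ : ∀ i, F i ≃o F i) (o : Obj B F) :
    objMap (fun i => (τ i).symm) (objMap τ o) = o := by
  cases o <;> simp [objMap]

theorem objMap_symm' (τ : ∀ i, F i ≃o F i) (o : Obj B F) :
    objMap τ (objMap (fun i => (τ i).symm) o) = o := by
  cases o <;> simp [objMap]

theorem satU_objMap (τ : ∀ i, F i ≃o F i) (i : X) (N : Set B) (o : Obj B F) :
    satU i N (objMap τ o) ↔ satU i N o := by
  cases o <;> simp [objMap, satU]

theorem satD_objMap (τ : ∀ i, F i ≃o F i) (a : ∀ i, F i) (N : Set B) (o : Obj B F) :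
    satD r a N (objMap τ o) ↔ satD r (fun i => (τ i).symm (a i)) N o := by
  cases o <;> simp [objMap, satD, OrderIso.le_symm_apply]

theorem objMap_mem_cl (τ : ∀ i, F i ≃o F i) {R : B → B → Prop} {S : Set (Obj B F)} {o : Obj B F}
    (h : o ∈ cl r R S) : objMap τ o ∈ cl r R (objMap τ '' S) := by
  constructor
  · intro i N hN hr hS
    rw [satU_objMap]
    exact h.1 i N hN hr fun j hj => (satU_objMap τ i N j).1 (hS _ ⟨j, hj, rfl⟩)
  · intro a N hN ha hS
    rw [satD_objMap]
    refine h.2 _ N hN (fun i => ?_) fun j hj => (satD_objMap τ a N j).1 (hS _ ⟨j, hj, rfl⟩)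
    rw [Ne, OrderIso.symm_apply_eq, OrderIso.map_top]
    exact ha i

theorem image_cl (τ : ∀ i, F i ≃o F i) (R : B → B → Prop) (S : Set (Obj B F)) :
    objMap τ '' cl r R S = cl r R (objMap τ '' S) := by
  apply Set.Subset.antisymm
  · rintro _ ⟨o, ho, rfl⟩
    exact objMap_mem_cl τ ho
  · intro o ho
    refine ⟨_, ?_, objMap_symm' τ o⟩
    have h1 := objMap_mem_cl (fun i => (τ i).symm) ho
    rwa [← Set.image_comp, show objMap (fun i => (τ i).symm) ∘ objMap τ = id from
      funext (objMap_symm τ), Set.image_id] at h1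

/-- The action of a family of gadget automorphisms on elements. -/
def W.mapFun (τ : ∀ i, F i ≃o F i) (w : W r F) : W r F :=
  ⟨objMap τ '' w.1, by
    obtain ⟨H, J, hJ, rfl⟩ := w
    refine ⟨J.map (objMap τ), by simpa using hJ, ?_⟩
    rw [image_cl]
    congr 1
    ext o
    simp⟩

/-- The automorphism induced by a family of gadget automorphisms. -/
def W.mapIso (τ : ∀ i, F i ≃o F i) : W r F ≃o W r F where
  toFun := W.mapFun τ
  invFun := W.mapFun fun i => (τ i).symm
  left_inv w := W.ext (by
    change objMap _ '' (objMap τ '' w.1) = w.1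
    rw [← Set.image_comp, show objMap (fun i => (τ i).symm) ∘ objMap τ = id from
      funext (objMap_symm τ), Set.image_id])
  right_inv w := W.ext (by
    change objMap τ '' (objMap _ '' w.1) = w.1
    rw [← Set.image_comp, show objMap τ ∘ objMap (fun i => (τ i).symm) = id from
      funext (objMap_symm' τ), Set.image_id])
  map_rel_iff' {v w} := Set.image_subset_image_iff
    (Function.LeftInverse.injective (objMap_symm τ))

theorem W.mapIso_gd (τ : ∀ i, F i ≃o F i) (i : X) (c : F i) (d : B) :
    W.mapIso τ (gd r i c d) = gd r i (τ i c) d := by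
  apply W.ext
  change objMap τ '' cl r _ {_} = cl r _ {_}
  rw [image_cl, Set.image_singleton]
  rfl

end Map

end SIT

/-! ### The second extension -/

namespace SIT

open Cardinal

section Level2

variable {B : Type u} (K : Type u) [Lattice K] [BoundedOrder K] [Nontrivial K]
  {I : Option B → Type u} [∀ i, LinearOrder (I i)] (col : ∀ i, I i → Bool)

/-- The gadgets of the second step: a double comb for every element of `B`, and one further
gadget in which a copy of `K` is stored. -/
def Gad : Option B → Type u
  | none => SK K (Comb (col none))
  | some x => Comb (col (some x))

noncomputable instance : ∀ i, Lattice (Gad K col i)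
  | none => inferInstanceAs (Lattice (SK K (Comb (col none))))
  | some x => inferInstanceAs (Lattice (Comb (col (some x))))

noncomputable instance : ∀ i, BoundedOrder (Gad K col i)
  | none => inferInstanceAs (BoundedOrder (SK K (Comb (col none))))
  | some x => inferInstanceAs (BoundedOrder (Comb (col (some x))))

instance : ∀ i, Nontrivial (Gad K col i)
  | none => inferInstanceAs (Nontrivial (SK K (Comb (col none))))
  | some x => inferInstanceAs (Nontrivial (Comb (col (some x))))

/-- The small elements of the gadgets. -/
def GadC : ∀ i, Bool → Set (Gad K col i)
  | none => fun a => {p : SK K (Comb (col none)) | ∃ b ≠ ⊥, ∃ h ∈ CombC (col none) a, p = SK.pt b h}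
  | some x => fun a => (CombC (col (some x)) a : Set (Comb (col (some x))))

/-- The elements of `B` at which the gadgets sit. -/
def gadR (x₀ : B) : Option B → B
  | none => x₀
  | some x => x

variable {K col} [Lattice B] {κ : Option B → Bool → Cardinal.{u}}

theorem exists_mid {J : Type u} [LinearOrder J] {c : J → Bool} {k : Bool → Cardinal.{u}}
    (H : CombHyp c k) : ∃ f : Comb c, f ≠ ⊥ ∧ f ≠ ⊤ := by
  obtain ⟨i, -⟩ := H.ne true
  exact ⟨.t i, by simp [Comb.bot_def], by simp [Comb.top_def]⟩

theorem Comb.t_ne_top {J : Type u} [LinearOrder J] {c : J → Bool} (i : J) :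
    (Comb.t i : Comb c) ≠ ⊤ := by simp [Comb.top_def]

theorem gad_simple (H : ∀ i, CombHyp (col i) (κ i)) : ∀ i, Simple (Gad K col i)
  | none => SK.simple (Comb.simple (H none)) (exists_mid (H none))
  | some x => Comb.simple (H (some x))

theorem SK.pt_ne_bot {G : Type u} [Lattice G] [BoundedOrder G] [Nontrivial G] {b : K} {f : G}
    (hb : b ≠ ⊥) (hf : f ≠ ⊥) : (SK.pt b f : SK K G) ≠ ⊥ := by
  rw [Ne, ← SK.fst_eq_bot, SK.pt_fst hb hf]
  exact hb

theorem SK.pt_ne_top {G : Type u} [Lattice G] [BoundedOrder G] [Nontrivial G] {b : K} {f : G}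
    (hb : b ≠ ⊥) (hf : f ≠ ⊤) : (SK.pt b f : SK K G) ≠ ⊤ := by
  intro h
  by_cases h0 : f = ⊥
  · rw [h0, SK.pt_bot] at h
    exact bot_ne_top h
  · have h1 := SK.pt_snd hb h0
    rw [h] at h1
    exact hf h1.symm

theorem gad_disj (H : ∀ i, CombHyp (col i) (κ i)) :
    ∀ i, ∃ c f : Gad K col i, c ≠ ⊥ ∧ f ≠ ⊥ ∧ c ⊓ f = ⊥
  | none => by
    obtain ⟨c, f, hc, hf, h⟩ := Comb.disj' (H none)
    have ht : (⊤ : K) ≠ ⊥ := top_ne_bot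
    refine ⟨(SK.pt ⊤ c : SK K (Comb (col none))), (SK.pt ⊤ f : SK K (Comb (col none))),
      SK.pt_ne_bot ht hc, SK.pt_ne_bot ht hf, ?_⟩
    exact (SK.pt_inf ht c f).trans (by rw [h]; exact SK.pt_bot _)
  | some x => Comb.disj' (H (some x))

/-- The gadgets of the second step are recognizable. -/
theorem marked (H : ∀ i, CombHyp (col i) (κ i))
    (hinj : ∀ i a j b, κ i a = κ j b → i = j ∧ a = b) (hlt : ∀ i a, #B < κ i a) (x₀ : B) :
    Marked (gadR x₀) (GadC K col) κ where
  ne_bot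
    | none, a => by
      rintro _ ⟨b, hb, h, hh, rfl⟩
      exact SK.pt_ne_bot hb (Comb.C_ne_bot hh)
    | some x, a => fun h hh => Comb.C_ne_bot (col := col (some x)) hh
  ne_top
    | none, a => by
      rintro _ ⟨b, hb, h, hh, rfl⟩
      exact SK.pt_ne_top hb (Comb.C_ne_top hh)
    | some x, a => fun h hh => Comb.C_ne_top (col := col (some x)) hh
  down
    | none, a => by
      rintro _ ⟨b, hb, h, hh, rfl⟩ c hc hc0
      rcases SK.le_pt hb (Comb.C_ne_top hh) hc with h1 | ⟨h1, h2⟩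
      · exact absurd h1 hc0
      · exact ⟨b, hb, _, Comb.C_down hh h2 (SK.snd_ne c), by rw [← h1]; exact (SK.pt_self c).symm⟩
    | some x, a => fun h hh c hc hc0 => Comb.C_down (col := col (some x)) hh hc hc0
  ex
    | none => by
      intro c hc
      obtain ⟨a, h, hh, hle⟩ := Comb.exists_C (H none) (SK.snd_ne c)
      have hc1 : SK.fst c ≠ ⊥ := fun h => hc (SK.fst_eq_bot.1 h)
      refine ⟨a, SK.pt (SK.fst c) h, ⟨_, hc1, h, hh, rfl⟩, ?_⟩
      exact ((SK.pt_le_pt hc1).2 hle).trans (SK.pt_self c).le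
    | some x => fun c hc => Comb.exists_C (H (some x)) hc
  card
    | none, a => by
      rintro _ ⟨b, hb, h, hh, rfl⟩
      exact (SK.card_Iic hb (Comb.C_ne_top hh)).trans (Comb.card_C (H none) hh)
    | some x, a => fun h hh => Comb.card_C (H (some x)) hh
  inj := hinj
  aleph i := (H i).aleph
  lt := hlt
  surj x := ⟨some x, rfl⟩
  cov
    | none => by
      obtain ⟨i, j, -, h, -⟩ := Comb.disj (H none)
      have ht : (⊤ : K) ≠ ⊥ := top_ne_bot
      refine ⟨(SK.pt ⊤ (.t i) : SK K (Comb (col none))), (SK.pt ⊤ (.t j) : SK K (Comb (col none))),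
        SK.pt_ne_top ht (Comb.t_ne_top i), SK.pt_ne_top ht (Comb.t_ne_top j), ?_⟩
      exact (SK.pt_sup ht _ _).trans (by rw [h]; exact SK.pt_top _)
    | some x => by
      obtain ⟨i, j, -, h, -⟩ := Comb.disj (H (some x))
      exact ⟨(.t i : Comb (col (some x))), (.t j : Comb (col (some x))),
        Comb.t_ne_top i, Comb.t_ne_top j, h⟩

/-- The family of gadget automorphisms given by an automorphism of `K`. -/
noncomputable def gadAuto (α : K ≃o K) : ∀ i, Gad K col i ≃o Gad K col i
  | none => SK.mapIso (G := Comb (col none)) α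
  | some _ => OrderIso.refl _

/-- The copy of `K` in the extra gadget. -/
def gel (x : K) : Gad K col none := SK.el (G := Comb (col none)) x

theorem gel_sup (x y : K) : (gel (x ⊔ y) : Gad K col none) = gel x ⊔ gel y := SK.el_sup x y

theorem gel_inf (x y : K) : (gel (x ⊓ y) : Gad K col none) = gel x ⊓ gel y := SK.el_inf x y

theorem gadAuto_gel (α : K ≃o K) (x : K) :
    gadAuto α none (gel x : Gad K col none) = gel (α x) := rfl

/-- The automorphisms of the second extension are exactly those induced by automorphisms of `K`. -/
theorem auto_W [∀ i, WellFoundedLT (I i)] (H : ∀ i, CombHyp (col i) (κ i))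
    (hinj : ∀ i a j b, κ i a = κ j b → i = j ∧ a = b) (hlt : ∀ i a, #B < κ i a) {B₀ : Set B}
    {x₀ y₀ : B} (N : Linked B₀ x₀ y₀) (β : W (gadR x₀) (Gad K col) ≃o W (gadR x₀) (Gad K col)) :
    ∃ α : K ≃o K, β = W.mapIso (gadAuto α) := by
  have M := marked (K := K) H hinj hlt x₀
  obtain ⟨σ, hσ⟩ := exists_auto N M β (i := none) rfl
  have hr := Comb.rigid (H none) (fun h => by simpa using (hinj _ _ _ _ h).2)
  obtain ⟨α, hα⟩ : ∃ α : K ≃o K, σ = gadAuto α none :=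
    SK.auto_eq (Comb.top_char (H none)) (fun _ _ _ => Comb.not_top_char) hr σ
  refine ⟨α, ?_⟩
  refine OrderIso.ext (funext fun w => ?_)
  induction w using W.induction with
  | h1 d => rw [fix_bs M β, fix_bs M]
  | h2 i c d =>
    rw [W.mapIso_gd]
    cases i with
    | none => rw [hσ, hα]
    | some x =>
      exact fixd_comb M (H (some x))
        (show Comb (col (some x)) ≃o Gad K col (some x) from OrderIso.refl (Comb (col (some x))))
        (fun a => (Set.image_id _).symm) c β d
  | h3 v w hv hw => rw [map_sup, map_sup, hv, hw]

end Level2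

section Auto

variable {L : Type u} [Lattice L]

/-- A lattice automorphism as an order isomorphism. -/
noncomputable def isoOf {h : L → L} (hh : IsLatAuto L h) : L ≃o L where
  toEquiv := Equiv.ofBijective h hh.1
  map_rel_iff' {a b} := by
    change h a ≤ h b ↔ a ≤ b
    rw [← sup_eq_right, ← hh.2.1, hh.1.1.eq_iff, sup_eq_right]

theorem isLatAuto_iso (e : L ≃o L) : IsLatAuto L e :=
  ⟨e.bijective, fun _ _ => map_sup e _ _, fun _ _ => map_inf e _ _⟩

/-- Automorphisms of the bounded extension `WithBot (WithTop L)` restrict to `L`. -/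
theorem exists_restrict (e : WithBot (WithTop L) ≃o WithBot (WithTop L)) :
    ∃ α : L ≃o L, ∀ x : L, e ((x : WithTop L) : WithBot (WithTop L)) = ((α x : WithTop L)) := by
  have key : ∀ (e : WithBot (WithTop L) ≃o WithBot (WithTop L)) (x : L), ∃ y : L,
      e ((x : WithTop L) : WithBot (WithTop L)) = ((y : WithTop L)) := by
    intro e x
    have h1 : e ((x : WithTop L) : WithBot (WithTop L)) ≠ ⊥ := by
      rw [Ne, ← e.map_bot, e.injective.eq_iff]
      exact WithBot.coe_ne_bot
    have h2 : e ((x : WithTop L) : WithBot (WithTop L)) ≠ ⊤ := by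
      rw [Ne, ← e.map_top, e.injective.eq_iff]
      exact fun h => WithTop.coe_ne_top (WithBot.coe_injective h)
    obtain ⟨z, hz⟩ := WithBot.ne_bot_iff_exists.1 h1
    rw [← hz] at h2 ⊢
    have h3 : z ≠ ⊤ := fun h => h2 (by rw [h]; rfl)
    obtain ⟨y, rfl⟩ := WithTop.ne_top_iff_exists.1 h3
    exact ⟨y, rfl⟩
  choose a ha using key e
  choose b hb using key e.symm
  have hinj : ∀ x y : L, ((x : WithTop L) : WithBot (WithTop L)) = ((y : WithTop L)) → x = y :=
    fun x y h => WithTop.coe_injective (WithBot.coe_injective h)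
  refine ⟨⟨⟨a, b, fun x => hinj _ _ ?_, fun x => hinj _ _ ?_⟩, ?_⟩, ha⟩
  · rw [← hb, ← ha, e.symm_apply_apply]
  · rw [← ha, ← hb, e.apply_symm_apply]
  · intro x y
    change a x ≤ a y ↔ x ≤ y
    rw [← WithTop.coe_le_coe, ← WithBot.coe_le_coe, ← ha, ← ha, e.le_iff_le, WithBot.coe_le_coe,
      WithTop.coe_le_coe]

/-- An automorphism of `WithBot (WithTop L)` is determined by its restriction to `L`. -/
theorem ext_coe {e e' : WithBot (WithTop L) ≃o WithBot (WithTop L)}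
    (h : ∀ x : L, e ((x : WithTop L) : WithBot (WithTop L)) = e' ((x : WithTop L))) : e = e' := by
  refine OrderIso.ext (funext fun x => ?_)
  induction x with
  | bot => rw [e.map_bot, e'.map_bot]
  | coe x =>
    induction x with
    | top => exact e.map_top.trans e'.map_top.symm
    | coe x => exact h x

end Auto

/-- A lattice with a linked interval has a congruence-preserving extension that contains `La`
with prescribed automorphisms. -/
theorem exists_ext (La B : Type u) [Lattice La] [Lattice B] {B₀ : Set B} {x₀ y₀ : B}
    (N : Linked B₀ x₀ y₀) :
    ∃ (L : Type u) (_ : Lattice L) (f : La → L) (g : B → L), APEmb La L f ∧ CPEmb B L g := by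
  obtain ⟨κ', hκinj, hκ⟩ := exists_cardinals (Option B × Bool) #B
  choose I instI wfI col H using fun i => exists_comb (fun a => κ' (i, a)) fun a => (hκ (i, a)).1
  have hinj : ∀ i a j b, κ' (i, a) = κ' (j, b) → i = j ∧ a = b := fun i a j b h =>
    Prod.mk.inj (hκinj h)
  have hlt : ∀ i a, #B < κ' (i, a) := fun i a => (hκ (i, a)).2
  let K := WithBot (WithTop La)
  have hy : ¬ y₀ ≤ gadR x₀ none := N.lt.not_ge
  let F : K → W (gadR x₀) (Gad K col) := fun x => gd (gadR x₀) none (gel x) y₀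
  have hF : Function.Injective F := fun x y h => by
    have h1 := le_antisymm (gd_le_gd_nt hy h.le) (gd_le_gd_nt hy h.ge)
    exact SK.el_inj.1 h1
  have hmap : ∀ (α : K ≃o K) x, W.mapIso (gadAuto α) (F x) = F (α x) := fun α x =>
    W.mapIso_gd _ _ _ _
  have hauto := fun β => auto_W (K := K) H hinj hlt N β
  refine ⟨W (gadR x₀) (Gad K col), inferInstance,
    fun a => F ((a : WithTop La) : WithBot (WithTop La)), bs _ _, ⟨?_, ?_, ?_, ?_, ?_⟩,
    cpEmb_bs (gad_simple H) (gad_disj H)⟩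
  · exact fun x y h => WithTop.coe_injective (WithBot.coe_injective (hF h))
  · intro x y
    refine Eq.trans ?_ (gd_sup_left _ _ _ _)
    exact congrArg (fun s => gd (gadR x₀) (F := Gad K col) none s y₀) 
      (gel_sup (K := K) ((x : WithTop La) : WithBot (WithTop La)) ((y : WithTop La)))
  · intro x y
    refine Eq.trans ?_ (gd_inf _ _ _ _ _).symm
    rw [inf_idem, gd_sup_base]
    exact congrArg (fun s => gd (gadR x₀) (F := Gad K col) none s y₀) 
      (gel_inf (K := K) ((x : WithTop La) : WithBot (WithTop La)) ((y : WithTop La)))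
  · intro α hα
    let e : K ≃o K := ((isoOf hα).withTopCongr).withBotCongr
    refine ⟨W.mapIso (gadAuto e), ⟨isLatAuto_iso _, fun x => hmap e _⟩, ?_⟩
    rintro β ⟨hβ, hβα⟩
    obtain ⟨e', he'⟩ := hauto (isoOf hβ)
    have h1 : e' = e := by
      apply ext_coe
      intro x
      apply hF
      rw [← hmap e', ← he']
      exact (hβα x)
    rw [← h1, ← he']
    rfl
  · intro β hβ
    obtain ⟨e, he⟩ := hauto (isoOf hβ)
    obtain ⟨α, hα⟩ := exists_restrict e
    refine ⟨α, isLatAuto_iso α, fun x => ?_⟩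
    change β _ = F _
    rw [← hα, ← hmap, ← he]
    rfl

end SIT

/-- The Strong Independence Theorem for lattices. -/
theorem strong_independence_lattices
    (La Lc : Type u) [instA : Lattice La] [instC : Lattice Lc] [Nontrivial Lc] :
    ∃ (L : Type u) (instL : Lattice L) (f : La → L) (g : Lc → L),
      @APEmb La instA L instL f ∧ @CPEmb Lc instC L instL g := by
  obtain ⟨x₀, y₀, hxy⟩ : ∃ x y : Lc, x < y := by
    obtain ⟨x, y, h⟩ := exists_pair_ne Lc
    by_cases h1 : x ≤ y
    · exact ⟨x, y, lt_of_le_of_ne h1 h⟩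
    · exact ⟨x ⊓ y, x, inf_lt_left.2 h1⟩
  obtain ⟨I, _, _, col, H⟩ := SIT.exists_comb (fun _ => Cardinal.aleph0) fun _ => le_rfl
  have hcp := SIT.cpEmb_bs (r := fun i : {m // x₀ ≤ m} => i.1) (F := fun _ => SIT.Comb col)
    (fun _ => SIT.Comb.simple H) fun _ => SIT.Comb.disj' H
  obtain ⟨L, instL, f, g, hf, hg⟩ := SIT.exists_ext La _ (SIT.linked_W H hxy)
  exact ⟨L, instL, f, _, hf, SIT.CPEmb.comp hcp hg⟩
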